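/- arXiv:1512.02670 — 3 statements merged into one kernel-verified Lean document; each statement's English description precedes it below -/
import Mathlib

section
/- There exists an absolute constant c > 0 such that the following holds. Let P be a finite set of N points in ℝ² \ {0} which is not contained in a single line through the origin. Then |T(P)| ≥ c·N^(9/13). -/
open Finset
open scoped Classical

/-- The standard non-degenerate skew-symmetric bilinear form on `ℝ²`. -/
noncomputable def omegaForm (q q' : ℝ × ℝ) : ℝ := q.1 * q'.2 - q.2 * q'.1

/-- `T(P)`: the set of nonzero values of `ω` on `P × P`. -/
noncomputable def Tset (P : Finset (ℝ × ℝ)) : Finset ℝ :=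
  ((P ×ˢ P).image fun qq => omegaForm qq.1 qq.2).erase 0

section ranks

/-- rank of an element -/
def rk {α : Type*} [LinearOrder α] (A : Finset α) (x : α) : ℕ := (A.filter (· < x)).card

theorem rk_mono {α : Type*} [LinearOrder α] (A : Finset α) {x y : α} (h : x ≤ y) :
    rk A x ≤ rk A y := by
  unfold rk
  apply card_le_card
  intro z hz
  simp only [mem_filter] at hz ⊢
  exact ⟨hz.1, lt_of_lt_of_le hz.2 h⟩

theorem rk_lt {α : Type*} [LinearOrder α] (A : Finset α) {x y : α} (hx : x ∈ A) (h : x < y) :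
    rk A x < rk A y := by
  unfold rk
  apply card_lt_card
  refine ⟨fun z hz => ?_, fun hh => ?_⟩
  · simp only [mem_filter] at hz ⊢
    exact ⟨hz.1, lt_trans hz.2 h⟩
  · have : x ∈ A.filter (· < x) := hh (by simp [hx, h])
    simp at this

theorem rk_inj {α : Type*} [LinearOrder α] (A : Finset α) {x y : α} (hx : x ∈ A) (hy : y ∈ A)
    (h : rk A x = rk A y) : x = y := by
  rcases lt_trichotomy x y with h1 | h1 | h1
  · have := rk_lt A hx h1; omega
  · exact h1
  · have := rk_lt A hy h1; omega

theorem rk_lt_card {α : Type*} [LinearOrder α] (A : Finset α) {x : α} (hx : x ∈ A) :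
    rk A x < A.card := by
  unfold rk
  apply card_lt_card
  refine ⟨filter_subset _ _, fun hh => ?_⟩
  have : x ∈ A.filter (· < x) := hh hx
  simp at this

/-- every fibre with `m` elements has at least `m-1` ordered pairs of distinct elements -/
theorem card_le_image_add_pairs {ι γ : Type*} [DecidableEq ι] [DecidableEq γ] (G : Finset ι)
    (h : ι → γ) :
    G.card ≤ (G.image h).card +
      ((G ×ˢ G).filter (fun e => e.1 ≠ e.2 ∧ h e.1 = h e.2)).card := by
  rcases G.eq_empty_or_nonempty with hGe | ⟨g0, _⟩
  · simp [hGe]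
  have : Nonempty ι := ⟨g0⟩
  have hne : ∀ y ∈ G.image h, ∃ a, a ∈ G ∧ h a = y := by
    intro y hy; simpa using hy
  choose! r hr using hne
  have h1 : G.card ≤ ((G.image h).image r).card +
      (G.filter (fun a => a ∉ (G.image h).image r)).card := by
    rw [← card_filter_add_card_filter_not (s := G) (fun a => a ∈ (G.image h).image r)]
    gcongr
    intro x hx
    exact (mem_filter.1 hx).2
  have h2 : (G.filter (fun a => a ∉ (G.image h).image r)).card ≤
      ((G ×ˢ G).filter (fun e => e.1 ≠ e.2 ∧ h e.1 = h e.2)).card := by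
    apply card_le_card_of_injOn (fun a => (r (h a), a))
    · intro a ha
      simp only [coe_filter, Set.mem_ofPred_eq] at ha
      obtain ⟨ha, hn⟩ := ha
      have hm : h a ∈ G.image h := mem_image_of_mem h ha
      simp only [coe_filter, Set.mem_ofPred_eq, mem_product]
      refine ⟨⟨(hr _ hm).1, ha⟩, ?_, (hr _ hm).2⟩
      intro he
      apply hn
      rw [← he]
      exact mem_image_of_mem r hm
    · intro a _ b _ hab
      exact (Prod.mk.inj hab).2
  have h3 : ((G.image h).image r).card ≤ (G.image h).card := card_image_le
  omega

theorem card_le_image_add_triples {ι γ : Type*} [DecidableEq ι] [DecidableEq γ] (G : Finset ι)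
    (h : ι → γ) :
    G.card ≤ 2 * (G.image h).card +
      ((G ×ˢ G ×ˢ G).filter (fun e => e.1 ≠ e.2.1 ∧ e.1 ≠ e.2.2 ∧ e.2.1 ≠ e.2.2 ∧
        h e.1 = h e.2.1 ∧ h e.1 = h e.2.2)).card := by
  rcases G.eq_empty_or_nonempty with hGe | ⟨g0, _⟩
  · simp [hGe]
  have : Nonempty ι := ⟨g0⟩
  have hne : ∀ y ∈ G.image h, ∃ a, a ∈ G ∧ h a = y := by
    intro y hy; simpa using hy
  choose! r hr using hne
  set G' := G.filter (fun a => a ∉ (G.image h).image r) with hG'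
  have hne2 : ∀ y ∈ G'.image h, ∃ a, a ∈ G' ∧ h a = y := by
    intro y hy; simpa using hy
  choose! r2 hr2 using hne2
  have h1 : G.card ≤ ((G.image h).image r).card + G'.card := by
    rw [← card_filter_add_card_filter_not (s := G) (fun a => a ∈ (G.image h).image r)]
    gcongr
    intro x hx
    exact (mem_filter.1 hx).2
  have h1' : G'.card ≤ ((G'.image h).image r2).card +
      (G'.filter (fun a => a ∉ (G'.image h).image r2)).card := by
    rw [← card_filter_add_card_filter_not (s := G') (fun a => a ∈ (G'.image h).image r2)]
    gcongr
    intro x hx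
    exact (mem_filter.1 hx).2
  have h2 : (G'.filter (fun a => a ∉ (G'.image h).image r2)).card ≤
      ((G ×ˢ G ×ˢ G).filter (fun e => e.1 ≠ e.2.1 ∧ e.1 ≠ e.2.2 ∧ e.2.1 ≠ e.2.2 ∧
        h e.1 = h e.2.1 ∧ h e.1 = h e.2.2)).card := by
    apply card_le_card_of_injOn (fun a => (r (h a), r2 (h a), a))
    · intro a ha
      simp only [coe_filter, Set.mem_ofPred_eq] at ha
      obtain ⟨ha, hn2⟩ := ha
      have haG : a ∈ G := (mem_filter.1 ha).1
      have hn : a ∉ (G.image h).image r := (mem_filter.1 ha).2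
      have hm : h a ∈ G.image h := mem_image_of_mem h haG
      have hm2 : h a ∈ G'.image h := mem_image_of_mem h ha
      have hb := hr2 _ hm2
      have hbG : r2 (h a) ∈ G := (mem_filter.1 hb.1).1
      have hbn : r2 (h a) ∉ (G.image h).image r := (mem_filter.1 hb.1).2
      simp only [coe_filter, Set.mem_ofPred_eq, mem_product]
      refine ⟨⟨(hr _ hm).1, hbG, haG⟩, ?_, ?_, ?_, ?_, (hr _ hm).2⟩
      · intro he
        apply hbn
        rw [← he]
        exact mem_image_of_mem r hm
      · intro he
        apply hn
        rw [← he]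
        exact mem_image_of_mem r hm
      · intro he
        apply hn2
        rw [← he]
        exact mem_image_of_mem r2 hm2
      · rw [(hr _ hm).2, hb.2]
    · intro a _ b _ hab
      exact (Prod.mk.inj (Prod.mk.inj hab).2).2
  have h3 : ((G.image h).image r).card ≤ (G.image h).card := card_image_le
  have h4 : ((G'.image h).image r2).card ≤ (G'.image h).card := card_image_le
  have h5 : (G'.image h).card ≤ (G.image h).card :=
    card_le_card (image_subset_image (filter_subset _ _))
  omega

end ranks

section crossing

/-- two indices cross -/
def Crs {ι α β : Type*} [LinearOrder α] [LinearOrder β] (f : ι → α) (g : ι → β) (p q : ι) : Prop :=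
  (f p < f q ∧ g q < g p) ∨ (f q < f p ∧ g p < g q)

theorem noncross_bound {ι α β : Type*} [LinearOrder α] [LinearOrder β] (P : Finset ι)
    (f : ι → α) (g : ι → β) (A : Finset α) (B : Finset β)
    (hA : ∀ p ∈ P, f p ∈ A) (hB : ∀ p ∈ P, g p ∈ B)
    (hinj : ∀ p ∈ P, ∀ q ∈ P, f p = f q → g p = g q → p = q) :
    P.card ≤ A.card + B.card + ((P ×ˢ P).filter (fun e => Crs f g e.1 e.2)).card := by
  have h1 := card_le_image_add_pairs P (fun p => rk A (f p) + rk B (g p))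
  have h2 : (P.image (fun p => rk A (f p) + rk B (g p))).card ≤ A.card + B.card := by
    rw [← card_range (A.card + B.card)]
    apply card_le_card
    intro x hx
    obtain ⟨p, hp, rfl⟩ := mem_image.1 hx
    have := rk_lt_card A (hA p hp)
    have := rk_lt_card B (hB p hp)
    simp only [mem_range]; omega
  have h3 : ((P ×ˢ P).filter (fun e => e.1 ≠ e.2 ∧
      rk A (f e.1) + rk B (g e.1) = rk A (f e.2) + rk B (g e.2))).card ≤
      ((P ×ˢ P).filter (fun e => Crs f g e.1 e.2)).card := by
    apply card_le_card
    rintro ⟨p, q⟩ he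
    simp only [mem_filter, mem_product] at he ⊢
    obtain ⟨⟨hp, hq⟩, hne, heq⟩ := he
    refine ⟨⟨hp, hq⟩, ?_⟩
    rcases lt_trichotomy (f p) (f q) with h | h | h
    · left
      refine ⟨h, ?_⟩
      have := rk_lt A (hA p hp) h
      by_contra hc
      have := rk_mono B (not_lt.1 hc)
      omega
    · exfalso
      apply hne
      apply hinj p hp q hq h
      apply rk_inj B (hB p hp) (hB q hq)
      rw [h] at heq; omega
    · right
      refine ⟨h, ?_⟩
      have := rk_lt A (hA q hq) h
      by_contra hc
      have := rk_mono B (not_lt.1 hc)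
      omega
  omega

theorem coloring_count {α : Type*} [Fintype α] [DecidableEq α] (m : ℕ) [NeZero m] (a b : α) (hab : a ≠ b) :
    m * ((univ : Finset (α → ZMod m)).filter (fun c => c a = c b)).card =
      (univ : Finset (α → ZMod m)).card := by
  have key : ∀ t : ZMod m, ((univ : Finset (α → ZMod m)).filter (fun c => c a - c b = t)).card =
      ((univ : Finset (α → ZMod m)).filter (fun c => c a = c b)).card := by
    intro t
    apply card_bij (fun c _ => Function.update c a (c a - t))
    · intro c hc
      simp only [mem_filter, mem_univ, true_and] at hc ⊢
      rw [Function.update_self, Function.update_of_ne (Ne.symm hab), ← hc]; ring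
    · intro c hc c' hc' h
      funext x
      have hx := congrFun h x
      by_cases hxa : x = a
      · subst hxa; simpa using hx
      · simpa [Function.update_of_ne hxa] using hx
    · intro c hc
      refine ⟨Function.update c a (c a + t), ?_, ?_⟩
      · simp only [mem_filter, mem_univ, true_and] at hc ⊢
        rw [Function.update_self, Function.update_of_ne (Ne.symm hab), ← hc]; ring
      · funext x
        by_cases hxa : x = a
        · subst hxa; simp
        · simp [Function.update_of_ne hxa]
  have h := card_eq_sum_card_fiberwise (s := (univ : Finset (α → ZMod m)))
    (t := (univ : Finset (ZMod m))) (f := fun c => c a - c b) (by intro x _; simp)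
  rw [h, sum_congr rfl (fun t _ => key t)]
  simp [ZMod.card]

theorem sum_card_color {α : Type*} [Fintype α] (m : ℕ) [NeZero m] (c : α → ZMod m) :
    ∑ i : ZMod m, ((univ : Finset α).filter (fun x => c x = i)).card = Fintype.card α := by
  have h := card_eq_sum_card_fiberwise (s := (univ : Finset α))
    (t := (univ : Finset (ZMod m))) (f := c) (by intro x _; simp)
  rw [← h]; rfl

theorem crossing_colored {ι α β : Type*} [Fintype α] [Fintype β] [LinearOrder α] [LinearOrder β]
    (P : Finset ι) (f : ι → α) (g : ι → β)
    (hinj : ∀ p ∈ P, ∀ q ∈ P, f p = f q → g p = g q → p = q) (m : ℕ) [NeZero m]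
    (c : α → ZMod m) (d : β → ZMod m) :
    P.card ≤ m * Fintype.card α + m * Fintype.card β + ((P ×ˢ P).filter (fun e => Crs f g e.1 e.2 ∧
      c (f e.1) = c (f e.2) ∧ d (g e.1) = d (g e.2))).card := by
  set col : ι → ZMod m × ZMod m := fun p => (c (f p), d (g p)) with hcol
  have h1 := card_eq_sum_card_fiberwise (s := P)
    (t := (univ : Finset (ZMod m × ZMod m))) (f := col) (by intro x _; simp)
  set X := (P ×ˢ P).filter (fun e => Crs f g e.1 e.2 ∧
      c (f e.1) = c (f e.2) ∧ d (g e.1) = d (g e.2)) with hX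
  have h2 := card_eq_sum_card_fiberwise (s := X)
    (t := (univ : Finset (ZMod m × ZMod m))) (f := fun e => col e.1) (by intro x _; simp)
  have h3 : ∀ ij : ZMod m × ZMod m, (P.filter (fun p => col p = ij)).card ≤
      ((univ : Finset α).filter (fun x => c x = ij.1)).card +
      ((univ : Finset β).filter (fun x => d x = ij.2)).card +
      (X.filter (fun e => col e.1 = ij)).card := by
    intro ij
    refine (noncross_bound (P.filter (fun p => col p = ij)) f g
      ((univ : Finset α).filter (fun x => c x = ij.1))
      ((univ : Finset β).filter (fun x => d x = ij.2)) ?_ ?_ ?_).trans ?_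
    · intro p hp
      have := (mem_filter.1 hp).2
      simp [← this, hcol]
    · intro p hp
      have := (mem_filter.1 hp).2
      simp [← this, hcol]
    · intro p hp q hq
      exact hinj p (mem_filter.1 hp).1 q (mem_filter.1 hq).1
    · gcongr
      rintro ⟨p, q⟩ he
      simp only [mem_filter, mem_product, hX, hcol] at he ⊢
      obtain ⟨⟨⟨hp, hp'⟩, hq, hq'⟩, hc⟩ := he
      have := Prod.mk.inj (hp'.trans hq'.symm)
      exact ⟨⟨⟨hp, hq⟩, hc, this.1, this.2⟩, hp'⟩
  rw [h1]
  refine (sum_le_sum (fun ij _ => h3 ij)).trans ?_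
  rw [sum_add_distrib, sum_add_distrib, ← h2]
  apply Nat.le_of_eq
  congr 1
  congr 1
  · rw [← univ_product_univ, sum_product_right]
    simp only [sum_card_color, sum_const, card_univ, ZMod.card, smul_eq_mul]
  · rw [← univ_product_univ, sum_product]
    simp only [sum_card_color, sum_const, card_univ, ZMod.card, smul_eq_mul]

theorem crossing_bound {ι α β : Type*} [Fintype α] [Fintype β] [LinearOrder α] [LinearOrder β]
    (P : Finset ι) (f : ι → α) (g : ι → β)
    (hinj : ∀ p ∈ P, ∀ q ∈ P, f p = f q → g p = g q → p = q) (m : ℕ) [NeZero m] :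
    m ^ 2 * P.card ≤ m ^ 2 * (m * Fintype.card α + m * Fintype.card β) +
      ((P ×ˢ P).filter (fun e => Crs f g e.1 e.2)).card := by
  set X := (P ×ˢ P).filter (fun e => Crs f g e.1 e.2) with hX
  set W := (univ : Finset ((α → ZMod m) × (β → ZMod m))) with hW
  have h1 : ∀ w ∈ W, P.card ≤ m * Fintype.card α + m * Fintype.card β +
      (X.filter (fun e => w.1 (f e.1) = w.1 (f e.2) ∧ w.2 (g e.1) = w.2 (g e.2))).card := by
    intro w _
    have := crossing_colored P f g hinj m w.1 w.2
    rw [hX, filter_filter]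
    exact this
  have h2 := sum_le_sum h1
  rw [sum_const, sum_add_distrib, sum_const, smul_eq_mul, smul_eq_mul] at h2
  have h3 : m ^ 2 * ∑ w ∈ W, (X.filter (fun e => w.1 (f e.1) = w.1 (f e.2) ∧
      w.2 (g e.1) = w.2 (g e.2))).card = W.card * X.card := by
    simp only [card_filter]
    rw [sum_comm, mul_sum]
    simp only [← card_filter]
    rw [mul_comm, ← smul_eq_mul, ← sum_const]
    apply sum_congr rfl
    rintro ⟨p, q⟩ he
    have hc : Crs f g p q := (mem_filter.1 he).2
    have hf : f p ≠ f q := by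
      rcases hc with h | h
      · exact h.1.ne
      · exact h.1.ne'
    have hg : g p ≠ g q := by
      rcases hc with h | h
      · exact h.2.ne'
      · exact h.2.ne
    have e1 := coloring_count m (f p) (f q) hf
    have e2 := coloring_count m (g p) (g q) hg
    have e3 : W.filter (fun w => w.1 (f p) = w.1 (f q) ∧ w.2 (g p) = w.2 (g q)) =
      ((univ : Finset (α → ZMod m)).filter (fun c => c (f p) = c (f q))) ×ˢ
      ((univ : Finset (β → ZMod m)).filter (fun c => c (g p) = c (g q))) := by
      ext w; simp [hW]
    rw [e3, card_product, hW, ← univ_product_univ, card_product, ← e1, ← e2]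
    ring
  have hWpos : 0 < W.card := by
    rw [hW]; exact card_pos.2 ⟨(fun _ => 0, fun _ => 0), mem_univ _⟩
  have h4 := Nat.mul_le_mul_left (m ^ 2) h2
  rw [mul_add, h3] at h4
  apply Nat.le_of_mul_le_mul_left _ hWpos
  calc W.card * (m ^ 2 * P.card) = m ^ 2 * (W.card * P.card) := by ring
    _ ≤ _ := h4
    _ = _ := by ring

end crossing

section dirs

theorem few_dirs_aux (P : Finset (ℝ × ℝ)) (s s' : ℝ) (hss : s < s') (u : ℕ)
    (hu : (P.image (fun p => p.1 - s * p.2)).card ≤ u)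
    (hu' : (P.image (fun p => p.1 - s' * p.2)).card ≤ u) (m : ℕ) [NeZero m] :
    m ^ 2 * P.card ≤ m ^ 2 * (2 * m * u) +
      ((P ×ˢ P).filter (fun e => ((e.1.1 - e.2.1) - s * (e.1.2 - e.2.2)) *
        ((e.1.1 - e.2.1) - s' * (e.1.2 - e.2.2)) < 0)).card := by
  have h := crossing_bound (ι := {p // p ∈ P}) (α := {x // x ∈ P.image (fun p => p.1 - s * p.2)})
    (β := {x // x ∈ P.image (fun p => p.1 - s' * p.2)}) univ
    (fun p => ⟨p.1.1 - s * p.1.2, mem_image_of_mem (fun p : ℝ × ℝ => p.1 - s * p.2) p.2⟩)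
    (fun p => ⟨p.1.1 - s' * p.1.2, mem_image_of_mem (fun p : ℝ × ℝ => p.1 - s' * p.2) p.2⟩)
    (by
      rintro ⟨p, hp⟩ _ ⟨q, hq⟩ _ h1 h2
      simp only [Subtype.mk.injEq] at h1 h2 ⊢
      have h3 : (s' - s) * (p.2 - q.2) = 0 := by linarith
      have h4 : p.2 - q.2 = 0 := by
        rcases mul_eq_zero.1 h3 with h | h
        · linarith
        · exact h
      have h5 : p.2 = q.2 := by linarith
      rw [h5] at h1
      exact Prod.ext (by linarith) h5) m
  have hc : (univ : Finset {p // p ∈ P}).card = P.card := by simp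
  rw [hc] at h
  refine h.trans ?_
  have e1 : Fintype.card {x // x ∈ P.image (fun p : ℝ × ℝ => p.1 - s * p.2)} ≤ u := by
    simpa using hu
  have e2 : Fintype.card {x // x ∈ P.image (fun p : ℝ × ℝ => p.1 - s' * p.2)} ≤ u := by
    simpa using hu'
  apply Nat.add_le_add
  · apply Nat.mul_le_mul_left
    have := Nat.mul_le_mul_left m e1
    have := Nat.mul_le_mul_left m e2
    linarith
  · apply card_le_card_of_injOn (fun e => (e.1.1, e.2.1))
    · rintro ⟨⟨p, hp⟩, ⟨q, hq⟩⟩ he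
      simp only [coe_filter, Set.mem_ofPred_eq, mem_product, Crs, Subtype.mk_lt_mk] at he ⊢
      refine ⟨⟨hp, hq⟩, ?_⟩
      rcases he.2 with ⟨h1, h2⟩ | ⟨h1, h2⟩
      · apply mul_neg_of_neg_of_pos <;> linarith
      · apply mul_neg_of_pos_of_neg <;> linarith
    · rintro ⟨⟨p, hp⟩, ⟨q, hq⟩⟩ _ ⟨⟨p', hp'⟩, ⟨q', hq'⟩⟩ _ h
      simpa using h

theorem few_dirs (P : Finset (ℝ × ℝ)) (S : Finset ℝ) (u : ℕ) (hS : 2 ≤ S.card)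
    (hSP : S.card ≤ P.card) (hu0 : 1 ≤ u)
    (hu : ∀ s ∈ S, (P.image (fun p => p.1 - s * p.2)).card ≤ u) :
    P.card * S.card ≤ 256 * u ^ 2 := by
  by_cases hN : P.card < 4 * u
  · calc P.card * S.card ≤ P.card * P.card := Nat.mul_le_mul_left _ hSP
      _ ≤ (4 * u) * (4 * u) := Nat.mul_le_mul hN.le hN.le
      _ ≤ 256 * u ^ 2 := by nlinarith
  push Not at hN
  set N := P.card with hNdef
  obtain ⟨d, hd⟩ : ∃ d, S.card = d + 1 := ⟨S.card - 1, by omega⟩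
  set e := S.orderEmbOfFin hd with he
  set m := N / (4 * u) with hm
  have hm1 : 1 ≤ m := (Nat.one_le_div_iff (by omega)).2 hN
  have : NeZero m := ⟨by omega⟩
  have hm2 : 4 * u * m ≤ N := Nat.mul_div_le _ _
  have hm3 : N ≤ 8 * u * m := by
    have := Nat.lt_mul_div_succ N (show 0 < 4 * u by omega)
    rw [← hm] at this
    nlinarith
  set X : Fin d → Finset ((ℝ × ℝ) × (ℝ × ℝ)) := fun i =>
    (P ×ˢ P).filter (fun x => ((x.1.1 - x.2.1) - e i.castSucc * (x.1.2 - x.2.2)) *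
        ((x.1.1 - x.2.1) - e i.succ * (x.1.2 - x.2.2)) < 0) with hX
  have hXi : ∀ i ∈ (univ : Finset (Fin d)), m ^ 2 * N ≤ 2 * (X i).card := by
    intro i _
    have h := few_dirs_aux P (e i.castSucc) (e i.succ)
      (e.strictMono (Fin.castSucc_lt_succ)) u
      (hu _ (S.orderEmbOfFin_mem hd _)) (hu _ (S.orderEmbOfFin_mem hd _)) m
    have : m ^ 2 * (4 * u * m) ≤ m ^ 2 * N := Nat.mul_le_mul_left _ hm2
    simp only [hX]
    nlinarith
  have hdisj : ((univ : Finset (Fin d)) : Set (Fin d)).PairwiseDisjoint X := by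
    have key : ∀ i j : Fin d, i < j → ∀ x, x ∈ X i → x ∈ X j → False := by
      intro i j hij x hi hj
      simp only [hX, mem_filter] at hi hj
      have h1 : e i.castSucc < e i.succ := e.strictMono (Fin.castSucc_lt_succ)
      have h2 : e i.succ ≤ e j.castSucc := e.monotone (by
        rw [Fin.le_iff_val_le_val]; simp; omega)
      have h3 : e j.castSucc < e j.succ := e.strictMono (Fin.castSucc_lt_succ)
      generalize e i.castSucc = a at *
      generalize e i.succ = b at *
      generalize e j.castSucc = c at *
      generalize e j.succ = d' at *
      have hi := hi.2
      have hj := hj.2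
      generalize x.1.1 - x.2.1 = X1 at *
      generalize x.1.2 - x.2.2 = Y1 at *
      rcases lt_trichotomy Y1 0 with hy | hy | hy
      · rcases mul_neg_iff.1 hi with h | h <;> rcases mul_neg_iff.1 hj with h' | h' <;> nlinarith
      · subst hy
        have h9 : X1 * X1 < 0 := by simpa using hi
        nlinarith [mul_self_nonneg X1]
      · rcases mul_neg_iff.1 hi with h | h <;> rcases mul_neg_iff.1 hj with h' | h' <;> nlinarith
    intro i _ j _ hij
    rw [Function.onFun, disjoint_left]
    intro x hi hj
    rcases lt_or_gt_of_ne hij with h | h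
    · exact key i j h x hi hj
    · exact key j i h x hj hi
  have hsum : ∑ i, (X i).card ≤ N * N := by
    rw [← card_biUnion (fun i hi j hj h => hdisj hi hj h), ← card_product]
    apply card_le_card
    intro x hx
    obtain ⟨i, _, hi⟩ := mem_biUnion.1 hx
    exact (mem_filter.1 hi).1
  have h5 := sum_le_sum hXi
  rw [sum_const, ← mul_sum, card_univ, Fintype.card_fin, smul_eq_mul] at h5
  have h6 : d * (m ^ 2 * N) ≤ 2 * (N * N) := h5.trans (Nat.mul_le_mul_left 2 hsum)
  have hNpos : 0 < N := by omega
  have h7 : d * m ^ 2 ≤ 2 * N := by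
    apply Nat.le_of_mul_le_mul_right _ hNpos
    calc d * m ^ 2 * N = d * (m ^ 2 * N) := by ring
      _ ≤ _ := h6
      _ = _ := by ring
  -- N^2 d ≤ 64 u^2 m^2 d ≤ 128 u^2 N
  have h8 : d * N ≤ 128 * u ^ 2 := by
    apply Nat.le_of_mul_le_mul_right _ hNpos
    calc d * N * N ≤ d * ((8 * u * m) * (8 * u * m)) := by
          rw [mul_assoc]; exact Nat.mul_le_mul_left _ (Nat.mul_le_mul hm3 hm3)
      _ = 64 * u ^ 2 * (d * m ^ 2) := by ring
      _ ≤ 64 * u ^ 2 * (2 * N) := Nat.mul_le_mul_left _ h7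
      _ = _ := by ring
  rw [hd]
  have hd1 : 1 ≤ d := by omega
  nlinarith

end dirs

section blocks

theorem blk_card {α : Type*} [LinearOrder α] (A : Finset α) (g b : ℕ) (hg : 1 ≤ g) :
    (A.filter (fun y => rk A y / g = b)).card ≤ g := by
  have : (A.filter (fun y => rk A y / g = b)).card ≤ (Ico (b * g) (b * g + g)).card := by
    apply card_le_card_of_injOn (fun y => rk A y)
    · intro y hy
      simp only [coe_filter, Set.mem_ofPred_eq] at hy
      simp only [coe_Ico, Set.mem_Ico]
      have h1 := hy.2
      rw [Nat.div_eq_iff (by omega)] at h1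
      constructor
      · exact h1.1
      · have := h1.2; omega
    · intro x hx y hy h
      simp only [coe_filter, Set.mem_ofPred_eq] at hx hy
      exact rk_inj A hx.1 hy.1 h
  simpa using this

theorem blk_lt {α : Type*} [LinearOrder α] (A : Finset α) (g r : ℕ)
    (h : A.card ≤ r * g) {x : α} (hx : x ∈ A) : rk A x / g < r := by
  apply Nat.div_lt_of_lt_mul
  have := rk_lt_card A hx
  rw [mul_comm]
  omega

theorem blk_pairs {α : Type*} [LinearOrder α] (A : Finset α) (g : ℕ) (hg : 1 ≤ g) :
    ((A ×ˢ A).filter (fun e => rk A e.1 / g = rk A e.2 / g)).card ≤ g * A.card := by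
  apply card_le_mul_card_image_of_maps_to (f := Prod.fst)
  · intro e he
    exact (mem_product.1 (mem_filter.1 he).1).1
  · intro b hb
    refine le_trans ?_ (blk_card A g (rk A b / g) hg)
    apply card_le_card_of_injOn Prod.snd
    · rintro ⟨x, y⟩ he
      simp only [coe_filter, Set.mem_ofPred_eq, mem_filter, mem_product] at he ⊢
      obtain ⟨⟨⟨_, h1⟩, h2⟩, h3⟩ := he
      refine ⟨h1, ?_⟩
      rw [← h3, h2]
    · rintro ⟨x, y⟩ he ⟨x', y'⟩ he' h
      simp only [coe_filter, Set.mem_ofPred_eq, mem_filter, mem_product] at he he' h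
      rw [he.2, he'.2, h]

theorem blk_triples {α : Type*} [LinearOrder α] (A : Finset α) (g : ℕ) (hg : 1 ≤ g) :
    ((A ×ˢ A ×ˢ A).filter (fun e => rk A e.1 / g = rk A e.2.1 / g ∧
      rk A e.1 / g = rk A e.2.2 / g)).card ≤ (g * g) * A.card := by
  apply card_le_mul_card_image_of_maps_to (f := Prod.fst)
  · intro e he
    exact (mem_product.1 (mem_filter.1 he).1).1
  · intro b hb
    have h0 := blk_card A g (rk A b / g) hg
    refine le_trans ?_ (Nat.mul_le_mul h0 h0)
    rw [← card_product]
    apply card_le_card_of_injOn Prod.snd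
    · rintro ⟨x, y, z⟩ he
      simp only [coe_filter, Set.mem_ofPred_eq, mem_filter, mem_product, coe_product,
        Set.mem_prod] at he ⊢
      obtain ⟨⟨⟨_, h1, h1'⟩, h2, h2'⟩, h3⟩ := he
      rw [← h3]
      exact ⟨⟨h1, h2.symm⟩, h1', h2'.symm⟩
    · rintro ⟨x, y⟩ he ⟨x', y'⟩ he' h
      simp only [coe_filter, Set.mem_ofPred_eq, mem_filter, mem_product] at he he' h
      rw [he.2, he'.2, h]

theorem cells_le (A B : Finset ℝ) (G : Finset (ℝ × ℝ)) (hG : G ⊆ A ×ˢ B) (r g : ℕ)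
    (hA : A.card ≤ r * g) (hB : B.card ≤ r * g)
    (h : (∀ p ∈ G, ∀ q ∈ G, p.1 ≤ q.1 → p.2 ≤ q.2) ∨
      (∀ p ∈ G, ∀ q ∈ G, p.1 ≤ q.1 → q.2 ≤ p.2)) :
    (G.image (fun p => (rk A p.1 / g, rk B p.2 / g))).card ≤ 2 * r := by
  have hlt : ∀ p ∈ G, rk A p.1 / g < r ∧ rk B p.2 / g < r := by
    intro p hp
    have := mem_product.1 (hG hp)
    exact ⟨blk_lt A g r hA this.1, blk_lt B g r hB this.2⟩
  rw [← card_range (2 * r)]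
  rcases h with h | h
  · apply card_le_card_of_injOn (fun c => c.1 + c.2)
    · intro c hc
      simp only [coe_image, Set.mem_image, mem_coe] at hc
      obtain ⟨p, hp, rfl⟩ := hc
      have := hlt p hp
      simp only [coe_range, Set.mem_Iio]
      omega
    · intro c hc c' hc' heq
      simp only [coe_image, Set.mem_image, mem_coe] at hc hc'
      obtain ⟨p, hp, rfl⟩ := hc
      obtain ⟨q, hq, rfl⟩ := hc'
      simp only at heq
      rcases le_total p.1 q.1 with h1 | h1
      · have h2 := h p hp q hq h1
        have h3 : rk A p.1 / g ≤ rk A q.1 / g := Nat.div_le_div_right (rk_mono A h1)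
        have h4 : rk B p.2 / g ≤ rk B q.2 / g := Nat.div_le_div_right (rk_mono B h2)
        exact Prod.ext (by simp only; omega) (by simp only; omega)
      · have h2 := h q hq p hp h1
        have h3 : rk A q.1 / g ≤ rk A p.1 / g := Nat.div_le_div_right (rk_mono A h1)
        have h4 : rk B q.2 / g ≤ rk B p.2 / g := Nat.div_le_div_right (rk_mono B h2)
        exact Prod.ext (by simp only; omega) (by simp only; omega)
  · apply card_le_card_of_injOn (fun c => c.1 + (r - c.2))
    · intro c hc
      simp only [coe_image, Set.mem_image, mem_coe] at hc
      obtain ⟨p, hp, rfl⟩ := hc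
      have := hlt p hp
      simp only [coe_range, Set.mem_Iio]
      have h9 : r - rk B p.2 / g ≤ r := Nat.sub_le _ _
      linarith [this.1]
    · intro c hc c' hc' heq
      simp only [coe_image, Set.mem_image, mem_coe] at hc hc'
      obtain ⟨p, hp, rfl⟩ := hc
      obtain ⟨q, hq, rfl⟩ := hc'
      simp only at heq
      have := hlt p hp
      have := hlt q hq
      rcases le_total p.1 q.1 with h1 | h1
      · have h2 := h p hp q hq h1
        have h3 : rk A p.1 / g ≤ rk A q.1 / g := Nat.div_le_div_right (rk_mono A h1)
        have h4 : rk B q.2 / g ≤ rk B p.2 / g := Nat.div_le_div_right (rk_mono B h2)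
        exact Prod.ext (by simp only; omega) (by simp only; omega)
      · have h2 := h q hq p hp h1
        have h3 : rk A q.1 / g ≤ rk A p.1 / g := Nat.div_le_div_right (rk_mono A h1)
        have h4 : rk B p.2 / g ≤ rk B q.2 / g := Nat.div_le_div_right (rk_mono B h2)
        exact Prod.ext (by simp only; omega) (by simp only; omega)

theorem sum_card_le_of_disj {ι κ : Type*} [DecidableEq κ] (L : Finset ι) (F : ι → Finset κ)
    (B : Finset κ) (hs : ∀ l ∈ L, F l ⊆ B)
    (hd : ∀ l ∈ L, ∀ l' ∈ L, ∀ x, x ∈ F l → x ∈ F l' → l = l') :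
    ∑ l ∈ L, (F l).card ≤ B.card := by
  rw [← card_biUnion]
  · apply card_le_card
    intro x hx
    obtain ⟨l, hl, hx⟩ := mem_biUnion.1 hx
    exact hs l hl hx
  · intro l hl l' hl' hne
    rw [Function.onFun, disjoint_left]
    intro x hx hx'
    exact hne (hd l hl l' hl' x hx hx')

theorem grid_size (D r : ℕ) (h1 : 1 ≤ r) (h2 : r ≤ D) :
    D ≤ r * (D / r + 1) ∧ r * (D / r + 1) ≤ 2 * D := by
  constructor
  · exact (Nat.lt_mul_div_succ D (by omega)).le
  · have := Nat.mul_div_le D r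
    nlinarith

theorem grid_inc (T : Finset ℝ) (L : Finset (ℝ × ℝ)) (r : ℕ) (h1 : 1 ≤ r) (h2 : r ≤ T.card) :
    r ^ 2 * (((T ×ˢ T) ×ˢ L).filter (fun e => e.1.1 * e.2.1 + e.1.2 = e.2.2)).card ≤
      2 * r ^ 3 * L.card + 4 * T.card ^ 4 := by
  set g := T.card / r + 1 with hg
  obtain ⟨hg1, hg2⟩ := grid_size T.card r h1 h2
  rw [← hg] at hg1 hg2
  set G : ℝ × ℝ → Finset (ℝ × ℝ) := fun l => (T ×ˢ T).filter (fun p => p.1 * l.1 + p.2 = l.2)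
    with hG
  set cell : ℝ × ℝ → ℕ × ℕ := fun p => (rk T p.1 / g, rk T p.2 / g) with hcell
  set PP : ℝ × ℝ → Finset ((ℝ × ℝ) × (ℝ × ℝ)) := fun l =>
    ((G l ×ˢ G l).filter (fun e => e.1 ≠ e.2 ∧ cell e.1 = cell e.2)) with hPP
  have hI : (((T ×ˢ T) ×ˢ L).filter (fun e => e.1.1 * e.2.1 + e.1.2 = e.2.2)).card ≤
      ∑ l ∈ L, (G l).card := by
    rw [card_eq_sum_card_fiberwise (f := Prod.snd) (t := L)]
    · apply sum_le_sum
      intro l hl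
      apply card_le_card_of_injOn Prod.fst
      · rintro ⟨p, l'⟩ he
        simp only [coe_filter, Set.mem_ofPred_eq, mem_filter, mem_product, hG] at he ⊢
        obtain ⟨⟨⟨h3, _⟩, h4⟩, h5⟩ := he
        rw [← h5]
        exact ⟨h3, h4⟩
      · rintro ⟨x, y⟩ he ⟨x', y'⟩ he' h
        simp only [coe_filter, Set.mem_ofPred_eq, mem_filter, mem_product] at he he' h
        rw [he.2, he'.2, h]
    · intro e he
      simp only [coe_filter, Set.mem_ofPred_eq, mem_product] at he
      exact he.1.2
  have hGl : ∀ l ∈ L, (G l).card ≤ 2 * r + (PP l).card := by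
    intro l hl
    refine (card_le_image_add_pairs (G l) cell).trans ?_
    apply Nat.add_le_add_right
    apply cells_le T T (G l) (filter_subset _ _) r g hg1 hg1
    rcases le_total l.1 0 with hy | hy
    · left
      intro p hp q hq hpq
      have hp := (mem_filter.1 hp).2
      have hq := (mem_filter.1 hq).2
      nlinarith
    · right
      intro p hp q hq hpq
      have hp := (mem_filter.1 hp).2
      have hq := (mem_filter.1 hq).2
      nlinarith
  have hsum : ∑ l ∈ L, (PP l).card ≤ (g * T.card) * (g * T.card) := by
    have hb := blk_pairs T g (Nat.le_add_left _ _)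
    refine le_trans ?_ (Nat.mul_le_mul hb hb)
    rw [← card_product]
    refine le_trans (sum_card_le_of_disj L PP (((T ×ˢ T) ×ˢ (T ×ˢ T)).filter
      (fun e => cell e.1 = cell e.2)) ?_ ?_) ?_
    · intro l hl e he
      simp only [hPP, hG, mem_filter, mem_product] at he ⊢
      tauto
    · rintro ⟨y, q⟩ hl ⟨y', q'⟩ hl' ⟨⟨a, b⟩, ⟨a', b'⟩⟩ he he'
      simp only [hPP, hG, mem_filter, mem_product] at he he'
      obtain ⟨⟨⟨_, e1⟩, ⟨_, e2⟩⟩, hne, _⟩ := he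
      obtain ⟨⟨⟨_, e1'⟩, ⟨_, e2'⟩⟩, _, _⟩ := he'
      have haa : a - a' ≠ 0 := by
        intro h
        have h' : a = a' := by linarith
        subst h'
        apply hne
        have : b = b' := by linarith
        rw [this]
      have h3 : (a - a') * (y - y') = 0 := by linarith
      have h4 : y = y' := by
        rcases mul_eq_zero.1 h3 with h | h
        · exact absurd h haa
        · linarith
      subst h4
      have : q = q' := by linarith
      rw [this]
    · apply card_le_card_of_injOn (fun e => ((e.1.1, e.2.1), (e.1.2, e.2.2)))
      · rintro ⟨⟨a, b⟩, ⟨a', b'⟩⟩ he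
        simp only [coe_filter, Set.mem_ofPred_eq, mem_product, coe_product,
          Set.mem_prod, hcell, Prod.mk.injEq] at he ⊢
        tauto
      · rintro ⟨⟨a, b⟩, ⟨a', b'⟩⟩ _ ⟨⟨c, d⟩, ⟨c', d'⟩⟩ _ h
        simp only [Prod.mk.injEq] at h ⊢
        tauto
  have h5 := sum_le_sum hGl
  rw [sum_add_distrib, sum_const, smul_eq_mul] at h5
  have h6 : (((T ×ˢ T) ×ˢ L).filter (fun e => e.1.1 * e.2.1 + e.1.2 = e.2.2)).card ≤
    L.card * (2 * r) + (g * T.card) * (g * T.card) := by omega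
  calc _ ≤ r ^ 2 * (L.card * (2 * r) + (g * T.card) * (g * T.card)) := Nat.mul_le_mul_left _ h6
    _ = 2 * r ^ 3 * L.card + (r * g) * (r * g) * T.card ^ 2 := by ring
    _ ≤ 2 * r ^ 3 * L.card + (2 * T.card) * (2 * T.card) * T.card ^ 2 := by gcongr
    _ = _ := by ring

end blocks

section mobius

def IsMob (S : Finset ℝ) (G : Finset (ℝ × ℝ)) : Prop :=
  ∃ a b c d : ℝ, a * d - b * c ≠ 0 ∧
    G = (S ×ˢ S).filter (fun p => p.2 * (c * p.1 + d) = a * p.1 + b)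

noncomputable def Mob (S : Finset ℝ) : Finset (Finset (ℝ × ℝ)) :=
  ((S ×ˢ S).powerset).filter (fun G => IsMob S G ∧ 3 ≤ G.card)

theorem mob_den {a b c d x y : ℝ} (h : a * d - b * c ≠ 0) (he : y * (c * x + d) = a * x + b) :
    c * x + d ≠ 0 := by
  intro h0
  rw [h0, mul_zero] at he
  apply h
  linear_combination a * h0 + c * he

theorem quad_zero {A B C x y z : ℝ} (hxy : x ≠ y) (hxz : x ≠ z) (hyz : y ≠ z)
    (hx : A * x ^ 2 + B * x + C = 0) (hy : A * y ^ 2 + B * y + C = 0)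
    (hz : A * z ^ 2 + B * z + C = 0) : A = 0 ∧ B = 0 ∧ C = 0 := by
  have h1 : A * (x + y) + B = 0 := by
    apply mul_left_cancel₀ (sub_ne_zero.2 hxy)
    linear_combination hx - hy
  have h2 : A * (x + z) + B = 0 := by
    apply mul_left_cancel₀ (sub_ne_zero.2 hxz)
    linear_combination hx - hz
  have hA : A = 0 := by
    apply mul_left_cancel₀ (sub_ne_zero.2 hyz)
    linear_combination h1 - h2
  subst hA
  have hB : B = 0 := by linarith
  subst hB
  refine ⟨rfl, rfl, by linarith⟩

theorem mob_fst {S : Finset ℝ} {G : Finset (ℝ × ℝ)} (hG : IsMob S G) {p q : ℝ × ℝ} (hp : p ∈ G)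
    (hq : q ∈ G) (h : p.1 = q.1) : p = q := by
  obtain ⟨a, b, c, d, hdet, rfl⟩ := hG
  have h1 := (mem_filter.1 hp).2
  have h2 := (mem_filter.1 hq).2
  have h3 := mob_den hdet h2
  refine Prod.ext h ?_
  rw [h] at h1
  apply mul_right_cancel₀ h3
  rw [h1, h2]

theorem mob_sub {S : Finset ℝ} {G G' : Finset (ℝ × ℝ)} (hG : IsMob S G) (hG' : IsMob S G')
    {p q r : ℝ × ℝ} (hpq : p ≠ q) (hpr : p ≠ r) (hqr : q ≠ r)
    (hp : p ∈ G) (hq : q ∈ G) (hr : r ∈ G) (hp' : p ∈ G') (hq' : q ∈ G') (hr' : r ∈ G') :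
    G ⊆ G' := by
  have x1 : p.1 ≠ q.1 := fun h => hpq (mob_fst hG hp hq h)
  have x2 : p.1 ≠ r.1 := fun h => hpr (mob_fst hG hp hr h)
  have x3 : q.1 ≠ r.1 := fun h => hqr (mob_fst hG hq hr h)
  obtain ⟨a, b, c, d, hdet, rfl⟩ := hG
  obtain ⟨a', b', c', d', hdet', rfl⟩ := hG'
  have key : ∀ x : ℝ × ℝ, x.2 * (c * x.1 + d) = a * x.1 + b → 
      x.2 * (c' * x.1 + d') = a' * x.1 + b' →
      (a * c' - a' * c) * x.1 ^ 2 + (a * d' + b * c' - a' * d - b' * c) * x.1 +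
        (b * d' - b' * d) = 0 := by
    intro x h h'
    linear_combination (-(c' * x.1 + d')) * h + (c * x.1 + d) * h'
  obtain ⟨hA, hB, hC⟩ := quad_zero x1 x2 x3
    (key p (mem_filter.1 hp).2 (mem_filter.1 hp').2)
    (key q (mem_filter.1 hq).2 (mem_filter.1 hq').2)
    (key r (mem_filter.1 hr).2 (mem_filter.1 hr').2)
  intro x hx
  have h1 := (mem_filter.1 hx).2
  have h3 := mob_den hdet h1
  refine mem_filter.2 ⟨(mem_filter.1 hx).1, ?_⟩
  apply mul_right_cancel₀ h3
  linear_combination (c' * x.1 + d') * h1 + x.1 ^ 2 * hA + x.1 * hB + hC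

theorem mob_cells {S : Finset ℝ} {G : Finset (ℝ × ℝ)} (hG : IsMob S G) (r g : ℕ)
    (h : S.card ≤ r * g) :
    (G.image (fun p => (rk S p.1 / g, rk S p.2 / g))).card ≤ 4 * r := by
  obtain ⟨a, b, c, d, hdet, rfl⟩ := hG
  set G := (S ×ˢ S).filter (fun p => p.2 * (c * p.1 + d) = a * p.1 + b) with hGdef
  have hsplit : G = G.filter (fun p => 0 < c * p.1 + d) ∪ G.filter (fun p => c * p.1 + d < 0) := by
    ext p
    simp only [mem_union, mem_filter]
    constructor
    · intro hp
      have := mob_den hdet (mem_filter.1 hp).2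
      rcases lt_or_gt_of_ne this with h | h
      · right; exact ⟨hp, h⟩
      · left; exact ⟨hp, h⟩
    · rintro (h | h) <;> exact h.1
  have key : ∀ G' ⊆ G, (∀ p ∈ G', ∀ q ∈ G', 0 < (c * p.1 + d) * (c * q.1 + d)) →
      (G'.image (fun p => (rk S p.1 / g, rk S p.2 / g))).card ≤ 2 * r := by
    intro G' hG' hpos
    apply cells_le S S G' (hG'.trans (filter_subset _ _)) r g h h
    have hid : ∀ p ∈ G', ∀ q ∈ G', (p.2 - q.2) * ((c * p.1 + d) * (c * q.1 + d)) =
        (a * d - b * c) * (p.1 - q.1) := by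
      intro p hp q hq
      have h1 := (mem_filter.1 (hG' hp)).2
      have h2 := (mem_filter.1 (hG' hq)).2
      linear_combination (c * q.1 + d) * h1 - (c * p.1 + d) * h2
    rcases lt_or_gt_of_ne hdet with hd | hd
    · right
      intro p hp q hq hpq
      have h1 := hid p hp q hq
      have h2 := hpos p hp q hq
      by_contra hlt
      push Not at hlt
      nlinarith [mul_pos (sub_pos.2 hlt) h2]
    · left
      intro p hp q hq hpq
      have h1 := hid p hp q hq
      have h2 := hpos p hp q hq
      by_contra hlt
      push Not at hlt
      nlinarith [mul_pos (sub_pos.2 hlt) h2]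
  rw [hsplit, image_union]
  refine (card_union_le _ _).trans ?_
  have h1 := key (G.filter (fun p => 0 < c * p.1 + d)) (filter_subset _ _) (by
    intro p hp q hq
    exact mul_pos (mem_filter.1 hp).2 (mem_filter.1 hq).2)
  have h2 := key (G.filter (fun p => c * p.1 + d < 0)) (filter_subset _ _) (by
    intro p hp q hq
    exact mul_pos_of_neg_of_neg (mem_filter.1 hp).2 (mem_filter.1 hq).2)
  omega

/-- triples of distinct points in the same cell -/
noncomputable def tau (S : Finset ℝ) (g : ℕ) (G : Finset (ℝ × ℝ)) :
    Finset ((ℝ × ℝ) × (ℝ × ℝ) × (ℝ × ℝ)) :=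
  (G ×ˢ G ×ˢ G).filter (fun e => e.1 ≠ e.2.1 ∧ e.1 ≠ e.2.2 ∧ e.2.1 ≠ e.2.2 ∧
        (fun p : ℝ × ℝ => (rk S p.1 / g, rk S p.2 / g)) e.1 = 
          (fun p : ℝ × ℝ => (rk S p.1 / g, rk S p.2 / g)) e.2.1 ∧ 
        (fun p : ℝ × ℝ => (rk S p.1 / g, rk S p.2 / g)) e.1 =
          (fun p : ℝ × ℝ => (rk S p.1 / g, rk S p.2 / g)) e.2.2)

theorem mob_sum_tau (S : Finset ℝ) (g : ℕ) (hg : 1 ≤ g) :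
    ∑ G ∈ Mob S, (tau S g G).card ≤ ((g * g) * S.card) * ((g * g) * S.card) := by
  have hb := blk_triples S g hg
  refine le_trans ?_ (Nat.mul_le_mul hb hb)
  rw [← card_product]
  refine le_trans (sum_card_le_of_disj (Mob S) (tau S g)
    (((S ×ˢ S) ×ˢ (S ×ˢ S) ×ˢ (S ×ˢ S)).filter (fun e : (ℝ × ℝ) × (ℝ × ℝ) × (ℝ × ℝ) => 
      (rk S e.1.1 / g = rk S e.2.1.1 / g ∧ rk S e.1.1 / g = rk S e.2.2.1 / g) ∧ 
      (rk S e.1.2 / g = rk S e.2.1.2 / g ∧ rk S e.1.2 / g = rk S e.2.2.2 / g))) ?_ ?_) ?_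
  · intro G hG e he
    have hGS : G ⊆ S ×ˢ S := mem_powerset.1 (mem_filter.1 hG).1
    obtain ⟨h1, h2, h3, h4, h5, h6⟩ := mem_filter.1 he
    obtain ⟨m1, m2⟩ := mem_product.1 h1
    obtain ⟨m2, m3⟩ := mem_product.1 m2
    simp only [Prod.mk.injEq] at h5 h6
    exact mem_filter.2 ⟨mem_product.2 ⟨hGS m1, mem_product.2 ⟨hGS m2, hGS m3⟩⟩,
      ⟨h5.1, h6.1⟩, h5.2, h6.2⟩
  · intro G hG G' hG' e he he'
    obtain ⟨h1, h2, h3, h4, -, -⟩ := mem_filter.1 he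
    obtain ⟨m1, m2⟩ := mem_product.1 h1
    obtain ⟨m2, m3⟩ := mem_product.1 m2
    obtain ⟨h1', -⟩ := mem_filter.1 he'
    obtain ⟨m1', m2'⟩ := mem_product.1 h1'
    obtain ⟨m2', m3'⟩ := mem_product.1 m2'
    have i1 := (mem_filter.1 hG).2.1
    have i2 := (mem_filter.1 hG').2.1
    exact Finset.Subset.antisymm (mob_sub i1 i2 h2 h3 h4 m1 m2 m3 m1' m2' m3')
      (mob_sub i2 i1 h2 h3 h4 m1' m2' m3' m1 m2 m3)
  · apply card_le_card_of_injOn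
      (fun e => ((e.1.1, e.2.1.1, e.2.2.1), (e.1.2, e.2.1.2, e.2.2.2)))
    · rintro ⟨⟨a, b⟩, ⟨a', b'⟩, ⟨a'', b''⟩⟩ he
      simp only [coe_filter, Set.mem_ofPred_eq, mem_product, coe_product,
          Set.mem_prod] at he ⊢
      tauto
    · rintro ⟨⟨a, b⟩, ⟨a', b'⟩, ⟨a'', b''⟩⟩ _ ⟨⟨c, d⟩, ⟨c', d'⟩, ⟨c'', d''⟩⟩ _ h
      simp only [Prod.mk.injEq] at h ⊢
      tauto

theorem mob_card_le {S : Finset ℝ} {G : Finset (ℝ × ℝ)} (hG : G ∈ Mob S) : G.card ≤ S.card := by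
  apply card_le_card_of_injOn Prod.fst
  · intro p hp
    have hGS : G ⊆ S ×ˢ S := mem_powerset.1 (mem_filter.1 hG).1
    exact (mem_product.1 (hGS hp)).1
  · intro p hp q hq h
    exact mob_fst (mem_filter.1 hG).2.1 hp hq h

theorem sum_sq_ge (m : ℕ) : m ^ 3 ≤ 3 * ∑ r ∈ Icc 1 m, r ^ 2 := by
  induction m with
  | zero => simp
  | succ m ih =>
    rw [sum_Icc_succ_top (by omega), mul_add]
    have h : (m + 1) ^ 3 + (3 * m + 2) = m ^ 3 + 3 * (m + 1) ^ 2 := by ring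
    omega

theorem mob_pow4 {S : Finset ℝ} {G : Finset (ℝ × ℝ)} (hG : G ∈ Mob S) :
    G.card ^ 4 ≤ 196608 * ∑ r ∈ Icc 1 S.card, r ^ 2 * (tau S (S.card / r + 1) G).card := by
  have hle := mob_card_le hG
  have h3 : 3 ≤ G.card := (mem_filter.1 hG).2.2
  have hmob := (mem_filter.1 hG).2.1
  have hGS : G ⊆ S ×ˢ S := mem_powerset.1 (mem_filter.1 hG).1
  by_cases h16 : G.card < 16
  · have h1 : 1 ^ 2 * (tau S (S.card / 1 + 1) G).card ≤
        ∑ r ∈ Icc 1 S.card, r ^ 2 * (tau S (S.card / r + 1) G).card := by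
      apply single_le_sum (f := fun r => r ^ 2 * (tau S (S.card / r + 1) G).card)
      · intro i _; exact Nat.zero_le _
      · exact mem_Icc.2 ⟨le_refl _, by omega⟩
    have h2 := card_le_image_add_triples G 
      (fun p : ℝ × ℝ => (rk S p.1 / (S.card / 1 + 1), rk S p.2 / (S.card / 1 + 1)))
    have h4 : (G.image 
      (fun p : ℝ × ℝ => (rk S p.1 / (S.card / 1 + 1), rk S p.2 / (S.card / 1 + 1)))).card ≤ 1 := by
      have : G.image 
        (fun p : ℝ × ℝ => (rk S p.1 / (S.card / 1 + 1), rk S p.2 / (S.card / 1 + 1))) ⊆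
          {((0 : ℕ), (0 : ℕ))} := by
        intro c hc
        obtain ⟨p, hp, rfl⟩ := mem_image.1 hc
        have hp := mem_product.1 (hGS hp)
        have i1 := rk_lt_card S hp.1
        have i2 := rk_lt_card S hp.2
        rw [mem_singleton]
        refine Prod.ext ?_ ?_
        · exact Nat.div_eq_of_lt (by rw [Nat.div_one]; omega)
        · exact Nat.div_eq_of_lt (by rw [Nat.div_one]; omega)
      simpa using card_le_card this
    have h5 : G.card ≤ 2 * 1 + (tau S (S.card / 1 + 1) G).card :=
      h2.trans (Nat.add_le_add_right (Nat.mul_le_mul_left _ h4) _)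
    have h6 : G.card ^ 4 ≤ 16 ^ 4 := Nat.pow_le_pow_left h16.le 4
    omega
  · push Not at h16
    set n := G.card with hn
    set m := n / 16 with hm
    have hm1 : 1 ≤ m := by omega
    have hm2 : n ≤ 32 * m := by omega
    have hm3 : 16 * m ≤ n := by omega
    have ht : ∀ r ∈ Icc 1 m, r ^ 2 * n ≤ 2 * (r ^ 2 * (tau S (S.card / r + 1) G).card) := by
      intro r hr
      have hr := mem_Icc.1 hr
      have h2 := card_le_image_add_triples G 
        (fun p : ℝ × ℝ => (rk S p.1 / (S.card / r + 1), rk S p.2 / (S.card / r + 1)))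
      have h4 := mob_cells hmob r (S.card / r + 1) (grid_size S.card r hr.1 (by omega)).1
      have h5 : n ≤ 2 * (4 * r) + (tau S (S.card / r + 1) G).card :=
        h2.trans (Nat.add_le_add_right (Nat.mul_le_mul_left _ h4) _)
      have h6 : n ≤ 2 * (tau S (S.card / r + 1) G).card := by omega
      calc _ ≤ r ^ 2 * (2 * (tau S (S.card / r + 1) G).card) := Nat.mul_le_mul_left _ h6
        _ = _ := by ring
    have h7 := sum_le_sum ht
    rw [← sum_mul, ← mul_sum] at h7
    have h8 : ∑ r ∈ Icc 1 m, (r ^ 2 * (tau S (S.card / r + 1) G).card) ≤ 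
        ∑ r ∈ Icc 1 S.card, r ^ 2 * (tau S (S.card / r + 1) G).card := by
      apply sum_le_sum_of_subset
      apply Icc_subset_Icc_right
      omega
    have h9 := sum_sq_ge m
    calc n ^ 4 = n ^ 3 * n := by ring
      _ ≤ (32 * m) ^ 3 * n := Nat.mul_le_mul_right _ (Nat.pow_le_pow_left hm2 3)
      _ = 32768 * (m ^ 3 * n) := by ring
      _ ≤ 32768 * ((3 * ∑ r ∈ Icc 1 m, r ^ 2) * n) := by gcongr
      _ = 98304 * ((∑ r ∈ Icc 1 m, r ^ 2) * n) := by ring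
      _ ≤ 98304 * (2 * ∑ r ∈ Icc 1 S.card, r ^ 2 * (tau S (S.card / r + 1) G).card) := by
        apply Nat.mul_le_mul_left
        exact h7.trans (Nat.mul_le_mul_left _ h8)
      _ = _ := by ring

theorem sum_inv_sq_le (D : ℕ) : ∑ r ∈ Icc 1 D, ((r : ℝ) ^ 2)⁻¹ ≤ 2 := by
  have h := sum_Ioo_inv_sq_le (α := ℝ) 0 (D + 1)
  have : Ioo 0 (D + 1) = Icc 1 D := by ext; simp; omega
  rw [this] at h
  simpa using h

theorem mob_energy (S : Finset ℝ) : 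
    ((∑ G ∈ Mob S, G.card ^ 4 : ℕ) : ℝ) ≤ 6291456 * (S.card : ℝ) ^ 6 := by
  have h1 : ∑ G ∈ Mob S, G.card ^ 4 ≤ ∑ G ∈ Mob S,
      196608 * ∑ r ∈ Icc 1 S.card, r ^ 2 * (tau S (S.card / r + 1) G).card :=
    sum_le_sum (fun G hG => mob_pow4 hG)
  rw [← mul_sum, sum_comm] at h1
  have h2 : ((∑ G ∈ Mob S, G.card ^ 4 : ℕ) : ℝ) ≤ 196608 * ∑ r ∈ Icc 1 S.card,
    (r : ℝ) ^ 2 * ((∑ G ∈ Mob S, (tau S (S.card / r + 1) G).card : ℕ) : ℝ) := by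
    calc _ ≤ ((196608 * ∑ r ∈ Icc 1 S.card, ∑ G ∈ Mob S,
        r ^ 2 * (tau S (S.card / r + 1) G).card : ℕ) : ℝ) := by exact_mod_cast h1
      _ = _ := by push_cast; simp only [mul_sum]
  refine h2.trans ?_
  have h3 : ∀ r ∈ Icc 1 S.card, 
      (r : ℝ) ^ 2 * ((∑ G ∈ Mob S, (tau S (S.card / r + 1) G).card : ℕ) : ℝ) ≤
      16 * (S.card : ℝ) ^ 6 * ((r : ℝ) ^ 2)⁻¹ := by
    intro r hr
    have hr := mem_Icc.1 hr
    have h4 := mob_sum_tau S (S.card / r + 1) (Nat.le_add_left _ _)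
    have h5 := (grid_size S.card r hr.1 hr.2).2
    have h6 : r ^ 4 * ∑ G ∈ Mob S, (tau S (S.card / r + 1) G).card ≤ 16 * S.card ^ 6 := by
      calc _ ≤ r ^ 4 * ((((S.card / r + 1) * (S.card / r + 1)) * S.card) *
            (((S.card / r + 1) * (S.card / r + 1)) * S.card)) := Nat.mul_le_mul_left _ h4
        _ = (r * (S.card / r + 1)) ^ 4 * S.card ^ 2 := by ring
        _ ≤ (2 * S.card) ^ 4 * S.card ^ 2 := 
          Nat.mul_le_mul_right _ (Nat.pow_le_pow_left h5 4)
        _ = _ := by ring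
    have h7 : (r : ℝ) ^ 4 * ((∑ G ∈ Mob S, (tau S (S.card / r + 1) G).card : ℕ) : ℝ) ≤ 
      16 * (S.card : ℝ) ^ 6 := by exact_mod_cast h6
    have hr0 : (0 : ℝ) < (r : ℝ) ^ 2 := by
      have : (0 : ℝ) < r := by exact_mod_cast hr.1
      positivity
    rw [← div_eq_mul_inv, le_div_iff₀ hr0]
    linarith
  have h8 := sum_le_sum h3
  rw [← mul_sum] at h8
  have h9 := sum_inv_sq_le S.card
  have h10 : 16 * (S.card : ℝ) ^ 6 * ∑ r ∈ Icc 1 S.card, ((r : ℝ) ^ 2)⁻¹ ≤ 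
      16 * (S.card : ℝ) ^ 6 * 2 := by
    apply mul_le_mul_of_nonneg_left h9
    positivity
  linarith

end mobius

section crossratio

theorem card_sq_le_image_mul {ι γ : Type*} [DecidableEq γ] (G : Finset ι) (f : ι → γ) :
    G.card ^ 2 ≤ (G.image f).card * ((G ×ˢ G).filter (fun e => f e.1 = f e.2)).card := by
  have h1 : G.card = ∑ y ∈ G.image f, (G.filter (fun a => f a = y)).card :=
    card_eq_sum_card_image f G
  have h2 : ((G ×ˢ G).filter (fun e => f e.1 = f e.2)).card =
      ∑ y ∈ G.image f, (G.filter (fun a => f a = y)).card ^ 2 := by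
    rw [card_eq_sum_card_fiberwise (f := fun e => f e.1) (t := G.image f)]
    · apply sum_congr rfl
      intro y _
      rw [sq, ← card_product]
      congr 1
      ext ⟨a, b⟩
      simp only [mem_filter, mem_product]
      constructor
      · rintro ⟨⟨⟨h1, h2⟩, h3⟩, h4⟩
        exact ⟨⟨h1, h4⟩, h2, h3 ▸ h4⟩
      · rintro ⟨⟨h1, h2⟩, h3, h4⟩
        exact ⟨⟨⟨h1, h3⟩, h2.trans h4.symm⟩, h2⟩
    · intro e he
      simp only [coe_filter, Set.mem_ofPred_eq, mem_product] at he
      exact mem_coe.2 (mem_image_of_mem f he.1.1)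
  rw [h2]
  nth_rewrite 1 [h1]
  exact sq_sum_le_card_mul_sum_sq

noncomputable def crr (s1 s2 s3 s4 : ℝ) : ℝ := (s1 - s2) * (s3 - s4) / ((s2 - s3) * (s1 - s4))

theorem crr_mob {S : Finset ℝ} {s1 s2 s3 s4 t1 t2 t3 t4 : ℝ}
    (m1 : s1 ∈ S) (m2 : s2 ∈ S) (m3 : s3 ∈ S) (m4 : s4 ∈ S)
    (n1 : t1 ∈ S) (n2 : t2 ∈ S) (n3 : t3 ∈ S) (n4 : t4 ∈ S)
    (h12 : s1 ≠ s2) (h13 : s1 ≠ s3) (h14 : s1 ≠ s4) (h23 : s2 ≠ s3)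
    (k12 : t1 ≠ t2) (k13 : t1 ≠ t3) (k14 : t1 ≠ t4) (k23 : t2 ≠ t3)
    (h : crr s1 s2 s3 s4 = crr t1 t2 t3 t4) :
    ∃ G ∈ Mob S, (s1, t1) ∈ G ∧ (s2, t2) ∈ G ∧ (s3, t3) ∈ G ∧ (s4, t4) ∈ G := by
  have h' : (s1 - s2) * (s3 - s4) * ((t2 - t3) * (t1 - t4)) =
      (t1 - t2) * (t3 - t4) * ((s2 - s3) * (s1 - s4)) := by
    unfold crr at h
    rw [div_eq_div_iff] at h
    · exact h
    · exact mul_ne_zero (sub_ne_zero.2 h23) (sub_ne_zero.2 h14)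
    · exact mul_ne_zero (sub_ne_zero.2 k23) (sub_ne_zero.2 k14)
  obtain ⟨α, hα⟩ : ∃ α, α = (s1 - s2) * (t2 - t3) := ⟨_, rfl⟩
  obtain ⟨β, hβ⟩ : ∃ β, β = (t1 - t2) * (s2 - s3) := ⟨_, rfl⟩
  have hα0 : α ≠ 0 := hα ▸ mul_ne_zero (sub_ne_zero.2 h12) (sub_ne_zero.2 k23)
  have hβ0 : β ≠ 0 := hβ ▸ mul_ne_zero (sub_ne_zero.2 k12) (sub_ne_zero.2 h23)
  have hdet : (α * t1 - β * t3) * (β * s1 - α * s3) - 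
      (β * t3 * s1 - α * s3 * t1) * (α - β) ≠ 0 := by
    have : (α * t1 - β * t3) * (β * s1 - α * s3) - 
      (β * t3 * s1 - α * s3 * t1) * (α - β) = α * β * ((s1 - s3) * (t1 - t3)) := by ring
    rw [this]
    exact mul_ne_zero (mul_ne_zero hα0 hβ0)
      (mul_ne_zero (sub_ne_zero.2 h13) (sub_ne_zero.2 k13))
  set G := (S ×ˢ S).filter (fun p : ℝ × ℝ => p.2 * ((α - β) * p.1 + (β * s1 - α * s3)) =
    (α * t1 - β * t3) * p.1 + (β * t3 * s1 - α * s3 * t1)) with hG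
  have g1 : (s1, t1) ∈ G := mem_filter.2 ⟨mem_product.2 ⟨m1, n1⟩, by simp only; ring⟩
  have g3 : (s3, t3) ∈ G := mem_filter.2 ⟨mem_product.2 ⟨m3, n3⟩, by simp only; ring⟩
  have g2 : (s2, t2) ∈ G := mem_filter.2 ⟨mem_product.2 ⟨m2, n2⟩, by
    simp only; rw [hα, hβ]; ring⟩
  have g4 : (s4, t4) ∈ G := mem_filter.2 ⟨mem_product.2 ⟨m4, n4⟩, by
    simp only; rw [hα, hβ]; linear_combination h'⟩
  refine ⟨G, mem_filter.2 ⟨mem_powerset.2 (filter_subset _ _), ⟨_, _, _, _, hdet, hG⟩, ?_⟩,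
    g1, g2, g3, g4⟩
  have hsub : ({(s1, t1), (s2, t2), (s3, t3)} : Finset (ℝ × ℝ)) ⊆ G := by
    intro x hx
    simp only [mem_insert, mem_singleton] at hx
    rcases hx with rfl | rfl | rfl <;> assumption
  have hc : ({(s1, t1), (s2, t2), (s3, t3)} : Finset (ℝ × ℝ)).card = 3 := by
    rw [card_eq_three]
    refine ⟨_, _, _, ?_, ?_, ?_, rfl⟩
    · simp [h12]
    · simp [h13]
    · simp [h23]
  rw [← hc]
  exact card_le_card hsub

noncomputable def crE (R : Finset ℝ) (e : Fin 4 ↪ {x // x ∈ R}) : ℝ :=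
  crr (e 0) (e 1) (e 2) (e 3)

theorem emb_ne {R : Finset ℝ} (e : Fin 4 ↪ {x // x ∈ R}) {i j : Fin 4} (h : i ≠ j) :
    (e i : ℝ) ≠ (e j : ℝ) := fun hh => h (e.injective (Subtype.ext hh))

theorem cr_count (R : Finset ℝ) (hk : 6 ≤ R.card) :
    (R.card : ℝ) ^ 2 ≤ 1610612736 *
      (((univ : Finset (Fin 4 ↪ {x // x ∈ R})).image (crE R)).card : ℝ) := by
  have h1 := card_sq_le_image_mul (univ : Finset (Fin 4 ↪ {x // x ∈ R})) (crE R)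
  set X := (univ : Finset (Fin 4 ↪ {x // x ∈ R})).image (crE R) with hX
  have hE : (((univ : Finset (Fin 4 ↪ {x // x ∈ R})) ×ˢ
      (univ : Finset (Fin 4 ↪ {x // x ∈ R}))).filter
      (fun e => crE R e.1 = crE R e.2)).card ≤ ∑ G ∈ Mob R, G.card ^ 4 := by
    have : ((univ ×ˢ univ : Finset ((Fin 4 ↪ {x // x ∈ R}) × (Fin 4 ↪ {x // x ∈ R}))).filter
      (fun e => crE R e.1 = crE R e.2)).card ≤
        ((Mob R).biUnion (fun G => G ×ˢ G ×ˢ G ×ˢ G)).card := by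
      apply card_le_card_of_injOn (fun e =>
        (((e.1 0 : ℝ), (e.2 0 : ℝ)), ((e.1 1 : ℝ), (e.2 1 : ℝ)),
          ((e.1 2 : ℝ), (e.2 2 : ℝ)), ((e.1 3 : ℝ), (e.2 3 : ℝ))))
      · rintro ⟨e, e'⟩ he
        simp only [coe_filter, Set.mem_ofPred_eq] at he
        obtain ⟨G, hG, g1, g2, g3, g4⟩ := crr_mob (e 0).2 (e 1).2 (e 2).2 (e 3).2
          (e' 0).2 (e' 1).2 (e' 2).2 (e' 3).2
          (emb_ne e (by decide)) (emb_ne e (by decide)) (emb_ne e (by decide))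
          (emb_ne e (by decide))
          (emb_ne e' (by decide)) (emb_ne e' (by decide)) (emb_ne e' (by decide))
          (emb_ne e' (by decide)) he.2
        rw [mem_coe, mem_biUnion]
        refine ⟨G, hG, ?_⟩
        simp only [mem_product]
        exact ⟨g1, g2, g3, g4⟩
      · rintro ⟨e, e'⟩ _ ⟨f, f'⟩ _ h
        simp only [Prod.mk.injEq] at h
        obtain ⟨⟨a0, b0⟩, ⟨a1, b1⟩, ⟨a2, b2⟩, a3, b3⟩ := h
        refine Prod.ext ?_ ?_
        · apply DFunLike.ext
          intro i
          apply Subtype.ext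
          fin_cases i <;> assumption
        · apply DFunLike.ext
          intro i
          apply Subtype.ext
          fin_cases i <;> assumption
    refine this.trans (card_biUnion_le.trans (le_of_eq ?_))
    apply sum_congr rfl
    intro G _
    simp only [card_product]
    ring
  have hn : R.card ^ 4 ≤ 16 * (univ : Finset (Fin 4 ↪ {x // x ∈ R})).card := by
    rw [card_univ, Fintype.card_embedding_eq]
    simp only [Fintype.card_coe, Fintype.card_fin]
    have h2 := Nat.pow_sub_le_descFactorial R.card 4
    have h3 : R.card ≤ 2 * (R.card + 1 - 4) := by omega
    calc R.card ^ 4 ≤ (2 * (R.card + 1 - 4)) ^ 4 := Nat.pow_le_pow_left h3 4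
      _ = 16 * (R.card + 1 - 4) ^ 4 := by ring
      _ ≤ _ := Nat.mul_le_mul_left _ h2
  have hen := mob_energy R
  set n := (univ : Finset (Fin 4 ↪ {x // x ∈ R})).card with hndef
  have h4 : (n : ℝ) ^ 2 ≤ X.card * ((∑ G ∈ Mob R, G.card ^ 4 : ℕ) : ℝ) := by
    exact_mod_cast h1.trans (Nat.mul_le_mul_left _ hE)
  have h5 : (R.card : ℝ) ^ 4 ≤ 16 * n := by exact_mod_cast hn
  have hR : (0 : ℝ) < R.card := by
    have : 0 < R.card := by omega
    exact_mod_cast this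
  have h6 : (R.card : ℝ) ^ 6 * (R.card : ℝ) ^ 2 ≤
      (R.card : ℝ) ^ 6 * (1610612736 * X.card) := by
    calc (R.card : ℝ) ^ 6 * (R.card : ℝ) ^ 2 = ((R.card : ℝ) ^ 4) ^ 2 := by ring
      _ ≤ (16 * (n : ℝ)) ^ 2 := by gcongr
      _ = 256 * (n : ℝ) ^ 2 := by ring
      _ ≤ 256 * (X.card * (6291456 * (R.card : ℝ) ^ 6)) := by
        gcongr
        exact h4.trans (mul_le_mul_of_nonneg_left hen (by positivity))
      _ = _ := by ring
  exact le_of_mul_le_mul_left h6 (by positivity)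

end crossratio

section richness

noncomputable def fib (P : Finset (ℝ × ℝ)) (s : ℝ) : Finset (ℝ × ℝ) :=
  P.filter (fun p => p.1 / p.2 = s)

theorem omega_eq {p q : ℝ × ℝ} (hp : p.2 ≠ 0) (hq : q.2 ≠ 0) :
    omegaForm p q = p.2 * q.2 * (p.1 / p.2 - q.1 / q.2) := by
  unfold omegaForm
  field_simp

theorem omega_fib {P : Finset (ℝ × ℝ)} (h2 : ∀ p ∈ P, p.2 ≠ 0) {s t : ℝ} {p q : ℝ × ℝ}
    (hp : p ∈ fib P s) (hq : q ∈ fib P t) : omegaForm p q = p.2 * q.2 * (s - t) := by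
  have hp := mem_filter.1 hp
  have hq := mem_filter.1 hq
  rw [omega_eq (h2 p hp.1) (h2 q hq.1), hp.2, hq.2]

theorem fib_ne {P : Finset (ℝ × ℝ)} (h2 : ∀ p ∈ P, p.2 ≠ 0) {s : ℝ} {p : ℝ × ℝ}
    (hp : p ∈ fib P s) : p.2 ≠ 0 := h2 p (mem_filter.1 hp).1

theorem fib_ext {P : Finset (ℝ × ℝ)} (h2 : ∀ p ∈ P, p.2 ≠ 0) {s : ℝ} {p q : ℝ × ℝ}
    (hp : p ∈ fib P s) (hq : q ∈ fib P s) (h : p.2 = q.2) : p = q := by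
  have h1 := fib_ne h2 hp
  have h3 := fib_ne h2 hq
  have hp := (mem_filter.1 hp).2
  have hq := (mem_filter.1 hq).2
  rw [div_eq_iff h1] at hp
  rw [div_eq_iff h3] at hq
  exact Prod.ext (by rw [hp, hq, h]) h

theorem omega_mem {P : Finset (ℝ × ℝ)} (h2 : ∀ p ∈ P, p.2 ≠ 0) {s t : ℝ} {p q : ℝ × ℝ}
    (hst : s ≠ t) (hp : p ∈ fib P s) (hq : q ∈ fib P t) : omegaForm p q ∈ Tset P := by
  refine mem_erase.2 ⟨?_, ?_⟩
  · rw [omega_fib h2 hp hq]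
    exact mul_ne_zero (mul_ne_zero (fib_ne h2 hp) (fib_ne h2 hq)) (sub_ne_zero.2 hst)
  · exact mem_image.2 ⟨(p, q), mem_product.2 ⟨(mem_filter.1 hp).1, (mem_filter.1 hq).1⟩, rfl⟩

theorem omega_inj_left {P : Finset (ℝ × ℝ)} (h2 : ∀ p ∈ P, p.2 ≠ 0) {s t : ℝ} {p p' q : ℝ × ℝ}
    (hst : s ≠ t) (hp : p ∈ fib P s) (hp' : p' ∈ fib P s) (hq : q ∈ fib P t)
    (h : omegaForm p q = omegaForm p' q) : p = p' := by
  apply fib_ext h2 hp hp'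
  rw [omega_fib h2 hp hq, omega_fib h2 hp' hq] at h
  have h3 := mul_right_cancel₀ (sub_ne_zero.2 hst) h
  exact mul_right_cancel₀ (fib_ne h2 hq) h3

theorem omega_inj_right {P : Finset (ℝ × ℝ)} (h2 : ∀ p ∈ P, p.2 ≠ 0) {s t : ℝ} {p p' q : ℝ × ℝ}
    (hst : s ≠ t) (hp : p ∈ fib P s) (hp' : p' ∈ fib P s) (hq : q ∈ fib P t)
    (h : omegaForm q p = omegaForm q p') : p = p' := by
  apply omega_inj_left h2 hst hp hp' hq
  unfold omegaForm at h ⊢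
  linarith

theorem rich_count {ι : Type*} (B : Finset ι) (f : ι → ℝ) (m : ℕ) :
    m * ((B.image f).filter (fun y => m ≤ (B.filter (fun b => f b = y)).card)).card ≤ B.card := by
  rw [card_eq_sum_card_image f B, mul_comm, ← smul_eq_mul, ← sum_const]
  refine le_trans (sum_le_sum (fun y hy => (mem_filter.1 hy).2)) ?_
  exact sum_le_sum_of_subset (filter_subset _ _)

theorem rich_inc (P : Finset (ℝ × ℝ)) (h2 : ∀ p ∈ P, p.2 ≠ 0) (R : Finset ℝ) (n : ℕ) (hn : 1 ≤ n)
    (hR : ∀ s ∈ R, n ≤ (fib P s).card) : ∃ L : ℕ, n ^ 3 * L ≤ (Tset P).card ^ 5 ∧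
    ∀ r : ℕ, 1 ≤ r → r ≤ (Tset P).card →
      r ^ 2 * (((univ : Finset (Fin 4 ↪ {x // x ∈ R})).image (crE R)).card * n ^ 2) ≤
        2 * r ^ 3 * L + 4 * (Tset P).card ^ 4 := by
  set T := Tset P with hT
  set X := (univ : Finset (Fin 4 ↪ {x // x ∈ R})).image (crE R) with hX
  set f : ℝ × ℝ → ℝ := fun a => a.1 / a.2 with hf
  set g : ℝ × ℝ × ℝ → ℝ := fun a => a.1 * a.2.1 / a.2.2 with hg
  set M := ((T ×ˢ T).image f).filter (fun y => n ≤ ((T ×ˢ T).filter (fun b => f b = y)).card)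
    with hM
  set Q := ((T ×ˢ T ×ˢ T).image g).filter
    (fun y => n ^ 2 ≤ ((T ×ˢ T ×ˢ T).filter (fun b => g b = y)).card) with hQ
  have hMc := rich_count (T ×ˢ T) f n
  have hQc := rich_count (T ×ˢ T ×ˢ T) g (n ^ 2)
  rw [← hM, card_product] at hMc
  rw [← hQ, card_product, card_product] at hQc
  refine ⟨(M ×ˢ Q).card, ?_, ?_⟩
  · rw [card_product]
    calc n ^ 3 * (M.card * Q.card) = (n * M.card) * (n ^ 2 * Q.card) := by ring
      _ ≤ _ := Nat.mul_le_mul hMc hQc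
      _ = _ := by ring
  intro r hr1 hr2
  refine le_trans (Nat.mul_le_mul_left _ ?_) (grid_inc T (M ×ˢ Q) r hr1 hr2)
  -- choice of representatives
  have hex : ∀ x ∈ X, ∃ e : Fin 4 ↪ {x // x ∈ R}, crE R e = x := by
    intro x hx
    obtain ⟨e, _, he⟩ := mem_image.1 hx
    exact ⟨e, he⟩
  have hfn : ∀ s ∈ R, ∃ p, p ∈ fib P s := by
    intro s hs
    have h1 := hR s hs
    have : (fib P s).Nonempty := card_pos.1 (by omega)
    exact this
  choose c hc using hfn
  choose E hE using hex
  set W := X.attach.sigma (fun x => fib P (E x.1 x.2 0) ×ˢ fib P (E x.1 x.2 2)) with hW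
  have hWc : X.card * n ^ 2 ≤ W.card := by
    rw [hW, card_sigma, ← card_attach, ← smul_eq_mul, ← sum_const]
    apply sum_le_sum
    intro x _
    rw [card_product, sq]
    exact Nat.mul_le_mul (hR _ (E x.1 x.2 0).2) (hR _ (E x.1 x.2 2).2)
  refine hWc.trans ?_
  -- the map
  apply card_le_card_of_injOn (fun w =>
    ((omegaForm w.2.1 (c _ (E w.1.1 w.1.2 1).2), omegaForm (c _ (E w.1.1 w.1.2 1).2) w.2.2),
      (omegaForm w.2.2 (c _ (E w.1.1 w.1.2 3).2) / omegaForm w.2.1 (c _ (E w.1.1 w.1.2 3).2),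
      omegaForm w.2.1 w.2.2 * omegaForm (c _ (E w.1.1 w.1.2 1).2) (c _ (E w.1.1 w.1.2 3).2) /
        omegaForm w.2.1 (c _ (E w.1.1 w.1.2 3).2))))
  · rintro ⟨⟨x, hx⟩, ⟨p1, p3⟩⟩ hw
    simp only [hW, coe_sigma, Set.mem_sigma_iff, mem_coe, mem_product] at hw
    obtain ⟨-, hp1, hp3⟩ := hw
    simp only
    have hp2 := hc _ (E x hx 1).2
    have hp4 := hc _ (E x hx 3).2
    generalize c _ (E x hx 1).2 = p2 at *
    generalize c _ (E x hx 3).2 = p4 at *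
    have n01 := emb_ne (E x hx) (show (0 : Fin 4) ≠ 1 by decide)
    have n02 := emb_ne (E x hx) (show (0 : Fin 4) ≠ 2 by decide)
    have n03 := emb_ne (E x hx) (show (0 : Fin 4) ≠ 3 by decide)
    have n12 := emb_ne (E x hx) (show (1 : Fin 4) ≠ 2 by decide)
    have n13 := emb_ne (E x hx) (show (1 : Fin 4) ≠ 3 by decide)
    have n23 := emb_ne (E x hx) (show (2 : Fin 4) ≠ 3 by decide)
    have hR0 := hR _ (E x hx 0).2
    have hR3 := hR _ (E x hx 3).2
    generalize ((E x hx 0 : {x // x ∈ R}) : ℝ) = s1 at *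
    generalize ((E x hx 1 : {x // x ∈ R}) : ℝ) = s2 at *
    generalize ((E x hx 2 : {x // x ∈ R}) : ℝ) = s3 at *
    generalize ((E x hx 3 : {x // x ∈ R}) : ℝ) = s4 at *
    have t12 := omega_mem h2 n01 hp1 hp2
    have t13 := omega_mem h2 n02 hp1 hp3
    have t14 := omega_mem h2 n03 hp1 hp4
    have t23 := omega_mem h2 n12 hp2 hp3
    have t24 := omega_mem h2 n13 hp2 hp4
    have t34 := omega_mem h2 n23 hp3 hp4
    have z14 : omegaForm p1 p4 ≠ 0 := (mem_erase.1 t14).1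
    simp only [coe_filter, Set.mem_ofPred_eq, mem_product]
    refine ⟨⟨⟨t12, t23⟩, ?_, ?_⟩, ?_⟩
    · refine mem_filter.2 ⟨mem_image.2 ⟨(omegaForm p3 p4, omegaForm p1 p4),
        mem_product.2 ⟨t34, t14⟩, rfl⟩, ?_⟩
      refine hR3.trans ?_
      apply card_le_card_of_injOn (fun p => (omegaForm p3 p, omegaForm p1 p))
      · intro p hp
        have hp : p ∈ fib P s4 := hp
        simp only [coe_filter, Set.mem_ofPred_eq, mem_product, hf]
        refine ⟨⟨omega_mem h2 n23 hp3 hp, omega_mem h2 n03 hp1 hp⟩, ?_⟩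
        rw [omega_fib h2 hp3 hp, omega_fib h2 hp1 hp, omega_fib h2 hp3 hp4, omega_fib h2 hp1 hp4]
        have := fib_ne h2 hp
        have := fib_ne h2 hp1
        have := fib_ne h2 hp4
        have := sub_ne_zero.2 n03
        field_simp
      · intro p hp q hq h
        exact omega_inj_right h2 n23.symm hp hq hp3 (Prod.mk.inj h).1
    · refine mem_filter.2 ⟨mem_image.2 ⟨(omegaForm p1 p3, omegaForm p2 p4, omegaForm p1 p4),
        mem_product.2 ⟨t13, mem_product.2 ⟨t24, t14⟩⟩, rfl⟩, ?_⟩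
      have h9 : n ^ 2 ≤ (fib P s1 ×ˢ fib P s4).card := by
        rw [card_product, sq]; exact Nat.mul_le_mul hR0 hR3
      refine h9.trans ?_
      apply card_le_card_of_injOn
        (fun p => (omegaForm p.1 p3, omegaForm p2 p.2, omegaForm p.1 p.2))
      · rintro ⟨p, p'⟩ hp
        simp only [coe_product, Set.mem_prod, mem_coe] at hp
        obtain ⟨hp, hp'⟩ := hp
        simp only [coe_filter, Set.mem_ofPred_eq, mem_product, hg]
        refine ⟨⟨omega_mem h2 n02 hp hp3, omega_mem h2 n13 hp2 hp', omega_mem h2 n03 hp hp'⟩, ?_⟩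
        rw [omega_fib h2 hp hp3, omega_fib h2 hp2 hp', omega_fib h2 hp hp', omega_fib h2 hp1 hp3,
          omega_fib h2 hp2 hp4, omega_fib h2 hp1 hp4]
        have := fib_ne h2 hp
        have := fib_ne h2 hp'
        have := fib_ne h2 hp1
        have := fib_ne h2 hp4
        have := sub_ne_zero.2 n03
        field_simp
      · rintro ⟨p, p'⟩ hp ⟨q, q'⟩ hq h
        simp only [coe_product, Set.mem_prod, mem_coe] at hp hq
        simp only [Prod.mk.injEq] at h
        have e1 := omega_inj_left h2 n02 hp.1 hq.1 hp3 h.1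
        have e2 := omega_inj_right h2 n13.symm hp.2 hq.2 hp2 h.2.1
        rw [e1, e2]
    · field_simp
      unfold omegaForm
      ring
  · rintro ⟨⟨x, hx⟩, ⟨p1, p3⟩⟩ hw ⟨⟨x', hx'⟩, ⟨p1', p3'⟩⟩ hw' h
    simp only [hW, coe_sigma, Set.mem_sigma_iff, mem_coe, mem_product] at hw hw'
    obtain ⟨-, hp1, hp3⟩ := hw
    obtain ⟨-, hp1', hp3'⟩ := hw'
    simp only [Prod.mk.injEq] at h
    obtain ⟨⟨e1, e2⟩, e3, e4⟩ := h
    have hcr : ∀ (x : ℝ) (hx : x ∈ X) (p1 p3 : ℝ × ℝ), p1 ∈ fib P (E x hx 0) →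
        p3 ∈ fib P (E x hx 2) →
        x = omegaForm p1 (c _ (E x hx 1).2) * (omegaForm p3 (c _ (E x hx 3).2) /
          omegaForm p1 (c _ (E x hx 3).2)) / omegaForm (c _ (E x hx 1).2) p3 := by
      intro x hx p1 p3 hp1 hp3
      have hp2 := hc _ (E x hx 1).2
      have hp4 := hc _ (E x hx 3).2
      have n03 := emb_ne (E x hx) (show (0 : Fin 4) ≠ 3 by decide)
      have n12 := emb_ne (E x hx) (show (1 : Fin 4) ≠ 2 by decide)
      rw [omega_fib h2 hp1 hp2, omega_fib h2 hp3 hp4, omega_fib h2 hp1 hp4, omega_fib h2 hp2 hp3]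
      nth_rewrite 1 [← hE x hx]
      unfold crE crr
      have := fib_ne h2 hp1
      have := fib_ne h2 hp2
      have := fib_ne h2 hp3
      have := fib_ne h2 hp4
      have := sub_ne_zero.2 n03
      have := sub_ne_zero.2 n12
      field_simp
    have hxx : x = x' := by
      rw [hcr x hx p1 p3 hp1 hp3, hcr x' hx' p1' p3' hp1' hp3', e1, e2, e3]
    subst hxx
    have hp2 := hc _ (E x hx 1).2
    have n01 := emb_ne (E x hx) (show (0 : Fin 4) ≠ 1 by decide)
    have n12 := emb_ne (E x hx) (show (1 : Fin 4) ≠ 2 by decide)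
    have f1 := omega_inj_left h2 n01 hp1 hp1' hp2 e1
    have f2 := omega_inj_right h2 n12.symm hp3 hp3' hp2 e2
    rw [f1, f2]

end richness

section final

theorem fib_card_le {P : Finset (ℝ × ℝ)} (h2 : ∀ p ∈ P, p.2 ≠ 0)
    (hnc : ∀ s : ℝ, ∃ q ∈ P, q.1 / q.2 ≠ s) (s : ℝ) : (fib P s).card ≤ (Tset P).card := by
  obtain ⟨q, hq, hqs⟩ := hnc s
  have hq' : q ∈ fib P (q.1 / q.2) := mem_filter.2 ⟨hq, rfl⟩
  apply card_le_card_of_injOn (fun p => omegaForm p q)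
  · intro p hp
    exact omega_mem h2 hqs.symm hp hq'
  · intro p hp p' hp' h
    exact omega_inj_left h2 hqs.symm hp hp' hq' h

theorem T_pos {P : Finset (ℝ × ℝ)} (h2 : ∀ p ∈ P, p.2 ≠ 0)
    (hnc : ∀ s : ℝ, ∃ q ∈ P, q.1 / q.2 ≠ s) : 1 ≤ (Tset P).card := by
  obtain ⟨p, hp, _⟩ := hnc 0
  obtain ⟨q, hq, hqs⟩ := hnc (p.1 / p.2)
  apply card_pos.2
  exact ⟨_, omega_mem h2 hqs (mem_filter.2 ⟨hq, rfl⟩) (mem_filter.2 ⟨hp, rfl⟩)⟩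

theorem ND_le {P : Finset (ℝ × ℝ)} (h2 : ∀ p ∈ P, p.2 ≠ 0)
    (hnc : ∀ s : ℝ, ∃ q ∈ P, q.1 / q.2 ≠ s) :
    P.card * (P.image (fun p => p.1 / p.2)).card ≤ 1024 * (Tset P).card ^ 2 := by
  have hT := T_pos h2 hnc
  have h := few_dirs P (P.image (fun p => p.1 / p.2)) (2 * (Tset P).card) ?_ card_image_le
    (by omega) ?_
  · calc _ ≤ _ := h
      _ = _ := by ring
  · obtain ⟨p, hp, _⟩ := hnc 0
    obtain ⟨q, hq, hqs⟩ := hnc (p.1 / p.2)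
    apply one_lt_card.2
    exact ⟨_, mem_image.2 ⟨q, hq, rfl⟩, _, mem_image.2 ⟨p, hp, rfl⟩, hqs⟩
  · intro s hs
    obtain ⟨w, hw, hws⟩ := mem_image.1 hs
    have hw2 := h2 w hw
    rw [div_eq_iff hw2] at hws
    have h1 : (P.image (fun p : ℝ × ℝ => p.1 - s * p.2)).card ≤ (insert 0 (Tset P)).card := by
      apply card_le_card_of_injOn (fun x => -w.2 * x)
      · intro x hx
        obtain ⟨p, hp, rfl⟩ := mem_image.1 (mem_coe.1 hx)
        have he : -w.2 * (p.1 - s * p.2) = omegaForm w p := by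
          unfold omegaForm
          rw [hws]; ring
        simp only [he]
        by_cases h0 : omegaForm w p = 0
        · rw [h0]; simp
        · apply mem_coe.2
          apply mem_insert_of_mem
          exact mem_erase.2 ⟨h0, mem_image.2 ⟨(w, p), mem_product.2 ⟨hw, hp⟩, rfl⟩⟩
      · intro x _ y _ h
        exact mul_left_cancel₀ (neg_ne_zero.2 hw2) h
    have h3 := card_insert_le 0 (Tset P)
    omega

theorem rich_mul_le (P : Finset (ℝ × ℝ)) (R : Finset ℝ) (n : ℕ)
    (hR : ∀ s ∈ R, n ≤ (fib P s).card) : R.card * n ≤ P.card := by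
  rw [← smul_eq_mul, ← sum_const]
  refine (sum_le_sum hR).trans ?_
  apply sum_card_le_of_disj
  · intro s _; exact filter_subset _ _
  · intro s _ t _ x hx hx'
    rw [← (mem_filter.1 hx).2, ← (mem_filter.1 hx').2]

theorem rich_arith (K k n T N D L X : ℝ) (hK : K = 1610612736) (hk : 0 ≤ k) (hn : 1 ≤ n)
    (hT : 1 ≤ T) (hnT : n ≤ T) (hkn : k * n ≤ N) (hkD : k ≤ D) (hD : 1 ≤ D)
    (hND : N * D ≤ 1024 * T ^ 2) (hN : 0 ≤ N) (hL : n ^ 3 * L ≤ T ^ 5) (hX : k ^ 2 ≤ K * X)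
    (h : ∀ r : ℕ, 1 ≤ r → (r : ℝ) ≤ T → (r : ℝ) ^ 2 * (X * n ^ 2) ≤ 2 * (r : ℝ) ^ 3 * L + 4 * T ^ 4) :
    n ^ 6 * k ^ 3 ≤ K ^ 2 * T ^ 7 := by
  have hK0 : 0 < K := by rw [hK]; norm_num
  have hT0 : 0 < T := by linarith
  have hn0 : 0 < n := by linarith
  obtain ⟨z, hz⟩ : ∃ z, z = k ^ 2 * n ^ 5 / (4 * K * T ^ 5) := ⟨_, rfl⟩
  have hz' : 4 * K * T ^ 5 * z = k ^ 2 * n ^ 5 := by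
    rw [hz]; field_simp
  have hz0 : 0 ≤ z := by rw [hz]; positivity
  by_cases hz1 : z < 1
  · have h1 : k ^ 2 * n ^ 5 ≤ 4 * K * T ^ 5 := by
      rw [← hz']
      have : 0 < 4 * K * T ^ 5 := by positivity
      nlinarith
    have h2 : k * n ≤ 1024 * T ^ 2 := by nlinarith
    calc n ^ 6 * k ^ 3 = (k ^ 2 * n ^ 5) * (k * n) := by ring
      _ ≤ (4 * K * T ^ 5) * (1024 * T ^ 2) := by gcongr
      _ = (4096 * K) * T ^ 7 := by ring
      _ ≤ K ^ 2 * T ^ 7 := by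
        gcongr
        rw [hK]; norm_num
  · push Not at hz1
    have hzT : z ≤ T := by
      have h1 : k ^ 2 * n ^ 5 ≤ 1024 * T ^ 6 := by
        calc k ^ 2 * n ^ 5 = (k * n * k) * n ^ 4 := by ring
          _ ≤ (N * D) * T ^ 4 := by gcongr
          _ ≤ (1024 * T ^ 2) * T ^ 4 := by gcongr
          _ = _ := by ring
      rw [hz, div_le_iff₀ (by positivity)]
      calc _ ≤ _ := h1
        _ ≤ (4 * K) * T ^ 6 := by gcongr; rw [hK]; norm_num
        _ = _ := by ring
    set r := ⌊z⌋₊ with hr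
    have hr1 : 1 ≤ r := Nat.le_floor (by simpa using hz1)
    have hrz : (r : ℝ) ≤ z := Nat.floor_le hz0
    have hzr : z < r + 1 := Nat.lt_floor_add_one z
    have hr1' : (1 : ℝ) ≤ r := by exact_mod_cast hr1
    have h1 := h r hr1 (hrz.trans hzT)
    generalize (r : ℝ) = ρ at *
    have hρ : 0 < ρ := by linarith
    -- multiply
    have h2 : ρ ^ 2 * (k ^ 2 * n ^ 5) ≤ K * (2 * ρ ^ 3 * T ^ 5 + 4 * n ^ 3 * T ^ 4) := by
      calc ρ ^ 2 * (k ^ 2 * n ^ 5) ≤ ρ ^ 2 * ((K * X) * n ^ 5) := by gcongr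
        _ = K * n ^ 3 * (ρ ^ 2 * (X * n ^ 2)) := by ring
        _ ≤ K * n ^ 3 * (2 * ρ ^ 3 * L + 4 * T ^ 4) := by gcongr
        _ = K * (2 * ρ ^ 3 * (n ^ 3 * L) + 4 * n ^ 3 * T ^ 4) := by ring
        _ ≤ _ := by gcongr
    rw [← hz'] at h2
    have h3 : ρ ^ 2 * z * T ≤ 2 * n ^ 3 := by
      have h4 : 2 * ρ ^ 3 * T ^ 5 ≤ 2 * (ρ ^ 2 * z) * T ^ 5 := by
        have : ρ ^ 3 ≤ ρ ^ 2 * z := by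
          calc ρ ^ 3 = ρ ^ 2 * ρ := by ring
            _ ≤ _ := by gcongr
        gcongr
      have h5 : K * (ρ ^ 2 * (4 * T ^ 5 * z)) ≤ K * (2 * (ρ ^ 2 * z) * T ^ 5 + 4 * n ^ 3 * T ^ 4) := by
        calc _ = ρ ^ 2 * (4 * K * T ^ 5 * z) := by ring
          _ ≤ _ := h2
          _ ≤ _ := by gcongr
      have h6 := le_of_mul_le_mul_left h5 hK0
      have h7 : (2 * T ^ 4) * (ρ ^ 2 * z * T) ≤ (2 * T ^ 4) * (2 * n ^ 3) := by nlinarith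
      exact le_of_mul_le_mul_left h7 (by positivity)
    have h4 : z ^ 3 * T ≤ 8 * n ^ 3 := by
      have h5 : z ^ 2 ≤ 4 * ρ ^ 2 := by nlinarith
      calc z ^ 3 * T = z ^ 2 * (z * T) := by ring
        _ ≤ (4 * ρ ^ 2) * (z * T) := by gcongr
        _ = 4 * (ρ ^ 2 * z * T) := by ring
        _ ≤ 4 * (2 * n ^ 3) := by gcongr
        _ = _ := by ring
    have h5 : n ^ 3 * (n ^ 6 * k ^ 3) ^ 2 ≤ n ^ 3 * (K ^ 2 * T ^ 7) ^ 2 := by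
      calc n ^ 3 * (n ^ 6 * k ^ 3) ^ 2 = (k ^ 2 * n ^ 5) ^ 3 := by ring
        _ = (4 * K * T ^ 5 * z) ^ 3 := by rw [hz']
        _ = 64 * K ^ 3 * T ^ 14 * (z ^ 3 * T) := by ring
        _ ≤ 64 * K ^ 3 * T ^ 14 * (8 * n ^ 3) := by gcongr
        _ = n ^ 3 * (512 * (K ^ 3 * T ^ 14)) := by ring
        _ ≤ n ^ 3 * (K * (K ^ 3 * T ^ 14)) := by gcongr; rw [hK]; norm_num
        _ = _ := by ring
    have h6 := le_of_mul_le_mul_left h5 (by positivity)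
    exact le_of_sq_le_sq h6 (by positivity)

theorem rich_bound {P : Finset (ℝ × ℝ)} (h2 : ∀ p ∈ P, p.2 ≠ 0)
    (hnc : ∀ s : ℝ, ∃ q ∈ P, q.1 / q.2 ≠ s) (n : ℕ) (hn : 1 ≤ n) :
    (n : ℝ) ^ 6 * ((((P.image (fun p => p.1 / p.2)).filter
      (fun s => n ≤ (fib P s).card)).card : ℕ) : ℝ) ^ 3 ≤
      (1610612736 : ℝ) ^ 2 * ((Tset P).card : ℝ) ^ 7 := by
  set S := P.image (fun p => p.1 / p.2) with hS
  set R := S.filter (fun s => n ≤ (fib P s).card) with hR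
  have hRn : ∀ s ∈ R, n ≤ (fib P s).card := fun s hs => (mem_filter.1 hs).2
  have hT := T_pos h2 hnc
  have hT' : (1 : ℝ) ≤ (Tset P).card := by exact_mod_cast hT
  rcases R.eq_empty_or_nonempty with hRe | ⟨s0, hs0⟩
  · rw [hRe]; simp
  have hnT : n ≤ (Tset P).card := (hRn s0 hs0).trans (fib_card_le h2 hnc s0)
  have hnT' : (n : ℝ) ≤ (Tset P).card := by exact_mod_cast hnT
  by_cases hk : R.card < 6
  · have hk' : (R.card : ℝ) ≤ 6 := by exact_mod_cast hk.le
    calc (n : ℝ) ^ 6 * (R.card : ℝ) ^ 3 ≤ ((Tset P).card : ℝ) ^ 6 * 6 ^ 3 := by gcongr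
      _ ≤ ((Tset P).card : ℝ) ^ 7 * 6 ^ 3 := by
        gcongr
        norm_num
      _ ≤ _ := by
        rw [mul_comm]
        gcongr
        norm_num
  push Not at hk
  have hX := cr_count R hk
  obtain ⟨L, hL, hr⟩ := rich_inc P h2 R n hn hRn
  have hND := ND_le h2 hnc
  have hkn := rich_mul_le P R n hRn
  have hkD : R.card ≤ S.card := card_le_card (filter_subset _ _)
  have hD : 1 ≤ S.card := by omega
  refine rich_arith 1610612736 R.card n (Tset P).card P.card S.card L
    (((univ : Finset (Fin 4 ↪ {x // x ∈ R})).image (crE R)).card) rfl (by positivity)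
    (by exact_mod_cast hn) hT' hnT' (by exact_mod_cast hkn) (by exact_mod_cast hkD)
    (by exact_mod_cast hD) (by exact_mod_cast hND) (by positivity) (by exact_mod_cast hL) hX ?_
  intro r hr1 hrT
  have := hr r hr1 (by exact_mod_cast hrT)
  exact_mod_cast this

theorem main_bound {P : Finset (ℝ × ℝ)} (h2 : ∀ p ∈ P, p.2 ≠ 0)
    (hnc : ∀ s : ℝ, ∃ q ∈ P, q.1 / q.2 ≠ s) :
    (P.card : ℝ) ^ 9 ≤ 32768 ^ 3 * 1610612736 ^ 2 * ((Tset P).card : ℝ) ^ 13 := by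
  set S := P.image (fun p => p.1 / p.2) with hS
  set T : ℝ := ((Tset P).card : ℝ) with hTd
  have hT : (1 : ℝ) ≤ T := by rw [hTd]; exact_mod_cast T_pos h2 hnc
  have hND : (P.card : ℝ) * S.card ≤ 1024 * T ^ 2 := by
    rw [hTd]; exact_mod_cast ND_le h2 hnc
  have hPne : P.Nonempty := by
    obtain ⟨p, hp, _⟩ := hnc 0
    exact ⟨p, hp⟩
  have hN0 : (0 : ℝ) < P.card := by exact_mod_cast card_pos.2 hPne
  have hD0 : (0 : ℝ) < S.card := by exact_mod_cast card_pos.2 (hPne.image _)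
  set B : ℝ := (1610612736 ^ 2 * T ^ 7) ^ ((1 : ℝ) / 3) with hB
  have hB0 : 0 < B := by rw [hB]; positivity
  have hB3 : B ^ 3 = 1610612736 ^ 2 * T ^ 7 := by
    rw [hB, ← Real.rpow_natCast, ← Real.rpow_mul (by positivity)]
    norm_num
  have hDn : ∀ n : ℕ, 1 ≤ n →
      (((S.filter (fun s => n ≤ (fib P s).card)).card : ℕ) : ℝ) ≤ B * ((n : ℝ) ^ 2)⁻¹ := by
    intro n hn
    have h := rich_bound h2 hnc n hn
    rw [← hB3] at h
    have hn0 : (0 : ℝ) < (n : ℝ) ^ 2 := by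
      have : (0 : ℝ) < n := by exact_mod_cast hn
      positivity
    rw [← div_eq_mul_inv, le_div_iff₀ hn0]
    apply le_of_pow_le_pow_left₀ (n := 3) (by norm_num) hB0.le
    calc _ = (n : ℝ) ^ 6 * (((S.filter (fun s => n ≤ (fib P s).card)).card : ℕ) : ℝ) ^ 3 := by ring
      _ ≤ _ := h
  set n0 : ℝ := P.card / (2 * S.card) with hn0
  have hn0pos : 0 < n0 := by positivity
  set m := ⌊n0 / 2⌋₊ with hm
  have hm1 : (m : ℝ) ≤ n0 / 2 := Nat.floor_le (by positivity)
  have hm2 : n0 / 2 < m + 1 := Nat.lt_floor_add_one _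
  have hf : ∀ s ∈ S, ((fib P s).card : ℝ) ≤ n0 + 2 * 
      ∑ n ∈ Ioo m (P.card + 1), (if n ≤ (fib P s).card then (1 : ℝ) else 0) := by
    intro s _
    have hsum : ∑ n ∈ Ioo m (P.card + 1), (if n ≤ (fib P s).card then (1 : ℝ) else 0) =
        ((fib P s).card - m : ℕ) := by
      rw [← sum_filter, sum_const, nsmul_eq_mul, mul_one]
      congr 1
      have : (Ioo m (P.card + 1)).filter (fun n => n ≤ (fib P s).card) = Ioc m (fib P s).card := by
        have hle : (fib P s).card ≤ P.card := card_le_card (filter_subset _ _)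
        ext n
        simp only [mem_filter, mem_Ioo, mem_Ioc]
        omega
      rw [this, Nat.card_Ioc]
    rw [hsum]
    have h5 : ((fib P s).card : ℝ) ≤ ((fib P s).card - m : ℕ) + m := by
      have : (fib P s).card ≤ ((fib P s).card - m) + m := by omega
      exact_mod_cast this
    have h6 : (0 : ℝ) ≤ ((fib P s).card - m : ℕ) := by positivity
    linarith
  have hNsum : (P.card : ℝ) = ∑ s ∈ S, ((fib P s).card : ℝ) := by
    have := card_eq_sum_card_image (fun p : ℝ × ℝ => p.1 / p.2) P
    exact_mod_cast this
  have h3 := sum_le_sum hf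
  rw [← hNsum, sum_add_distrib, sum_const, nsmul_eq_mul, ← mul_sum, sum_comm] at h3
  have h4 : ∑ n ∈ Ioo m (P.card + 1), ∑ s ∈ S, (if n ≤ (fib P s).card then (1 : ℝ) else 0) ≤
      B * (2 / (m + 1)) := by
    calc _ ≤ ∑ n ∈ Ioo m (P.card + 1), B * ((n : ℝ) ^ 2)⁻¹ := by
          apply sum_le_sum
          intro n hn
          have hn := mem_Ioo.1 hn
          rw [← sum_filter, sum_const, nsmul_eq_mul, mul_one]
          exact hDn n (by omega)
      _ = B * ∑ n ∈ Ioo m (P.card + 1), ((n : ℝ) ^ 2)⁻¹ := by rw [mul_sum]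
      _ ≤ _ := by
        gcongr
        exact sum_Ioo_inv_sq_le m (P.card + 1)
  have h5 : (2 : ℝ) / (m + 1) ≤ 2 / (n0 / 2) := by gcongr
  have h6 : (S.card : ℝ) * n0 = P.card / 2 := by rw [hn0]; field_simp
  have h7 : (P.card : ℝ) / 2 ≤ 2 * (B * (2 / (n0 / 2))) := by
    have := mul_le_mul_of_nonneg_left h5 hB0.le
    linarith
  have h8 : 2 * (B * (2 / (n0 / 2))) = 16 * B * S.card / P.card := by
    rw [hn0]; field_simp; norm_num
  rw [h8, le_div_iff₀ hN0] at h7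
  have h9 : (P.card : ℝ) ^ 3 ≤ 32768 * B * T ^ 2 := by
    calc (P.card : ℝ) ^ 3 = 2 * ((P.card : ℝ) / 2 * P.card) * P.card := by ring
      _ ≤ 2 * (16 * B * S.card) * P.card := by gcongr
      _ = 32 * B * (P.card * S.card) := by ring
      _ ≤ 32 * B * (1024 * T ^ 2) := by gcongr
      _ = _ := by ring
  calc (P.card : ℝ) ^ 9 = ((P.card : ℝ) ^ 3) ^ 3 := by ring
    _ ≤ (32768 * B * T ^ 2) ^ 3 := by gcongr
    _ = 32768 ^ 3 * B ^ 3 * T ^ 6 := by ring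
    _ = _ := by rw [hB3]; ring

theorem shear_bound {P : Finset (ℝ × ℝ)} (hP : ∀ p ∈ P, p ≠ (0 : ℝ × ℝ))
    (hnl : ¬ ∃ u : ℝ × ℝ, u ≠ 0 ∧ ∀ p ∈ P, ∃ t : ℝ, p = t • u) :
    (P.card : ℝ) ^ 9 ≤ 32768 ^ 3 * 1610612736 ^ 2 * ((Tset P).card : ℝ) ^ 13 := by
  obtain ⟨l, hl⟩ := Infinite.exists_notMem_finset (P.image (fun p : ℝ × ℝ => -p.2 / p.1))
  set sh : ℝ × ℝ → ℝ × ℝ := fun p => (p.1, p.2 + l * p.1) with hsh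
  have hinj : Function.Injective sh := by
    intro p q h
    have h1 := (Prod.mk.inj h).1
    have h2 := (Prod.mk.inj h).2
    rw [h1] at h2
    exact Prod.ext h1 (by linarith)
  have hom : ∀ p q, omegaForm (sh p) (sh q) = omegaForm p q := by
    intro p q
    simp only [hsh, omegaForm]
    ring
  have hTs : Tset (P.image sh) = Tset P := by
    unfold Tset
    congr 1
    ext x
    simp only [mem_image, mem_product, Prod.exists]
    constructor
    · rintro ⟨a, b, a', b', ⟨⟨c, d, hc, hcd⟩, ⟨c', d', hc', hcd'⟩⟩, rfl⟩
      exact ⟨c, d, c', d', ⟨hc, hc'⟩, by rw [← hcd, ← hcd', hom]⟩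
    · rintro ⟨a, b, a', b', ⟨h1, h2⟩, rfl⟩
      exact ⟨_, _, _, _, ⟨⟨a, b, h1, rfl⟩, ⟨a', b', h2, rfl⟩⟩, hom (a, b) (a', b')⟩
  have hne : ∀ p ∈ P.image sh, p.2 ≠ 0 := by
    intro p hp
    obtain ⟨q, hq, rfl⟩ := mem_image.1 hp
    simp only [hsh]
    intro h0
    by_cases hq1 : q.1 = 0
    · rw [hq1, mul_zero, add_zero] at h0
      exact hP q hq (Prod.ext hq1 h0)
    · apply hl
      refine mem_image.2 ⟨q, hq, ?_⟩
      rw [div_eq_iff hq1]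
      linarith
  have hnc : ∀ s : ℝ, ∃ q ∈ P.image sh, q.1 / q.2 ≠ s := by
    intro s
    by_contra hcon
    push Not at hcon
    apply hnl
    refine ⟨(s, 1 - l * s), ?_, ?_⟩
    · intro h
      have h1 : s = 0 := (Prod.mk.inj h).1
      have h2 : 1 - l * s = 0 := (Prod.mk.inj h).2
      rw [h1] at h2
      norm_num at h2
    · intro p hp
      have hm := mem_image_of_mem sh hp
      have h1 := hcon _ hm
      rw [div_eq_iff (hne _ hm)] at h1
      simp only [hsh] at h1
      refine ⟨p.2 + l * p.1, Prod.ext ?_ ?_⟩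
      · simp only [Prod.smul_mk, smul_eq_mul]
        linarith
      · simp only [Prod.smul_mk, smul_eq_mul]
        linear_combination (-l) * h1
  have h := main_bound hne hnc
  rwa [hTs, card_image_of_injective _ hinj] at h

end final

theorem stmt_0 : ∃ c : ℝ, 0 < c ∧ ∀ P : Finset (ℝ × ℝ),
    (∀ p ∈ P, p ≠ (0 : ℝ × ℝ)) →
    (¬ ∃ u : ℝ × ℝ, u ≠ 0 ∧ ∀ p ∈ P, ∃ t : ℝ, p = t • u) →
    c * (P.card : ℝ) ^ ((9 : ℝ) / 13) ≤ ((Tset P).card : ℝ) := by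
  set K : ℝ := 32768 ^ 3 * 1610612736 ^ 2 with hK
  have hK0 : 0 < K := by rw [hK]; norm_num
  refine ⟨(K ^ ((1 : ℝ) / 13))⁻¹, by positivity, ?_⟩
  intro P hP hnl
  have h := shear_bound hP hnl
  rw [← hK] at h
  have hKp : 0 < K ^ ((1 : ℝ) / 13) := by positivity
  rw [inv_mul_le_iff₀ hKp]
  apply le_of_pow_le_pow_left₀ (n := 13) (by norm_num) (by positivity)
  rw [mul_pow]
  have e1 : ((P.card : ℝ) ^ ((9 : ℝ) / 13)) ^ 13 = (P.card : ℝ) ^ 9 := by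
    rw [← Real.rpow_natCast, ← Real.rpow_mul (by positivity), ← Real.rpow_natCast]
    norm_num
  have e2 : (K ^ ((1 : ℝ) / 13)) ^ 13 = K := by
    rw [← Real.rpow_natCast, ← Real.rpow_mul (by positivity)]
    norm_num
  rw [e1, e2]
  exact h
end

section
/- There exists an absolute constant c > 0 such that for every finite set A ⊆ ℝ \ {0} with |A| ≥ 2, one has |AA + AA| ≥ c·|A|^(5/4)·|A:A|^(1/3). -/
open Finset
open scoped Pointwise

lemma card_le_image_add {α β : Type*} [DecidableEq α] [DecidableEq β] (s : Finset α) (f : α → β) :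
    #s ≤ #(s.image f) + #(s.offDiag.filter (fun p => f p.1 = f p.2)) := by
  classical
  rcases s.eq_empty_or_nonempty with rfl | ⟨a0, ha0⟩
  · simp
  have : ∃ g : β → α, ∀ a ∈ s, g (f a) ∈ s ∧ f (g (f a)) = f a := by
    have h : ∀ b : β, ∃ a' : α, ∀ a ∈ s, f a = b → a' ∈ s ∧ f a' = b := by
      intro b
      by_cases hb : ∃ a ∈ s, f a = b
      · obtain ⟨a, ha, hab⟩ := hb
        exact ⟨a, fun _ _ _ => ⟨ha, hab⟩⟩
      · refine ⟨a0, fun a ha hab => (hb ⟨a, ha, hab⟩).elim⟩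
    choose g hg using h
    exact ⟨g, fun a ha => hg (f a) a ha rfl⟩
  obtain ⟨g, hg⟩ := this
  rw [← Finset.card_filter_add_card_filter_not (s := s) (fun a => g (f a) = a)]
  apply Nat.add_le_add
  · apply Finset.card_le_card_of_injOn f
    · intro a ha
      simp only [coe_filter, Set.mem_ofPred_eq] at ha
      simp only [coe_image, Set.mem_image, mem_coe]
      exact ⟨a, ha.1, rfl⟩
    · intro a ha b hb hab
      simp only [coe_filter, Set.mem_ofPred_eq] at ha hb
      rw [← ha.2, ← hb.2, hab]
  · apply Finset.card_le_card_of_injOn (fun a => (a, g (f a)))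
    · intro a ha
      simp only [coe_filter, Set.mem_ofPred_eq] at ha
      simp only [coe_filter, Set.mem_ofPred_eq, mem_offDiag]
      exact ⟨⟨ha.1, (hg a ha.1).1, fun h => ha.2 h.symm⟩, (hg a ha.1).2.symm⟩
    · intro a _ b _ hab
      exact (Prod.mk.inj hab).1

lemma exists_cells (P : Finset ℝ) (r : ℕ) (hr : 0 < r) (hrP : r ≤ #P) :
    ∃ f : ℝ → ℕ, Monotone f ∧ (∀ s ∈ P, f s < r) ∧
      #((P ×ˢ P).filter (fun p => f p.1 = f p.2)) * r ≤ 2 * #P * #P := by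
  classical
  set rk : ℝ → ℕ := fun s => #(P.filter (· < s)) with hrk
  set h := #P / r + 1 with hh
  have hmono : Monotone rk := by
    intro s s' hs
    apply Finset.card_le_card
    intro x hx
    simp only [mem_filter] at hx ⊢
    exact ⟨hx.1, hx.2.trans_le hs⟩
  have hlt : ∀ s ∈ P, ∀ s', s < s' → rk s < rk s' := by
    intro s hs s' hss
    apply Finset.card_lt_card
    refine ⟨?_, ?_⟩
    · intro x hx
      simp only [mem_filter] at hx ⊢
      exact ⟨hx.1, hx.2.trans hss⟩
    · intro hsub
      have : s ∈ P.filter (· < s) := hsub (by simp [hs, hss])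
      simp at this
  have hinj : ∀ s ∈ P, ∀ s' ∈ P, rk s = rk s' → s = s' := by
    intro s hs s' hs' he
    rcases lt_trichotomy s s' with h | h | h
    · have := hlt s hs s' h; omega
    · exact h
    · have := hlt s' hs' s h; omega
  have hrkP : ∀ s ∈ P, rk s < #P := by
    intro s hs
    apply Finset.card_lt_card
    refine ⟨filter_subset _ _, fun hsub => ?_⟩
    have := hsub hs
    simp at this
  have hpos : 0 < h := Nat.succ_pos _
  have hP : #P < r * h := by
    rw [hh]; exact Nat.lt_mul_div_succ _ hr
  refine ⟨fun s => rk s / h, fun s s' hs => Nat.div_le_div_right (hmono hs), ?_, ?_⟩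
  · intro s hs
    rw [Nat.div_lt_iff_lt_mul hpos]
    exact (hrkP s hs).trans hP
  · have h1 : #((P ×ˢ P).filter (fun p => rk p.1 / h = rk p.2 / h)) ≤ #(P ×ˢ range h) := by
      apply Finset.card_le_card_of_injOn (fun p => (p.1, rk p.2 % h))
      · intro p hp
        simp only [coe_filter, Set.mem_ofPred_eq, mem_product] at hp
        simp only [coe_product, Set.mem_prod, mem_coe, mem_range]
        exact ⟨hp.1.1, Nat.mod_lt _ hpos⟩
      · rintro ⟨p1, p2⟩ hp ⟨q1, q2⟩ hq hpq
        simp only [coe_filter, Set.mem_ofPred_eq, mem_product] at hp hq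
        simp only [Prod.mk.injEq] at hpq ⊢
        obtain ⟨e1, e2⟩ := hpq
        refine ⟨e1, hinj _ hp.1.2 _ hq.1.2 ?_⟩
        rw [← Nat.div_add_mod (rk p2) h, ← Nat.div_add_mod (rk q2) h, e2, ← hp.2, ← hq.2, e1]
    rw [card_product, card_range] at h1
    have h2 : h * r ≤ 2 * #P := by
      rw [hh, add_mul, one_mul]
      have := Nat.div_mul_le_self (#P) r
      omega
    calc _ ≤ #P * h * r := Nat.mul_le_mul_right _ h1
      _ = #P * (h * r) := by ring
      _ ≤ #P * (2 * #P) := Nat.mul_le_mul_left _ h2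
      _ = _ := by ring

lemma trip_bound (B P : Finset ℝ) (hB : ∀ b ∈ B, 0 < b) (hBP : ∀ x ∈ B, ∀ y ∈ B, x / y ∈ P)
    (r : ℕ) (hr : 0 < r) (hrB : r ≤ #B) (hBP' : #B ≤ #P) (hN : #P ^ 2 ≤ r ^ 3)
    (α β : ℝ) (hα : α ≠ 0) (hβ : β ≠ 0) :
    #((B ×ˢ B ×ˢ B).filter (fun v => v.2.2 = α * v.1 + β * v.2.1)) ≤ 6 * r * #B := by
  classical
  obtain ⟨f, fm, fr, fc⟩ := exists_cells P r hr (hrB.trans hBP')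
  obtain ⟨g, gm, gr, gc⟩ := exists_cells B r hr hrB
  set T := (B ×ˢ B ×ˢ B).filter (fun v => v.2.2 = α * v.1 + β * v.2.1) with hT
  set I := B ×ˢ T with hI
  -- element (t, x, y, z)
  have hmem : ∀ v ∈ I, v.1 ∈ B ∧ v.2.1 ∈ B ∧ v.2.2.1 ∈ B ∧ v.2.2.2 ∈ B ∧
      v.2.2.2 = α * v.2.1 + β * v.2.2.1 := by
    intro v hv
    simp only [hI, hT, mem_product, mem_filter] at hv
    tauto
  set G : ℝ → ℕ := fun z => if 0 < β then g z else r - 1 - g z with hG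
  set F : ℝ × ℝ × ℝ × ℝ → (ℝ × ℝ) × ℕ := fun v => ((v.1, v.2.1), f (v.2.2.1 / v.1) + G v.2.2.2)
    with hF
  have key := card_le_image_add I F
  have him : #(I.image F) ≤ #B * #B * (2 * r) := by
    rw [← card_product, ← card_range (2 * r), ← card_product]
    apply card_le_card
    intro w hw
    rw [mem_image] at hw
    obtain ⟨v, hv, rfl⟩ := hw
    obtain ⟨h1, h2, h3, h4, h5⟩ := hmem v hv
    simp only [hF, mem_product, mem_range]
    refine ⟨⟨h1, h2⟩, ?_⟩
    have a1 := fr _ (hBP _ h3 _ h1)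
    have a2 := gr _ h4
    simp only [hG]
    split_ifs <;> omega
  -- same line and same key gives same cell
  have hcell : ∀ v ∈ I, ∀ w ∈ I, v.2.2.1 / v.1 ≤ w.2.2.1 / w.1 → F v = F w →
      f (v.2.2.1 / v.1) = f (w.2.2.1 / w.1) ∧ g v.2.2.2 = g w.2.2.2 := by
    rintro ⟨t, x, y, z⟩ hv ⟨t', x', y', z'⟩ hw hle he
    obtain ⟨h1, h2, h3, h4, h5⟩ := hmem _ hv
    obtain ⟨k1, k2, k3, k4, k5⟩ := hmem _ hw
    simp only [hF, Prod.mk.injEq] at *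
    obtain ⟨⟨rfl, rfl⟩, he⟩ := he
    have ht := hB _ h1
    have hyy : y ≤ y' := by
      rwa [div_le_div_iff_of_pos_right ht] at hle
    have a1 := fm hle
    have b1 := gr _ h4
    have b2 := gr _ k4
    simp only [hG] at he
    split_ifs at he with hb
    · have : z ≤ z' := by rw [h5, k5]; nlinarith
      have := gm this
      omega
    · have hb' : β < 0 := lt_of_le_of_ne (not_lt.mp hb) hβ
      have : z' ≤ z := by rw [h5, k5]; nlinarith
      have := gm this
      omega
  have hcell' : ∀ v ∈ I, ∀ w ∈ I, F v = F w →
      f (v.2.2.1 / v.1) = f (w.2.2.1 / w.1) ∧ g v.2.2.2 = g w.2.2.2 := by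
    intro v hv w hw he
    rcases le_total (v.2.2.1 / v.1) (w.2.2.1 / w.1) with h | h
    · exact hcell v hv w hw h he
    · have := hcell w hw v hv h he.symm
      exact ⟨this.1.symm, this.2.symm⟩
  have hcoll : #(I.offDiag.filter (fun p => F p.1 = F p.2)) ≤
      #((P ×ˢ P).filter (fun p => f p.1 = f p.2)) * #((B ×ˢ B).filter (fun p => g p.1 = g p.2)) := by
    rw [← card_product]
    apply Finset.card_le_card_of_injOn
      (fun p => ((p.1.2.2.1 / p.1.1, p.2.2.2.1 / p.2.1), (p.1.2.2.2, p.2.2.2.2)))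
    · rintro ⟨v, w⟩ hp
      simp only [coe_filter, Set.mem_ofPred_eq, mem_offDiag] at hp
      obtain ⟨⟨hv, hw, hne⟩, he⟩ := hp
      have hc := hcell' v hv w hw he
      obtain ⟨h1, h2, h3, h4, h5⟩ := hmem _ hv
      obtain ⟨k1, k2, k3, k4, k5⟩ := hmem _ hw
      simp only [coe_product, coe_filter, Set.mem_prod, Set.mem_ofPred_eq, mem_product]
      exact ⟨⟨⟨hBP _ h3 _ h1, hBP _ k3 _ k1⟩, hc.1⟩, ⟨h4, k4⟩, hc.2⟩
    · rintro ⟨⟨t, x, y, z⟩, ⟨t', x', y', z'⟩⟩ hp ⟨⟨u, x₁, y₁, z₁⟩, ⟨u', x₁', y₁', z₁'⟩⟩ hq hpq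
      simp only [coe_filter, Set.mem_ofPred_eq, mem_offDiag] at hp hq
      obtain ⟨⟨hv, hw, hne⟩, he⟩ := hp
      obtain ⟨⟨hv1, hw1, hne1⟩, he1⟩ := hq
      obtain ⟨h1, h2, h3, h4, h5⟩ := hmem _ hv
      obtain ⟨k1, k2, k3, k4, k5⟩ := hmem _ hw
      obtain ⟨l1, l2, l3, l4, l5⟩ := hmem _ hv1
      obtain ⟨m1, m2, m3, m4, m5⟩ := hmem _ hw1
      clear hmem hcell hcell' hv hw hv1 hw1 him key
      simp only [hF, Prod.mk.injEq] at *
      obtain ⟨⟨rfl, rfl⟩, he⟩ := he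
      obtain ⟨⟨rfl, rfl⟩, he1⟩ := he1
      obtain ⟨⟨s1, s2⟩, rfl, rfl⟩ := hpq
      have ht := hB _ h1
      have hu := hB _ l1
      -- y = s t etc
      obtain ⟨s, hs⟩ : ∃ s, s = y / t := ⟨_, rfl⟩
      obtain ⟨s', hs'⟩ : ∃ s, s = y' / t := ⟨_, rfl⟩
      have e1 : y = s * t := by rw [hs]; field_simp
      have e2 : y' = s' * t := by rw [hs']; field_simp
      have e3 : y₁ = s * u := by rw [hs, s1]; field_simp
      have e4 : y₁' = s' * u := by rw [hs', s2]; field_simp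
      have hss : s - s' ≠ 0 := by
        intro h
        have h' : s = s' := by linarith
        apply hne
        have : y = y' := by rw [e1, e2, h']
        have hz : z = z' := by rw [h5, k5, this]
        rw [this, hz]
      have htu : t = u := by
        have : β * (s - s') * (t - u) = 0 := by
          rw [e1] at h5; rw [e2] at k5; rw [e3] at l5; rw [e4] at m5
          linear_combination -h5 + k5 + l5 - m5
        rcases mul_eq_zero.mp this with h | h
        · exact absurd h (mul_ne_zero hβ hss)
        · linarith
      subst htu
      have y1 : y = y₁ := by rw [e1, e3]
      have y2 : y' = y₁' := by rw [e2, e4]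
      have x1 : x = x₁ := by
        have : α * (x - x₁) = 0 := by
          rw [y1] at h5
          linear_combination l5 - h5
        rcases mul_eq_zero.mp this with h | h
        · exact absurd h hα
        · linarith
      simp [y1, y2, x1]
  have hIc : #I = #B * #T := by rw [hI, card_product]
  set p := #((P ×ˢ P).filter (fun p => f p.1 = f p.2))
  set q := #((B ×ˢ B).filter (fun p => g p.1 = g p.2))
  have hpq : p * q ≤ 4 * r * #B ^ 2 := by
    have h1 : (p * r) * (q * r) ≤ (2 * #P * #P) * (2 * #B * #B) := Nat.mul_le_mul fc gc
    have h2 : (p * q) * r ^ 2 ≤ (4 * r * #B ^ 2) * r ^ 2 := by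
      calc _ = (p * r) * (q * r) := by ring
        _ ≤ _ := h1
        _ = 4 * #B ^ 2 * (#P ^ 2) := by ring
        _ ≤ 4 * #B ^ 2 * (r ^ 3) := Nat.mul_le_mul_left _ hN
        _ = _ := by ring
    exact Nat.le_of_mul_le_mul_right h2 (by positivity)
  have hfin : #B * #T ≤ #B * (6 * r * #B) := by
    rw [← hIc]
    calc _ ≤ #B * #B * (2 * r) + 4 * r * #B ^ 2 := by omega
      _ = _ := by ring
  exact Nat.le_of_mul_le_mul_left hfin (by omega)

/-- Pairs `i < j` in `C`. -/
noncomputable def ltPairs (C : Finset ℝ) : Finset (ℝ × ℝ) := (C ×ˢ C).filter (fun p => p.1 < p.2)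

lemma two_card_ltPairs (C : Finset ℝ) : 2 * #(ltPairs C) + #C = #C * #C := by
  classical
  have h1 : #C.offDiag = #(ltPairs C) + #(ltPairs C) := by
    rw [← Finset.card_filter_add_card_filter_not (s := C.offDiag) (fun p => p.1 < p.2)]
    congr 1
    · congr 1
      ext ⟨a, b⟩
      simp only [ltPairs, mem_filter, mem_offDiag, mem_product]
      constructor
      · tauto
      · rintro ⟨⟨h1, h2⟩, h3⟩
        exact ⟨⟨h1, h2, h3.ne⟩, h3⟩
    · refine Finset.card_bij' (fun p _ => p.swap) (fun p _ => p.swap) ?_ ?_ ?_ ?_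
      · rintro ⟨a, b⟩ h
        simp only [ltPairs, mem_filter, mem_offDiag, mem_product, Prod.swap_prod_mk, not_lt] at *
        exact ⟨⟨h.1.2.1, h.1.1⟩, lt_of_le_of_ne h.2 (Ne.symm h.1.2.2)⟩
      · rintro ⟨a, b⟩ h
        simp only [ltPairs, mem_filter, mem_offDiag, mem_product, Prod.swap_prod_mk, not_lt] at *
        exact ⟨⟨h.1.2, h.1.1, h.2.ne'⟩, h.2.le⟩
      · intros; simp
      · intros; simp
  have h2 := C.offDiag_card
  have h3 : #C ≤ #C * #C := Nat.le_mul_self _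
  omega

/-- the sum of the dilated vectors -/
noncomputable def sumMap (a : ℝ → ℝ) (v : (ℝ × ℝ) × (ℝ × ℝ)) : ℝ × ℝ :=
  (v.2.1 * a v.1.1 + v.2.2 * a v.1.2, v.2.1 * (a v.1.1 * v.1.1) + v.2.2 * (a v.1.2 * v.1.2))

noncomputable def sumSet (a : ℝ → ℝ) (B C : Finset ℝ) : Finset (ℝ × ℝ) :=
  (ltPairs C ×ˢ (B ×ˢ B)).image (sumMap a)

lemma elim_eq {x y z w ai aj ak al i j k l : ℝ} (hk : ak ≠ 0) (hkl : k ≠ l)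
    (e1 : x * ai + y * aj = z * ak + w * al)
    (e2 : x * (ai * i) + y * (aj * j) = z * (ak * k) + w * (al * l)) :
    z = (ai * (i - l) / (ak * (k - l))) * x + (aj * (j - l) / (ak * (k - l))) * y := by
  have : k - l ≠ 0 := sub_ne_zero.mpr hkl
  field_simp
  linear_combination l * e1 - e2

lemma cluster (a : ℝ → ℝ) (B C : Finset ℝ) (ha : ∀ m ∈ C, a m ≠ 0) (T : ℕ)
    (hT : ∀ α β : ℝ, α ≠ 0 → β ≠ 0 →
      #((B ×ˢ B ×ˢ B).filter (fun v => v.2.2 = α * v.1 + β * v.2.1)) ≤ T)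
    (hp : 2 * (#(ltPairs C) - 1) * T ≤ #B ^ 2) :
    #(ltPairs C) * #B ^ 2 ≤ 2 * #(sumSet a B C) := by
  classical
  have key := card_le_image_add (ltPairs C ×ˢ (B ×ˢ B)) (sumMap a)
  set K := (ltPairs C ×ˢ (B ×ˢ B)).offDiag.filter (fun p => sumMap a p.1 = sumMap a p.2) with hK
  have hmem : ∀ v ∈ K, ((v.1.1.1 ∈ C ∧ v.1.1.2 ∈ C) ∧ v.1.1.1 < v.1.1.2) ∧
      ((v.2.1.1 ∈ C ∧ v.2.1.2 ∈ C) ∧ v.2.1.1 < v.2.1.2) ∧ (v.1.2.1 ∈ B ∧ v.1.2.2 ∈ B) ∧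
      (v.2.2.1 ∈ B ∧ v.2.2.2 ∈ B) ∧ v.1 ≠ v.2 ∧
      v.1.2.1 * a v.1.1.1 + v.1.2.2 * a v.1.1.2 = v.2.2.1 * a v.2.1.1 + v.2.2.2 * a v.2.1.2 ∧
      v.1.2.1 * (a v.1.1.1 * v.1.1.1) + v.1.2.2 * (a v.1.1.2 * v.1.1.2)
        = v.2.2.1 * (a v.2.1.1 * v.2.1.1) + v.2.2.2 * (a v.2.1.2 * v.2.1.2) := by
    intro v hv
    simp only [hK, ltPairs, mem_filter, mem_offDiag, mem_product, sumMap, Prod.mk.injEq] at hv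
    tauto
  have hKc : #K ≤ T * #((ltPairs C).offDiag) := by
    apply Finset.card_le_mul_card_image_of_maps_to (f := fun v => (v.1.1, v.2.1))
    · rintro ⟨⟨⟨i, j⟩, x, y⟩, ⟨⟨k, l⟩, z, w⟩⟩ hv
      obtain ⟨⟨⟨hi, hj⟩, hij⟩, ⟨⟨hk, hl⟩, hkl⟩, ⟨hx, hy⟩, ⟨hz, hw⟩, hne, e1, e2⟩ := hmem _ hv
      simp only [ltPairs, mem_offDiag, mem_filter, mem_product] at *
      refine ⟨⟨⟨hi, hj⟩, hij⟩, ⟨⟨hk, hl⟩, hkl⟩, ?_⟩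
      intro h
      simp only [Prod.mk.injEq] at h
      obtain ⟨rfl, rfl⟩ := h
      apply hne
      have hai := ha _ hi
      have haj := ha _ hj
      have h1 : (y - w) * (a j * (j - i)) = 0 := by linear_combination e2 - i * e1
      have h2 : (x - z) * (a i * (i - j)) = 0 := by linear_combination e2 - j * e1
      have hy : y = w := by
        rcases mul_eq_zero.mp h1 with h | h
        · linarith
        · exact absurd h (mul_ne_zero haj (sub_ne_zero.mpr hij.ne'))
      have hx : x = z := by
        rcases mul_eq_zero.mp h2 with h | h
        · linarith
        · exact absurd h (mul_ne_zero hai (sub_ne_zero.mpr hij.ne))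
      rw [hx, hy]
    · rintro ⟨⟨i, j⟩, ⟨k, l⟩⟩ hb
      simp only [ltPairs, mem_offDiag, mem_filter, mem_product, ne_eq, Prod.mk.injEq] at hb
      obtain ⟨⟨⟨hi, hj⟩, hij⟩, ⟨⟨hk, hl⟩, hkl⟩, hne⟩ := hb
      have hai := ha _ hi
      have haj := ha _ hj
      have hak := ha _ hk
      have hal := ha _ hl
      by_cases hc : l ≠ i ∧ l ≠ j
      · obtain ⟨hli, hlj⟩ := hc
        refine le_trans ?_ (hT (a i * (i - l) / (a k * (k - l))) (a j * (j - l) / (a k * (k - l)))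
          (div_ne_zero (mul_ne_zero hai (sub_ne_zero.mpr hli.symm))
            (mul_ne_zero hak (sub_ne_zero.mpr hkl.ne)))
          (div_ne_zero (mul_ne_zero haj (sub_ne_zero.mpr hlj.symm))
            (mul_ne_zero hak (sub_ne_zero.mpr hkl.ne))))
        apply Finset.card_le_card_of_injOn (fun v => (v.1.2.1, v.1.2.2, v.2.2.1))
        · rintro ⟨⟨⟨i', j'⟩, x, y⟩, ⟨⟨k', l'⟩, z, w⟩⟩ hv
          simp only [coe_filter, Set.mem_ofPred_eq, Prod.mk.injEq] at hv
          obtain ⟨hv, ⟨rfl, rfl⟩, rfl, rfl⟩ := hv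
          obtain ⟨-, -, ⟨hx, hy⟩, ⟨hz, hw⟩, -, e1, e2⟩ := hmem _ hv
          simp only [coe_filter, Set.mem_ofPred_eq, mem_product]
          exact ⟨⟨hx, hy, hz⟩, elim_eq hak hkl.ne e1 e2⟩
        · rintro ⟨⟨⟨i', j'⟩, x, y⟩, ⟨⟨k', l'⟩, z, w⟩⟩ hv ⟨⟨⟨i₁, j₁⟩, x₁, y₁⟩, ⟨⟨k₁, l₁⟩, z₁, w₁⟩⟩ hv1 he
          simp only [coe_filter, Set.mem_ofPred_eq, Prod.mk.injEq] at hv hv1 he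
          obtain ⟨hv, ⟨rfl, rfl⟩, rfl, rfl⟩ := hv
          obtain ⟨hv1, ⟨rfl, rfl⟩, rfl, rfl⟩ := hv1
          obtain ⟨rfl, rfl, rfl⟩ := he
          obtain ⟨-, -, -, -, -, e1, e2⟩ := hmem _ hv
          obtain ⟨-, -, -, -, -, e3, e4⟩ := hmem _ hv1
          have : w * a l₁ = w₁ * a l₁ := by
            simp only at e1 e3
            linarith
          rw [mul_right_cancel₀ hal this]
      · have hki : k ≠ i ∧ k ≠ j := by
          by_cases h1 : l = i
          · subst h1
            exact ⟨hkl.ne, (hkl.trans hij).ne⟩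
          · have h2 : l = j := by
              by_contra h2
              exact hc ⟨h1, h2⟩
            subst h2
            exact ⟨fun h => hne ⟨h.symm, rfl⟩, hkl.ne⟩
        obtain ⟨hli, hlj⟩ := hki
        refine le_trans ?_ (hT (a i * (i - k) / (a l * (l - k))) (a j * (j - k) / (a l * (l - k)))
          (div_ne_zero (mul_ne_zero hai (sub_ne_zero.mpr hli.symm))
            (mul_ne_zero hal (sub_ne_zero.mpr hkl.ne')))
          (div_ne_zero (mul_ne_zero haj (sub_ne_zero.mpr hlj.symm))
            (mul_ne_zero hal (sub_ne_zero.mpr hkl.ne'))))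
        apply Finset.card_le_card_of_injOn (fun v => (v.1.2.1, v.1.2.2, v.2.2.2))
        · rintro ⟨⟨⟨i', j'⟩, x, y⟩, ⟨⟨k', l'⟩, z, w⟩⟩ hv
          simp only [coe_filter, Set.mem_ofPred_eq, Prod.mk.injEq] at hv
          obtain ⟨hv, ⟨rfl, rfl⟩, rfl, rfl⟩ := hv
          obtain ⟨-, -, ⟨hx, hy⟩, ⟨hz, hw⟩, -, e1, e2⟩ := hmem _ hv
          simp only [coe_filter, Set.mem_ofPred_eq, mem_product]
          exact ⟨⟨hx, hy, hw⟩, elim_eq hal hkl.ne' (e1.trans (add_comm _ _))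
            (e2.trans (add_comm _ _))⟩
        · rintro ⟨⟨⟨i', j'⟩, x, y⟩, ⟨⟨k', l'⟩, z, w⟩⟩ hv ⟨⟨⟨i₁, j₁⟩, x₁, y₁⟩, ⟨⟨k₁, l₁⟩, z₁, w₁⟩⟩ hv1 he
          simp only [coe_filter, Set.mem_ofPred_eq, Prod.mk.injEq] at hv hv1 he
          obtain ⟨hv, ⟨rfl, rfl⟩, rfl, rfl⟩ := hv
          obtain ⟨hv1, ⟨rfl, rfl⟩, rfl, rfl⟩ := hv1
          obtain ⟨rfl, rfl, rfl⟩ := he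
          obtain ⟨-, -, -, -, -, e1, e2⟩ := hmem _ hv
          obtain ⟨-, -, -, -, -, e3, e4⟩ := hmem _ hv1
          have : z * a k₁ = z₁ * a k₁ := by
            simp only at e1 e3
            linarith
          rw [mul_right_cancel₀ hak this]
  rw [card_product, card_product] at key
  have ho : #((ltPairs C).offDiag) = #(ltPairs C) * (#(ltPairs C) - 1) := by
    rw [offDiag_card, Nat.mul_sub, mul_one]
  rw [ho] at hKc
  have h3 : 2 * #K ≤ #(ltPairs C) * #B ^ 2 := by
    calc 2 * #K ≤ 2 * (T * (#(ltPairs C) * (#(ltPairs C) - 1))) := Nat.mul_le_mul_left _ hKc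
      _ = #(ltPairs C) * (2 * (#(ltPairs C) - 1) * T) := by ring
      _ ≤ _ := Nat.mul_le_mul_left _ hp
  have h4 : #(sumSet a B C) = #((ltPairs C ×ˢ (B ×ˢ B)).image (sumMap a)) := rfl
  rw [h4]
  have h5 : #(ltPairs C) * (#B * #B) = #(ltPairs C) * #B ^ 2 := by ring
  rw [h5] at key
  omega

lemma ratio_between {p q i j : ℝ} (h : 0 < p * q) (hij : i < j) :
    i < (p * i + q * j) / (p + q) ∧ (p * i + q * j) / (p + q) < j := by
  rcases pos_and_pos_or_neg_and_neg_of_mul_pos h with ⟨hp, hq⟩ | ⟨hp, hq⟩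
  · rw [lt_div_iff₀ (by linarith), div_lt_iff₀ (by linarith)]
    constructor <;> nlinarith
  · rw [lt_div_iff_of_neg (by linarith), div_lt_iff_of_neg (by linarith)]
    constructor <;> nlinarith

lemma sumSet_ratio (a : ℝ → ℝ) (B C : Finset ℝ) (hB : ∀ b ∈ B, 0 < b)
    (ha : ∀ i ∈ C, ∀ j ∈ C, 0 < a i * a j) (u : ℝ × ℝ) (hu : u ∈ sumSet a B C) :
    ∃ i ∈ C, ∃ j ∈ C, i < u.2 / u.1 ∧ u.2 / u.1 < j := by
  simp only [sumSet, mem_image] at hu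
  obtain ⟨⟨⟨i, j⟩, x, y⟩, hv, rfl⟩ := hu
  simp only [ltPairs, mem_product, mem_filter] at hv
  obtain ⟨⟨⟨hi, hj⟩, hij⟩, hx, hy⟩ := hv
  have h1 : 0 < (x * a i) * (y * a j) := by
    have := mul_pos (mul_pos (hB _ hx) (hB _ hy)) (ha _ hi _ hj)
    nlinarith
  refine ⟨i, hi, j, hj, ?_⟩
  have := ratio_between h1 hij
  simpa [sumMap, mul_assoc] using this

lemma combine (A B R : Finset ℝ) (a : ℝ → ℝ) (hBA : B ⊆ A) (hB : ∀ b ∈ B, 0 < b)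
    (haA : ∀ m ∈ R, a m ∈ A ∧ a m * m ∈ A) (ha : ∀ i ∈ R, ∀ j ∈ R, 0 < a i * a j)
    (M T : ℕ) (hM : 0 < M)
    (hT : ∀ α β : ℝ, α ≠ 0 → β ≠ 0 →
      #((B ×ˢ B ×ˢ B).filter (fun v => v.2.2 = α * v.1 + β * v.2.1)) ≤ T)
    (p : ℕ) (hp2 : 2 * p + M = M * M)
    (hp : 2 * (p - 1) * T ≤ #B ^ 2) :
    (#R / M) * (p * #B ^ 2) ≤ 2 * #(A * A + A * A) ^ 2 := by
  classical
  set n := #R with hn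
  set q := n / M with hq
  have hqM : q * M ≤ n := Nat.div_mul_le_self _ _
  obtain ⟨e, heR, helt⟩ : ∃ e : ℕ → ℝ, (∀ i < n, e i ∈ R) ∧ (∀ i j, i < j → j < n → e i < e j) := by
    refine ⟨fun i => if h : i < n then R.orderEmbOfFin rfl ⟨i, h⟩ else 0, ?_, ?_⟩
    · intro i hi
      simp only [hi, dif_pos]
      exact R.orderEmbOfFin_mem rfl _
    · intro i j hij hj
      simp only [hij.trans hj, hj, dif_pos]
      exact (R.orderEmbOfFin rfl).strictMono hij
  have hele : ∀ i j, i ≤ j → j < n → e i ≤ e j := by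
    intro i j hij hj
    rcases hij.eq_or_lt with rfl | h
    · rfl
    · exact (helt i j h hj).le
  set C : ℕ → Finset ℝ := fun c => (Finset.Ico (c * M) (c * M + M)).image e with hC
  have hidx : ∀ c < q, c * M + M ≤ n := by
    intro c hc
    have : (c + 1) * M ≤ q * M := Nat.mul_le_mul_right _ hc
    rw [add_mul, one_mul] at this
    omega
  have hCR : ∀ c < q, C c ⊆ R := by
    intro c hc m hm
    simp only [hC, mem_image, mem_Ico] at hm
    obtain ⟨i, hi, rfl⟩ := hm
    exact heR i (by have := hidx c hc; omega)
  have hCc : ∀ c < q, #(C c) = M := by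
    intro c hc
    have h0 := hidx c hc
    rw [hC]
    simp only
    rw [card_image_of_injOn, Nat.card_Ico]
    · omega
    · intro i hi j hj hij
      simp only [coe_Ico, Set.mem_Ico] at hi hj
      rcases lt_trichotomy i j with h | h | h
      · have := helt i j h (by omega); linarith
      · exact h
      · have := helt j i h (by omega); linarith
  have hcl : ∀ c ∈ range q, p * #B ^ 2 ≤ 2 * #(sumSet a B (C c)) := by
    intro c hc
    rw [mem_range] at hc
    have h1 := two_card_ltPairs (C c)
    rw [hCc c hc] at h1
    have h2 : #(ltPairs (C c)) = p := by omega
    rw [← h2]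
    apply cluster a B (C c) _ T hT
    · rw [h2]; exact hp
    · intro m hm h0
      have := ha m (hCR c hc hm) m (hCR c hc hm)
      rw [h0] at this
      simp at this
  have hlt : ∀ c < q, ∀ c' < q, c < c' →
      Disjoint (sumSet a B (C c)) (sumSet a B (C c')) := by
    intro c hc c' hc' hcc
    rw [Finset.disjoint_left]
    intro u hu hu'
    obtain ⟨-, -, j, hj, -, h1⟩ := sumSet_ratio a B (C c) hB
      (fun i hi j hj => ha i (hCR c hc hi) j (hCR c hc hj)) u hu
    obtain ⟨i, hi, -, -, h2, -⟩ := sumSet_ratio a B (C c') hB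
      (fun i hi j hj => ha i (hCR c' hc' hi) j (hCR c' hc' hj)) u hu'
    simp only [hC, mem_image, mem_Ico] at hi hj
    obtain ⟨i, hi, rfl⟩ := hi
    obtain ⟨j, hj, rfl⟩ := hj
    have h3 : (c + 1) * M ≤ c' * M := Nat.mul_le_mul_right _ hcc
    rw [add_mul, one_mul] at h3
    have := hidx c' hc'
    have := hele j i (by omega) (by omega)
    linarith
  have hdisj : ((range q : Finset ℕ) : Set ℕ).PairwiseDisjoint (fun c => sumSet a B (C c)) := by
    intro c hc c' hc' hne
    simp only [coe_range, Set.mem_Iio] at hc hc'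
    rcases lt_or_gt_of_ne hne with h | h
    · exact hlt c hc c' hc' h
    · exact (hlt c' hc' c hc h).symm
  have hsub : (range q).biUnion (fun c => sumSet a B (C c)) ⊆
      (A * A + A * A) ×ˢ (A * A + A * A) := by
    intro u hu
    rw [mem_biUnion] at hu
    obtain ⟨c, hc, hu⟩ := hu
    rw [mem_range] at hc
    simp only [sumSet, mem_image] at hu
    obtain ⟨⟨⟨i, j⟩, x, y⟩, hv, rfl⟩ := hu
    simp only [ltPairs, mem_product, mem_filter] at hv
    obtain ⟨⟨⟨hi, hj⟩, hij⟩, hx, hy⟩ := hv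
    have h1 := haA i (hCR c hc hi)
    have h2 := haA j (hCR c hc hj)
    simp only [sumMap, mem_product]
    exact ⟨add_mem_add (mul_mem_mul (hBA hx) h1.1) (mul_mem_mul (hBA hy) h2.1),
      add_mem_add (mul_mem_mul (hBA hx) h1.2) (mul_mem_mul (hBA hy) h2.2)⟩
  have h1 := card_le_card hsub
  rw [card_biUnion hdisj, card_product] at h1
  have h2 := Finset.card_nsmul_le_sum (range q) (fun c => 2 * #(sumSet a B (C c))) _ hcl
  rw [card_range, smul_eq_mul, ← mul_sum] at h2
  calc _ ≤ _ := h2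
    _ ≤ 2 * (#(A * A + A * A) * #(A * A + A * A)) := Nat.mul_le_mul_left _ h1
    _ = _ := by ring

lemma exists_slopes (A : Finset ℝ) (hA : (0 : ℝ) ∉ A) :
    ∃ R : Finset ℝ, ∃ a : ℝ → ℝ, (∀ m ∈ R, a m ∈ A ∧ a m * m ∈ A) ∧
      (∀ i ∈ R, ∀ j ∈ R, 0 < a i * a j) ∧ #(A / A) ≤ 2 * #R := by
  classical
  have h : ∀ m : ℝ, ∃ b : ℝ, m ∈ A / A → b ∈ A ∧ b * m ∈ A := by
    intro m
    by_cases hm : m ∈ A / A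
    · obtain ⟨x, hx, y, hy, rfl⟩ := mem_div.mp hm
      refine ⟨y, fun _ => ⟨hy, ?_⟩⟩
      have : y ≠ 0 := fun h => hA (h ▸ hy)
      rw [mul_div_cancel₀ _ this]
      exact hx
    · exact ⟨0, fun h => (hm h).elim⟩
  choose a ha using h
  have hc := Finset.card_filter_add_card_filter_not (s := A / A) (fun m => 0 < a m)
  rcases le_total (#((A / A).filter (fun m => 0 < a m))) (#((A / A).filter (fun m => ¬ 0 < a m)))
    with h | h
  · refine ⟨(A / A).filter (fun m => ¬ 0 < a m), a, fun m hm => ha m (mem_filter.mp hm).1, ?_,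
      by omega⟩
    have : ∀ m ∈ (A / A).filter (fun m => ¬ 0 < a m), a m < 0 := by
      intro m hm
      rw [mem_filter] at hm
      refine lt_of_le_of_ne (not_lt.mp hm.2) (fun h => hA ?_)
      rw [← h]; exact (ha m hm.1).1
    intro i hi j hj
    exact mul_pos_of_neg_of_neg (this i hi) (this j hj)
  · refine ⟨(A / A).filter (fun m => 0 < a m), a, fun m hm => ha m (mem_filter.mp hm).1, ?_,
      by omega⟩
    intro i hi j hj
    exact mul_pos (mem_filter.mp hi).2 (mem_filter.mp hj).2

lemma exists_r (N : ℕ) (hN : 0 < N) : ∃ r : ℕ, 0 < r ∧ N ^ 2 ≤ r ^ 3 ∧ r ^ 3 ≤ 8 * N ^ 2 := by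
  classical
  have hex : ∃ r : ℕ, N ^ 2 ≤ r ^ 3 := ⟨N, Nat.pow_le_pow_right hN (by norm_num)⟩
  set r := Nat.find hex with hr
  have h1 : N ^ 2 ≤ r ^ 3 := Nat.find_spec hex
  have hpos : 0 < r := by
    rcases Nat.eq_zero_or_pos r with h | h
    · rw [h] at h1
      have : 0 < N ^ 2 := by positivity
      omega
    · exact h
  refine ⟨r, hpos, h1, ?_⟩
  have h2 : ¬ N ^ 2 ≤ (r - 1) ^ 3 := Nat.find_min hex (by omega)
  rcases Nat.lt_or_ge r 2 with h | h
  · have : r = 1 := by omega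
    rw [this]
    have : 0 < N ^ 2 := by positivity
    omega
  · have h3 : r ≤ 2 * (r - 1) := by omega
    have h4 := Nat.pow_le_pow_left h3 3
    rw [mul_pow] at h4
    omega

lemma main_pos (A B : Finset ℝ) (hA : (0 : ℝ) ∉ A) (hA2 : 2 ≤ #A) (hBA : B ⊆ A)
    (hB : ∀ b ∈ B, 0 < b) (hAB : #A ≤ 2 * #B) :
    #A ^ 15 * #(A / A) ^ 4 ≤ 2 ^ 60 * #(A * A + A * A) ^ 12 := by
  classical
  obtain ⟨R, a, haA, ha, hR⟩ := exists_slopes A hA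
  have hAne : A.Nonempty := card_pos.mp (by omega)
  have hAN : #A ≤ #(A / A) := by
    obtain ⟨a0, ha0⟩ := hAne
    apply Finset.card_le_card_of_injOn (fun x => x / a0)
    · intro x hx
      exact div_mem_div hx ha0
    · intro x _ y _ hxy
      have : a0 ≠ 0 := fun h => hA (h ▸ ha0)
      exact (div_left_inj' this).mp hxy
  have hbA : #B ≤ #A := card_le_card hBA
  set N := #(A / A) with hN
  set D := #(A * A + A * A) with hD
  set b := #B with hb
  set n := #R with hn
  have hDpos : 0 < D := card_pos.mpr ((hAne.mul hAne).add (hAne.mul hAne))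
  rcases Nat.lt_or_ge N 3 with hN3 | hN3
  · have h1 : #A = 2 := by omega
    have h2 : N = 2 := by omega
    rw [h1, h2]
    have : 1 ≤ D ^ 12 := Nat.one_le_pow _ _ hDpos
    omega
  have hn2 : 2 ≤ n := by omega
  obtain ⟨r, hr, hr1, hr2⟩ := exists_r N (by omega)
  obtain ⟨M, T, p, hM2, hMn, hbM, hp2, hT, hp⟩ : ∃ M T p : ℕ, 2 ≤ M ∧ M ≤ n ∧ b ≤ 14 * r * M ^ 2 ∧
      2 * p + M = M * M ∧
      (∀ α β : ℝ, α ≠ 0 → β ≠ 0 →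
        #((B ×ˢ B ×ˢ B).filter (fun v => v.2.2 = α * v.1 + β * v.2.1)) ≤ T) ∧
      2 * (p - 1) * T ≤ b ^ 2 := by
    set M := Nat.sqrt (b / (6 * r)) with hM
    have hM1 : M ^ 2 ≤ b / (6 * r) := Nat.sqrt_le' _
    have hM3 : b / (6 * r) < (M + 1) ^ 2 := Nat.lt_succ_sqrt' _
    rw [Nat.le_div_iff_mul_le (by omega)] at hM1
    rw [Nat.div_lt_iff_lt_mul (by omega)] at hM3
    rcases Nat.lt_or_ge M 2 with h | h
    · refine ⟨2, #(B ×ˢ B ×ˢ B), 1, le_rfl, hn2, ?_, by norm_num,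
        fun _ _ _ _ => card_filter_le _ _, by simp⟩
      have : (M + 1) ^ 2 ≤ 2 ^ 2 := Nat.pow_le_pow_left (by omega) 2
      calc b ≤ (M + 1) ^ 2 * (6 * r) := hM3.le
        _ ≤ 2 ^ 2 * (6 * r) := Nat.mul_le_mul_right _ this
        _ ≤ 14 * r * 2 ^ 2 := by omega
    · obtain ⟨k, hk⟩ := Nat.even_mul_succ_self (M - 1)
      have hk' : M * M = 2 * k + M := by
        obtain ⟨m, hm⟩ : ∃ m, M = m + 1 := ⟨M - 1, by omega⟩
        rw [hm] at hk ⊢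
        simp only [Nat.add_sub_cancel, Nat.succ_eq_add_one] at hk
        nlinarith
      have hMM : M ≤ M ^ 2 := Nat.le_self_pow (by norm_num) M
      have hMr : M ^ 2 ≤ M ^ 2 * r := Nat.le_mul_of_pos_right _ hr
      have hrM : r ≤ M ^ 2 * r := Nat.le_mul_of_pos_left _ (by positivity)
      have hM1' : 6 * (M ^ 2 * r) ≤ b := by linarith
      refine ⟨M, 6 * r * b, k, h, by omega, ?_, hk'.symm, ?_, ?_⟩
      · have : (M + 1) ^ 2 * 4 ≤ 9 * M ^ 2 := by nlinarith
        have h9 : (M + 1) ^ 2 * 4 * r ≤ 9 * M ^ 2 * r := Nat.mul_le_mul_right _ this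
        linarith
      · intro α β hα hβ
        exact trip_bound B (A / A) hB (fun x hx y hy => div_mem_div (hBA hx) (hBA hy)) r hr
          (by omega) (by omega) hr1 α β hα hβ
      · have h1 : 2 * (k - 1) ≤ M ^ 2 := by rw [pow_two]; omega
        calc 2 * (k - 1) * (6 * r * b) ≤ M ^ 2 * (6 * r * b) := Nat.mul_le_mul_right _ h1
          _ = 6 * (M ^ 2 * r) * b := by ring
          _ ≤ b * b := Nat.mul_le_mul_right _ hM1'
          _ = _ := by ring
  have hcomb := combine A B R a hBA hB haA ha M T (by omega) hT p hp2 hp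
  rw [← hn, ← hb, ← hD] at hcomb
  set q := n / M with hq
  have hq1 : n ≤ 2 * M * q := by
    have h1 : 1 ≤ q := (Nat.one_le_div_iff (by omega)).mpr hMn
    have h2 := Nat.div_add_mod n M
    have h3 := Nat.mod_lt n (show 0 < M by omega)
    rw [← hq] at h2
    have h4 : M * 1 ≤ M * q := Nat.mul_le_mul_left _ h1
    rw [mul_assoc]
    omega
  have hp4 : M ^ 2 ≤ 4 * p := by
    have h4 : 2 * M ≤ M * M := Nat.mul_le_mul_right _ hM2
    rw [pow_two]
    omega
  have s1 : N * M * b ^ 2 ≤ 32 * D ^ 2 := by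
    calc N * M * b ^ 2 ≤ (2 * (2 * M * q)) * M * b ^ 2 := by gcongr; omega
      _ = 4 * q * b ^ 2 * M ^ 2 := by ring
      _ ≤ 4 * q * b ^ 2 * (4 * p) := by gcongr
      _ = 16 * (q * (p * b ^ 2)) := by ring
      _ ≤ 16 * (2 * D ^ 2) := by gcongr
      _ = _ := by ring
  have s2 : N ^ 2 * b ^ 5 ≤ 14 * 2 ^ 10 * r * D ^ 4 := by
    calc N ^ 2 * b ^ 5 = N ^ 2 * b ^ 4 * b := by ring
      _ ≤ N ^ 2 * b ^ 4 * (14 * r * M ^ 2) := by gcongr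
      _ = 14 * r * (N * M * b ^ 2) ^ 2 := by ring
      _ ≤ 14 * r * (32 * D ^ 2) ^ 2 := by gcongr
      _ = _ := by ring
  have s3 : N ^ 2 * (N ^ 4 * b ^ 15) ≤ N ^ 2 * (14 ^ 3 * 2 ^ 33 * D ^ 12) := by
    calc N ^ 2 * (N ^ 4 * b ^ 15) = (N ^ 2 * b ^ 5) ^ 3 := by ring
      _ ≤ (14 * 2 ^ 10 * r * D ^ 4) ^ 3 := by gcongr
      _ = 14 ^ 3 * 2 ^ 30 * r ^ 3 * D ^ 12 := by ring
      _ ≤ 14 ^ 3 * 2 ^ 30 * (8 * N ^ 2) * D ^ 12 := by gcongr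
      _ = _ := by ring
  have s4 := Nat.le_of_mul_le_mul_left s3 (by positivity)
  calc #A ^ 15 * N ^ 4 ≤ (2 * b) ^ 15 * N ^ 4 := by gcongr
    _ = 2 ^ 15 * (N ^ 4 * b ^ 15) := by ring
    _ ≤ 2 ^ 15 * (14 ^ 3 * 2 ^ 33 * D ^ 12) := by gcongr
    _ = (2 ^ 15 * 14 ^ 3 * 2 ^ 33) * D ^ 12 := by ring
    _ ≤ _ := Nat.mul_le_mul_right _ (by norm_num)

lemma main_nat (A : Finset ℝ) (hA : (0 : ℝ) ∉ A) (hA2 : 2 ≤ #A) :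
    #A ^ 15 * #(A / A) ^ 4 ≤ 2 ^ 60 * #(A * A + A * A) ^ 12 := by
  classical
  have hc := Finset.card_filter_add_card_filter_not (s := A) (fun m => 0 < m)
  rcases le_total (#(A.filter (fun m => ¬ 0 < m))) (#(A.filter (fun m => 0 < m))) with h | h
  · exact main_pos A (A.filter (fun m => 0 < m)) hA hA2 (filter_subset _ _) (fun b hb => (mem_filter.mp hb).2) (by omega)
  · have hcard : #(-A) = #A := Finset.card_neg A
    have hmul : (-A) * (-A) = A * A := by
      ext x
      simp only [mem_mul, mem_neg]
      constructor
      · rintro ⟨_, ⟨y, hy, rfl⟩, _, ⟨z, hz, rfl⟩, rfl⟩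
        exact ⟨y, hy, z, hz, by ring⟩
      · rintro ⟨y, hy, z, hz, rfl⟩
        exact ⟨_, ⟨y, hy, rfl⟩, _, ⟨z, hz, rfl⟩, by ring⟩
    have hdiv : (-A) / (-A) = A / A := by
      ext x
      simp only [mem_div, mem_neg]
      constructor
      · rintro ⟨_, ⟨y, hy, rfl⟩, _, ⟨z, hz, rfl⟩, rfl⟩
        exact ⟨y, hy, z, hz, (neg_div_neg_eq y z).symm⟩
      · rintro ⟨y, hy, z, hz, rfl⟩
        exact ⟨_, ⟨y, hy, rfl⟩, _, ⟨z, hz, rfl⟩, neg_div_neg_eq y z⟩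
    have := main_pos (-A) (-(A.filter (fun m => ¬ 0 < m))) (by simpa using hA) (by omega)
      (Finset.neg_subset_neg (filter_subset _ _)) (by
        intro b hb
        simp only [mem_neg, mem_filter] at hb
        obtain ⟨y, ⟨hy, hy0⟩, rfl⟩ := hb
        have : y ≠ 0 := fun h => hA (h ▸ hy)
        have := lt_of_le_of_ne (not_lt.mp hy0) this
        linarith) (by rw [hcard, Finset.card_neg]; omega)
    rwa [hcard, hmul, hdiv] at this

theorem stmt_1 :
    ∃ c : ℝ, 0 < c ∧
      ∀ A : Finset ℝ, (0 : ℝ) ∉ A → 2 ≤ A.card →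
        c * (A.card : ℝ) ^ ((5 : ℝ) / 4) * ((A / A).card : ℝ) ^ ((1 : ℝ) / 3)
          ≤ ((A * A + A * A).card : ℝ) := by
  refine ⟨1 / 32, by norm_num, fun A hA hA2 => ?_⟩
  have h := main_nat A hA hA2
  have h' : ((#A : ℝ)) ^ 15 * (#(A / A) : ℝ) ^ 4 ≤ 2 ^ 60 * (#(A * A + A * A) : ℝ) ^ 12 := by
    exact_mod_cast h
  refine le_of_pow_le_pow_left₀ (n := 12) (by norm_num) (by positivity) ?_
  have e1 : ((#A : ℝ) ^ ((5 : ℝ) / 4)) ^ 12 = (#A : ℝ) ^ 15 := by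
    rw [← Real.rpow_mul_natCast (by positivity), ← Real.rpow_natCast]
    norm_num
  have e2 : ((#(A / A) : ℝ) ^ ((1 : ℝ) / 3)) ^ 12 = (#(A / A) : ℝ) ^ 4 := by
    rw [← Real.rpow_mul_natCast (by positivity), ← Real.rpow_natCast]
    norm_num
  rw [mul_pow, mul_pow, e1, e2]
  have : ((1 : ℝ) / 32) ^ 12 = 1 / 2 ^ 60 := by norm_num
  rw [this]
  linarith
end

section
/- There exists an absolute constant c > 0 such that for every finite set A ⊆ ℝ \ {0} with |A| ≥ 2, one has |AA + AA| ≥ c·|A|^(19/12). -/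
open Finset
open scoped Pointwise

namespace AAsum

lemma card_le_cells {α β : Type*} [DecidableEq α] [DecidableEq β] (T : Finset α) (c : α → β) :
    #T ≤ #(T.image c) + #{p ∈ T ×ˢ T | p.1 ≠ p.2 ∧ c p.1 = c p.2} := by
  induction T using Finset.induction_on with
  | empty => simp
  | insert a T ha ih =>
    rw [card_insert_of_notMem ha]
    have hsub : {p ∈ T ×ˢ T | p.1 ≠ p.2 ∧ c p.1 = c p.2} ⊆
        {p ∈ insert a T ×ˢ insert a T | p.1 ≠ p.2 ∧ c p.1 = c p.2} := by
      intro p hp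
      simp only [mem_filter, mem_product, mem_insert] at hp ⊢
      tauto
    by_cases h : c a ∈ T.image c
    · obtain ⟨b, hb, hbc⟩ := mem_image.1 h
      have h1 : #(T.image c) ≤ #((insert a T).image c) :=
        card_le_card (image_subset_image (subset_insert _ _))
      have h2 : #{p ∈ T ×ˢ T | p.1 ≠ p.2 ∧ c p.1 = c p.2} <
          #{p ∈ insert a T ×ˢ insert a T | p.1 ≠ p.2 ∧ c p.1 = c p.2} := by
        apply card_lt_card
        refine ⟨hsub, fun hh => ?_⟩
        have hm : (a, b) ∈ {p ∈ insert a T ×ˢ insert a T | p.1 ≠ p.2 ∧ c p.1 = c p.2} := by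
          simp only [mem_filter, mem_product, mem_insert]
          refine ⟨⟨by simp, Or.inr hb⟩, ?_, hbc.symm⟩
          rintro rfl
          exact ha hb
        have := hh hm
        simp only [mem_filter, mem_product] at this
        exact ha this.1.1
      omega
    · rw [image_insert, card_insert_of_notMem h]
      have := card_le_card hsub
      omega

/-- block index -/
noncomputable def blk (X : Finset ℝ) (m : ℕ) (x : ℝ) : ℕ := #{y ∈ X | y < x} / m

lemma blk_mono (X : Finset ℝ) (m : ℕ) {x y : ℝ} (h : x ≤ y) : blk X m x ≤ blk X m y := by
  apply Nat.div_le_div_right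
  apply card_le_card
  intro z hz
  simp only [mem_filter] at hz ⊢
  exact ⟨hz.1, hz.2.trans_le h⟩

lemma blk_le (X : Finset ℝ) (m : ℕ) (x : ℝ) : blk X m x ≤ #X / m :=
  Nat.div_le_div_right (card_le_card (filter_subset _ _))

lemma blk_fiber (X : Finset ℝ) (m : ℕ) (hm : 0 < m) (k : ℕ) :
    #{x ∈ X | blk X m x = k} ≤ m := by
  have hlt : ∀ x ∈ X, ∀ y, x < y → #{z ∈ X | z < x} < #{z ∈ X | z < y} := by
    intro x hx y hxy
    apply card_lt_card
    refine ⟨fun z hz => ?_, fun hh => ?_⟩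
    · simp only [mem_filter] at hz ⊢
      exact ⟨hz.1, hz.2.trans hxy⟩
    · have : x ∈ {z ∈ X | z < y} := by simp [hx, hxy]
      have := hh this
      simp at this
  have h := card_le_card_of_injOn (s := {x ∈ X | blk X m x = k}) (t := Finset.Ico (k*m) (k*m+m))
    (fun x => #{z ∈ X | z < x}) ?_ ?_
  · simpa using h
  · intro x hx
    have hx := mem_filter.1 hx
    simp only [blk] at hx
    simp only [coe_Ico, Set.mem_Ico]
    have := (Nat.div_eq_iff hm).1 hx.2
    constructor <;> grind
  · intro x hx y hy hxy
    have hx := mem_filter.1 hx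
    have hy := mem_filter.1 hy
    rcases lt_trichotomy x y with h | h | h
    · have := hlt x hx.1 y h
      simp only at hxy
      omega
    · exact h
    · have := hlt y hy.1 x h
      simp only at hxy
      omega

lemma chain_card (T : Finset (ℕ × ℕ)) (a b : ℕ) (ha : ∀ p ∈ T, p.1 ≤ a ∧ p.2 ≤ b)
    (h : (∀ p ∈ T, ∀ q ∈ T, p.1 < q.1 → p.2 ≤ q.2) ∨ (∀ p ∈ T, ∀ q ∈ T, p.1 < q.1 → q.2 ≤ p.2)) :
    #T ≤ a + b + 1 := by
  rcases h with h | h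
  · have h2 := card_le_card_of_injOn (s := T) (t := range (a+b+1)) (fun p => p.1 + p.2) ?_ ?_
    · simpa using h2
    · intro p hp
      have := ha p hp
      simp only [coe_range, Set.mem_Iio]
      omega
    · intro p hp q hq hpq
      have h1 := h p hp q hq
      have h2 := h q hq p hp
      simp only at hpq
      ext <;> omega
  · have h2 := card_le_card_of_injOn (s := T) (t := range (a+b+1)) (fun p => p.1 + (b - p.2)) ?_ ?_
    · simpa using h2
    · intro p hp
      have := ha p hp
      simp only [coe_range, Set.mem_Iio]
      omega
    · intro p hp q hq hpq
      have h1 := h p hp q hq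
      have h2 := h q hq p hp
      have h3 := ha p hp
      have h4 := ha q hq
      simp only at hpq
      ext <;> omega

/-- points of the grid `X × Y` on the line `α a q + β y = z`. -/
noncomputable def pts (X Y : Finset ℝ) (α β : ℝ) (l : ℝ × ℝ) : Finset (ℝ × ℝ) :=
  {p ∈ X ×ˢ Y | α * l.1 * p.1 + β * p.2 = l.2}

noncomputable def cell (X Y : Finset ℝ) (m : ℕ) (p : ℝ × ℝ) : ℕ × ℕ := (blk X m p.1, blk Y m p.2)

lemma cells_card (X Y : Finset ℝ) (α β : ℝ) (hα : α ≠ 0) (hβ : β ≠ 0) (m : ℕ) (l : ℝ × ℝ)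
    (hl : 0 < l.1) : #((pts X Y α β l).image (cell X Y m)) ≤ #X / m + #Y / m + 1 := by
  apply chain_card
  · intro p hp
    obtain ⟨t, -, rfl⟩ := mem_image.1 hp
    exact ⟨blk_le _ _ _, blk_le _ _ _⟩
  · have key : ∀ t ∈ pts X Y α β l, ∀ u ∈ pts X Y α β l,
        (α * l.1) * (u.1 - t.1) = β * (t.2 - u.2) := by
      intro t ht u hu
      simp only [pts, mem_filter] at ht hu
      linarith [ht.2, hu.2]
    have hlt : ∀ x y : ℝ, blk X m x < blk X m y → x < y := by
      intro x y h
      by_contra! h'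
      exact absurd (blk_mono X m h') (by omega)
    have hab : α * β < 0 ∨ 0 < α * β := lt_or_gt_of_ne (mul_ne_zero hα hβ)
    have hb2 : 0 < β ^ 2 := by positivity
    rcases hab with hab | hab
    · left
      intro p hp q hq hpq
      obtain ⟨t, ht, rfl⟩ := mem_image.1 hp
      obtain ⟨u, hu, rfl⟩ := mem_image.1 hq
      apply blk_mono
      have h1 := hlt _ _ hpq
      have h2 := key t ht u hu
      have h3 : β ^ 2 * (t.2 - u.2) = (α * β) * (l.1 * (u.1 - t.1)) := by linear_combination -β * h2
      have h4 : 0 < l.1 * (u.1 - t.1) := mul_pos hl (by linarith)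
      by_contra! h5
      nlinarith [mul_pos hb2 (sub_pos.2 h5), mul_pos (neg_pos.2 hab) h4]
    · right
      intro p hp q hq hpq
      obtain ⟨t, ht, rfl⟩ := mem_image.1 hp
      obtain ⟨u, hu, rfl⟩ := mem_image.1 hq
      apply blk_mono
      have h1 := hlt _ _ hpq
      have h2 := key t ht u hu
      have h3 : β ^ 2 * (t.2 - u.2) = (α * β) * (l.1 * (u.1 - t.1)) := by linear_combination -β * h2
      have h4 : 0 < l.1 * (u.1 - t.1) := mul_pos hl (by linarith)
      by_contra! h5
      nlinarith [mul_pos hb2 (sub_pos.2 h5), mul_pos hab h4]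

lemma incid (X Y L : Finset ℝ) (Z : Finset ℝ) (hL : ∀ a ∈ L, 0 < a) (α β : ℝ) (hα : α ≠ 0)
    (hβ : β ≠ 0) (m : ℕ) (hm : 0 < m) :
    ∑ l ∈ L ×ˢ Z, #(pts X Y α β l) ≤ #L * #Z * (#X / m + #Y / m + 1) + #X * #Y * (m * m) := by
  classical
  have h1 : ∑ l ∈ L ×ˢ Z, #(pts X Y α β l) ≤
      ∑ l ∈ L ×ˢ Z, (#X / m + #Y / m + 1) + ∑ l ∈ L ×ˢ Z,
        #{p ∈ pts X Y α β l ×ˢ pts X Y α β l | p.1 ≠ p.2 ∧ cell X Y m p.1 = cell X Y m p.2} := by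
    rw [← sum_add_distrib]
    apply sum_le_sum
    intro l hl
    have := cells_card X Y α β hα hβ m l (hL _ (mem_product.1 hl).1)
    have := card_le_cells (pts X Y α β l) (cell X Y m)
    omega
  refine h1.trans (add_le_add ?_ ?_)
  · simp
  · rw [← card_biUnion]
    · calc _ ≤ #{p ∈ (X ×ˢ Y) ×ˢ (X ×ˢ Y) | cell X Y m p.2 = cell X Y m p.1} := by
            apply card_le_card
            intro p hp
            simp only [mem_biUnion, mem_filter, mem_product, pts] at hp ⊢
            obtain ⟨l, -, hp⟩ := hp
            tauto
        _ = ∑ p ∈ X ×ˢ Y, #{p' ∈ X ×ˢ Y | cell X Y m p' = cell X Y m p} := by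
            rw [card_filter, sum_product]
            simp only [card_filter]
        _ ≤ ∑ p ∈ X ×ˢ Y, m * m := by
            apply sum_le_sum
            intro p hp
            calc _ ≤ #({x ∈ X | blk X m x = blk X m p.1} ×ˢ {y ∈ Y | blk Y m y = blk Y m p.2}) := by
                  apply card_le_card
                  intro t ht
                  simp only [mem_filter, mem_product, cell, Prod.mk.injEq] at ht ⊢
                  tauto
              _ ≤ m * m := by
                  rw [card_product]
                  exact Nat.mul_le_mul (blk_fiber X m hm _) (blk_fiber Y m hm _)
        _ = _ := by simp
    · intro l hl l' hl' hne
      rw [Function.onFun, Finset.disjoint_left]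
      intro p hp hp'
      apply hne
      simp only [mem_filter, mem_product, pts] at hp hp'
      obtain ⟨⟨⟨-, h1⟩, -, h2⟩, h3, -⟩ := hp
      obtain ⟨⟨⟨-, h4⟩, -, h5⟩, -, -⟩ := hp'
      have hx : p.1.1 - p.2.1 ≠ 0 := by
        intro h0
        apply h3
        have hx : p.1.1 = p.2.1 := by linarith
        refine Prod.ext hx ?_
        rw [hx] at h1
        exact mul_left_cancel₀ hβ (by linarith)
      have ha : l.1 = l'.1 := by
        have : α * (p.1.1 - p.2.1) * (l.1 - l'.1) = 0 := by linear_combination h1 - h2 - h4 + h5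
        have := (mul_eq_zero.1 this).resolve_left (mul_ne_zero hα hx)
        linarith
      refine Prod.ext ha ?_
      rw [← h1, ← h4, ha]

lemma sigma_bound (A : Finset ℝ) (hA : ∀ a ∈ A, 0 < a) (hne : A.Nonempty) (α β : ℝ) (hα : α ≠ 0)
    (hβ : β ≠ 0) (m : ℕ) (hm : 0 < m) (hm3 : #A ≤ m ^ 3) :
    #{p ∈ A ×ˢ A | α * p.1 + β * p.2 ∈ A} ≤ 4 * m ^ 2 * #(A / A) := by
  have h1 := incid (A / A) A A A hA α β hα hβ m hm
  have hN : 0 < #A := hne.card_pos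
  have hQ : #A ≤ #(A / A) := by
    obtain ⟨a, ha⟩ := hne
    apply card_le_card_of_injOn (fun x => x / a)
    · intro x hx
      exact div_mem_div hx ha
    · intro x _ y _ hxy
      have := (hA a ha).ne'
      simpa [this] using hxy
  have h2 : #A * #{p ∈ A ×ˢ A | α * p.1 + β * p.2 ∈ A} ≤
      ∑ l ∈ A ×ˢ A, #(pts (A / A) A α β l) := by
    rw [← card_product, ← card_sigma]
    apply card_le_card_of_injOn
      (fun t => ⟨(t.1, α * t.2.1 + β * t.2.2), (t.2.1 / t.1, t.2.2)⟩)
    · intro t ht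
      simp only [coe_product, Set.mem_prod, mem_coe, mem_filter, mem_product] at ht
      obtain ⟨ha, ⟨hx, hy⟩, hz⟩ := ht
      simp only [mem_coe, mem_sigma, mem_product, pts, mem_filter]
      refine ⟨⟨ha, hz⟩, ⟨div_mem_div hx ha, hy⟩, ?_⟩
      have := (hA _ ha).ne'
      field_simp
    · intro t ht u hu htu
      simp only [coe_product, Set.mem_prod, mem_coe, mem_filter, mem_product] at ht hu
      have := (hA _ ht.1).ne'
      simp only [Sigma.mk.injEq, Prod.mk.injEq] at htu
      obtain ⟨⟨h1, -⟩, h2⟩ := htu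
      have h2 := eq_of_heq h2
      simp only [Prod.mk.injEq] at h2
      obtain ⟨h2, h3⟩ := h2
      rw [← h1] at h2
      have h4 : t.2.1 = u.2.1 := by
        field_simp at h2
        exact h2
      exact Prod.ext h1 (Prod.ext h4 h3)
  have h3 := h2.trans h1
  set D := #(A / A)
  set N := #A
  set s := #{p ∈ A ×ˢ A | α * p.1 + β * p.2 ∈ A}
  have h4 : s ≤ N * (D / m + N / m + 1) + D * (m * m) := by
    apply Nat.le_of_mul_le_mul_left _ hN
    calc N * s ≤ _ := h3
      _ = _ := by ring
  have h5 : N * (D / m) ≤ m ^ 2 * D := by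
    calc N * (D / m) ≤ m ^ 3 * (D / m) := Nat.mul_le_mul_right _ hm3
      _ = m ^ 2 * (m * (D / m)) := by ring
      _ ≤ m ^ 2 * D := Nat.mul_le_mul_left _ (Nat.mul_div_le _ _)
  have h6 : N * (N / m) ≤ N * (D / m) := Nat.mul_le_mul_left _ (Nat.div_le_div_right hQ)
  have h7 : D ≤ m ^ 2 * D := Nat.le_mul_of_pos_left _ (by positivity)
  nlinarith

lemma bonf {ι γ : Type*} [DecidableEq ι] [DecidableEq γ] (I : Finset ι) (E : ι → Finset γ) (n s : ℕ)
    (h1 : ∀ i ∈ I, #(E i) = n) (h2 : ∀ i ∈ I, ∀ j ∈ I, i ≠ j → #(E i ∩ E j) ≤ s) :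
    #I * n ≤ #(I.biUnion E) + #I ^ 2 * s := by
  induction I using Finset.induction_on with
  | empty => simp
  | insert a I ha ih =>
    have ih := ih (fun i hi => h1 i (mem_insert_of_mem hi))
      (fun i hi j hj => h2 i (mem_insert_of_mem hi) j (mem_insert_of_mem hj))
    rw [card_insert_of_notMem ha, biUnion_insert]
    have h3 := card_union_add_card_inter (E a) (I.biUnion E)
    have h4 : #(E a ∩ I.biUnion E) ≤ #I * s := by
      rw [inter_biUnion]
      apply card_biUnion_le_card_mul
      intro i hi
      apply h2 a (mem_insert_self _ _) i (mem_insert_of_mem hi)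
      rintro rfl
      exact ha hi
    rw [h1 a (mem_insert_self _ _)] at h3
    nlinarith

noncomputable def EE (A : Finset ℝ) (p q : ℕ → ℝ) (i j : ℕ) : Finset (ℝ × ℝ) :=
  (A ×ˢ A).image (fun t => (p i * t.1 + p j * t.2, q i * t.1 + q j * t.2))

lemma EE_comm (A : Finset ℝ) (p q : ℕ → ℝ) (i j : ℕ) : EE A p q i j = EE A p q j i := by
  ext z
  simp only [EE, mem_image, mem_product, Prod.exists]
  constructor <;>
  · rintro ⟨x, y, ⟨hx, hy⟩, rfl⟩
    exact ⟨y, x, ⟨hy, hx⟩, by simp [add_comm]⟩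

lemma EE_card (A : Finset ℝ) (p q : ℕ → ℝ) (i j : ℕ) (h : p i * q j - q i * p j ≠ 0) :
    #(EE A p q i j) = #A * #A := by
  rw [EE, card_image_of_injective, card_product]
  intro t u htu
  simp only [Prod.mk.injEq] at htu
  obtain ⟨h1, h2⟩ := htu
  refine Prod.ext ?_ ?_
  · apply mul_left_cancel₀ h
    linear_combination q j * h1 - p j * h2
  · apply mul_left_cancel₀ h
    linear_combination p i * h2 - q i * h1

lemma EE_inter (A : Finset ℝ) (p q : ℕ → ℝ) (i j i' j' s : ℕ)
    (h : p i * q j - q i * p j ≠ 0) (h1 : p i * q i' - q i * p i' ≠ 0)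
    (h2 : p i * q j' - q i * p j' ≠ 0)
    (hs : ∀ α β : ℝ, α ≠ 0 → β ≠ 0 → #{p ∈ A ×ˢ A | α * p.1 + β * p.2 ∈ A} ≤ s) :
    #(EE A p q i j ∩ EE A p q i' j') ≤ s := by
  refine le_trans ?_ (hs _ _ (div_ne_zero h1 h) (div_ne_zero h2 h))
  refine le_trans (card_le_card ?_) (card_image_le
    (f := fun t : ℝ × ℝ => (p i' * t.1 + p j' * t.2, q i' * t.1 + q j' * t.2)))
  intro z hz
  simp only [mem_inter, EE, mem_image, mem_product] at hz
  obtain ⟨⟨t, ⟨ht1, ht2⟩, rfl⟩, u, ⟨hu1, hu2⟩, htu⟩ := hz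
  rw [mem_image]
  refine ⟨u, ?_, htu⟩
  simp only [mem_filter, mem_product]
  refine ⟨⟨hu1, hu2⟩, ?_⟩
  convert ht2 using 1
  simp only [Prod.mk.injEq] at htu
  obtain ⟨e1, e2⟩ := htu
  field_simp
  linear_combination p i * e2 - q i * e1

lemma cluster (A : Finset ℝ) (hA : ∀ a ∈ A, 0 < a) (p q : ℕ → ℝ) (k M B s : ℕ)
    (hp : ∀ i < k, p i ∈ A) (hq : ∀ i < k, q i ∈ A)
    (hpq : ∀ i j, i < j → j < k → 0 < p i * q j - q i * p j)
    (hk : B * (2 * M) ≤ k)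
    (hs : 2 ≤ M → ∀ α β : ℝ, α ≠ 0 → β ≠ 0 → #{p ∈ A ×ˢ A | α * p.1 + β * p.2 ∈ A} ≤ s) :
    B * (M ^ 2 * #A ^ 2) ≤ #(A * A + A * A) ^ 2 + B * (M ^ 4 * s) := by
  classical
  have hne : ∀ i j, i ≠ j → i < k → j < k → p i * q j - q i * p j ≠ 0 := by
    intro i j hij hi hj
    rcases lt_or_gt_of_ne hij with h | h
    · exact (hpq i j h hj).ne'
    · have := hpq j i h hi
      intro h0
      linarith
  set E : ℕ → ℕ × ℕ → Finset (ℝ × ℝ) :=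
    fun b t => EE A p q (b * (2 * M) + t.1) (b * (2 * M) + M + t.2) with hE
  set U : ℕ → Finset (ℝ × ℝ) := fun b => (range M ×ˢ range M).biUnion (E b) with hU
  have hbk : ∀ b < B, b * (2 * M) + 2 * M ≤ k := by
    intro b hb
    calc b * (2 * M) + 2 * M = (b + 1) * (2 * M) := by ring
      _ ≤ B * (2 * M) := Nat.mul_le_mul_right _ hb
      _ ≤ k := hk
  have hUb : ∀ b ∈ range B, M ^ 2 * #A ^ 2 ≤ #(U b) + M ^ 4 * s := by
    intro b hb
    have hb := hbk b (mem_range.1 hb)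
    have := bonf (range M ×ˢ range M) (E b) (#A * #A) s ?_ ?_
    · simp only [card_product, card_range] at this
      calc _ = M * M * (#A * #A) := by ring
        _ ≤ _ := this
        _ = _ := by ring
    · intro t ht
      simp only [mem_product, mem_range] at ht
      apply EE_card
      apply hne <;> omega
    · intro t ht u hu htu
      simp only [mem_product, mem_range] at ht hu
      have hor : t.1 ≠ u.1 ∨ t.2 ≠ u.2 := by
        by_contra! h
        exact htu (Prod.ext h.1 h.2)
      have hM : 2 ≤ M := by omega
      rcases hor with h | h
      · apply EE_inter _ _ _ _ _ _ _ _ _ _ _ (hs hM) <;> apply hne <;> omega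
      · simp only [hE]
        rw [EE_comm A p q (b * (2 * M) + t.1)]
        apply EE_inter _ _ _ _ _ _ _ _ _ _ _ (hs hM) <;> apply hne <;> omega
  have hdis : ∀ b b', b < b' → b' < B → Disjoint (U b) (U b') := by
    intro b b' hbb hb'
    rw [Finset.disjoint_left]
    intro z hz hz'
    simp only [hU, hE, EE, mem_biUnion, mem_image, mem_product, mem_range] at hz hz'
    obtain ⟨⟨i, j⟩, ⟨hi, hj⟩, ⟨x, y⟩, ⟨hx, hy⟩, rfl⟩ := hz
    obtain ⟨⟨i', j'⟩, ⟨hi', hj'⟩, ⟨x', y'⟩, ⟨hx', hy'⟩, heq⟩ := hz'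
    simp only [Prod.mk.injEq] at *
    have hb1 := hbk b' hb'
    have hb2 : b * (2 * M) + 2 * M ≤ b' * (2 * M) := by
      calc b * (2 * M) + 2 * M = (b + 1) * (2 * M) := by ring
        _ ≤ b' * (2 * M) := Nat.mul_le_mul_right _ hbb
    obtain ⟨e1, e2⟩ := heq
    generalize hii : b * (2 * M) + i = ii at *
    generalize hjj : b * (2 * M) + M + j = jj at *
    generalize hii' : b' * (2 * M) + i' = ii' at *
    generalize hjj' : b' * (2 * M) + M + j' = jj' at *
    have c1 := hpq ii jj (by omega) (by omega)
    have c2 := hpq ii' jj' (by omega) (by omega)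
    have c3 := hpq jj ii' (by omega) (by omega)
    have px := hA x hx
    have py := hA y hy
    have py' := hA y' hy'
    have ppj := hA _ (hp jj (by omega))
    have ppi := hA _ (hp ii' (by omega))
    have ppii := hA _ (hp ii (by omega))
    have f1 := mul_pos px c1
    have f2 := mul_pos py' c2
    set X := p ii * x + p jj * y with hX
    set Y := q ii * x + q jj * y with hY
    have pX : 0 < X := by positivity
    have g1 : p jj * Y < q jj * X := by
      rw [hX, hY]; nlinarith
    have g2 : q ii' * X < p ii' * Y := by
      rw [← e1, ← e2]; nlinarith
    have g3 := mul_lt_mul_of_pos_left g1 ppi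
    have g4 := mul_lt_mul_of_pos_left g2 ppj
    have g5 := mul_pos pX c3
    nlinarith
  have hsub : (range B).biUnion U ⊆ (A * A + A * A) ×ˢ (A * A + A * A) := by
    intro z hz
    simp only [hU, hE, EE, mem_biUnion, mem_image, mem_product, mem_range] at hz
    obtain ⟨b, hb, ⟨i, j⟩, ⟨hi, hj⟩, ⟨x, y⟩, ⟨hx, hy⟩, rfl⟩ := hz
    have hb := hbk b hb
    simp only at *
    rw [mem_product]
    exact ⟨add_mem_add (mul_mem_mul (hp _ (by omega)) hx) (mul_mem_mul (hp _ (by omega)) hy),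
      add_mem_add (mul_mem_mul (hq _ (by omega)) hx) (mul_mem_mul (hq _ (by omega)) hy)⟩
  have hcard := card_le_card hsub
  rw [card_product, card_biUnion] at hcard
  · have := sum_le_sum hUb
    rw [sum_add_distrib] at this
    simp only [sum_const, card_range, smul_eq_mul] at this
    rw [pow_two #(A * A + A * A)]
    omega
  · intro b hb b' hb' hbb
    simp only [coe_range, Set.mem_Iio] at hb hb'
    rcases lt_or_gt_of_ne hbb with h | h
    · exact hdis b b' h hb'
    · exact (hdis b' b h hb).symm

lemma slopes (A : Finset ℝ) (hA : ∀ a ∈ A, 0 < a) : ∃ p q : ℕ → ℝ,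
    (∀ i < #(A / A), p i ∈ A) ∧ (∀ i < #(A / A), q i ∈ A) ∧
    (∀ i j, i < j → j < #(A / A) → 0 < p i * q j - q i * p j) := by
  set e := (A / A).orderEmbOfFin rfl with he
  have h : ∀ i : ℕ, ∃ p q : ℝ, ∀ hi : i < #(A / A), p ∈ A ∧ q ∈ A ∧ q / p = e ⟨i, hi⟩ := by
    intro i
    by_cases hi : i < #(A / A)
    · have := (A / A).orderEmbOfFin_mem rfl ⟨i, hi⟩
      obtain ⟨q, hq, p, hp, h⟩ := mem_div.1 this
      exact ⟨p, q, fun _ => ⟨hp, hq, h⟩⟩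
    · exact ⟨0, 0, fun h => absurd h hi⟩
  choose p q h using h
  refine ⟨p, q, fun i hi => (h i hi).1, fun i hi => (h i hi).2.1, fun i j hij hj => ?_⟩
  have hi := hij.trans hj
  have h1 : e ⟨i, hi⟩ < e ⟨j, hj⟩ := e.strictMono hij
  rw [← (h i hi).2.2, ← (h j hj).2.2, div_lt_div_iff₀ (hA _ (h i hi).1) (hA _ (h j hj).1)] at h1
  linarith

lemma numeric1 (N D m M T : ℝ) (hN : 0 < N) (hm : 0 < m) (hM : 0 < M) (hT : 0 ≤ T) (hND : N ≤ D)
    (hm3 : m ^ 3 ≤ 8 * N) (h1 : D * M * N ^ 2 ≤ 8 * T ^ 2)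
    (h2 : N ^ 2 ≤ 18 * (M ^ 2 * m ^ 2 * D)) : N ^ 19 ≤ 64 * 1152 ^ 3 * T ^ 12 := by
  have hD : 0 < D := hN.trans_le hND
  have h3 : (D * M * N ^ 2) ^ 2 ≤ (8 * T ^ 2) ^ 2 := by gcongr
  have h4 : N ^ 2 * (D * N ^ 4) ≤ 18 * (M ^ 2 * m ^ 2 * D) * (D * N ^ 4) := by gcongr
  have h5 : N ^ 7 ≤ 1152 * (m ^ 2 * T ^ 4) := by
    calc N ^ 7 = N ^ 6 * N := by ring
      _ ≤ N ^ 6 * D := by gcongr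
      _ = N ^ 2 * (D * N ^ 4) := by ring
      _ ≤ 18 * (M ^ 2 * m ^ 2 * D) * (D * N ^ 4) := h4
      _ = 18 * m ^ 2 * (D * M * N ^ 2) ^ 2 := by ring
      _ ≤ 18 * m ^ 2 * (8 * T ^ 2) ^ 2 := by gcongr
      _ = _ := by ring
  have h6 : N ^ 21 ≤ 1152 ^ 3 * T ^ 12 * (64 * N ^ 2) := by
    calc N ^ 21 = (N ^ 7) ^ 3 := by ring
      _ ≤ (1152 * (m ^ 2 * T ^ 4)) ^ 3 := by gcongr
      _ = 1152 ^ 3 * T ^ 12 * (m ^ 3) ^ 2 := by ring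
      _ ≤ 1152 ^ 3 * T ^ 12 * (8 * N) ^ 2 := by gcongr
      _ = _ := by ring
  have h7 : 0 < N ^ 2 := by positivity
  apply le_of_mul_le_mul_right _ h7
  calc N ^ 19 * N ^ 2 = N ^ 21 := by ring
    _ ≤ _ := h6
    _ = _ := by ring

lemma numeric2 (N D m T : ℝ) (hN : 1 ≤ N) (hm : 0 < m) (hT : 0 ≤ T)
    (hm3 : m ^ 3 ≤ 8 * N) (h1 : D * N ^ 2 ≤ 3 * T ^ 2)
    (h2 : N ^ 2 ≤ 32 * (m ^ 2 * D)) : N ^ 19 ≤ (96 ^ 3 * 64) ^ 2 * T ^ 12 := by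
  have h5 : N ^ 4 ≤ 96 * (m ^ 2 * T ^ 2) := by
    calc N ^ 4 = N ^ 2 * N ^ 2 := by ring
      _ ≤ 32 * (m ^ 2 * D) * N ^ 2 := by gcongr
      _ = 32 * m ^ 2 * (D * N ^ 2) := by ring
      _ ≤ 32 * m ^ 2 * (3 * T ^ 2) := by gcongr
      _ = _ := by ring
  have h6 : N ^ 12 ≤ 96 ^ 3 * T ^ 6 * (64 * N ^ 2) := by
    calc N ^ 12 = (N ^ 4) ^ 3 := by ring
      _ ≤ (96 * (m ^ 2 * T ^ 2)) ^ 3 := by gcongr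
      _ = 96 ^ 3 * T ^ 6 * (m ^ 3) ^ 2 := by ring
      _ ≤ 96 ^ 3 * T ^ 6 * (8 * N) ^ 2 := by gcongr
      _ = _ := by ring
  have h7 : 0 < N ^ 2 := by positivity
  have h8 : N ^ 10 ≤ 96 ^ 3 * 64 * T ^ 6 := by
    apply le_of_mul_le_mul_right _ h7
    calc N ^ 10 * N ^ 2 = N ^ 12 := by ring
      _ ≤ _ := h6
      _ = _ := by ring
  calc N ^ 19 ≤ N ^ 20 := pow_le_pow_right₀ hN (by norm_num)
    _ = (N ^ 10) ^ 2 := by ring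
    _ ≤ (96 ^ 3 * 64 * T ^ 6) ^ 2 := by gcongr
    _ = _ := by ring

lemma exists_m (N : ℕ) (hN : 1 ≤ N) : ∃ m : ℕ, 0 < m ∧ N ≤ m ^ 3 ∧ m ^ 3 ≤ 8 * N := by
  have hex : ∃ m : ℕ, N ≤ m ^ 3 := ⟨N, Nat.le_self_pow (by norm_num) N⟩
  classical
  have h1 := Nat.find_spec hex
  have h2 := fun k => Nat.find_min hex (m := k)
  set m := Nat.find hex
  have hm : 0 < m := by
    rcases Nat.eq_zero_or_pos m with h | h
    · rw [h] at h1; omega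
    · exact h
  refine ⟨m, hm, h1, ?_⟩
  obtain ⟨k, hk⟩ : ∃ k, m = k + 1 := ⟨m - 1, by omega⟩
  have h3 := h2 k (by omega)
  push Not at h3
  rw [hk]
  rcases Nat.eq_zero_or_pos k with h | h
  · subst h; omega
  · calc (k + 1) ^ 3 ≤ (2 * k) ^ 3 := Nat.pow_le_pow_left (by omega) 3
      _ = 8 * k ^ 3 := by ring
      _ ≤ 8 * N := by omega

lemma pos_case (A : Finset ℝ) (hA : ∀ a ∈ A, 0 < a) (hne : A.Nonempty) :
    (#A : ℝ) ^ 19 ≤ 10 ^ 16 * (#(A * A + A * A) : ℝ) ^ 12 := by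
  have hN : 1 ≤ #A := hne.card_pos
  have hT1 : 1 ≤ #(A * A + A * A) := ((hne.mul hne).add (hne.mul hne)).card_pos
  have hQ : #A ≤ #(A / A) := by
    obtain ⟨a, ha⟩ := hne
    apply card_le_card_of_injOn (fun x => x / a)
    · intro x hx
      exact div_mem_div hx ha
    · intro x _ y _ hxy
      have := (hA a ha).ne'
      simpa [this] using hxy
  obtain ⟨m, hm, hm1, hm2⟩ := exists_m #A hN
  obtain ⟨p, q, hp, hq, hpq⟩ := slopes A hA
  have hsig := fun α β hα hβ => sigma_bound A hA hne α β hα hβ m hm hm1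
  have hcl := fun M B s => cluster A hA p q _ M B s hp hq hpq
  clear hpq hp hq
  rcases hN.eq_or_lt with h1 | hN2
  · have : (1 : ℝ) ≤ (#(A * A + A * A) : ℝ) ^ 12 := one_le_pow₀ (by exact_mod_cast hT1)
    rw [← h1]
    norm_num
    linarith
  set D := #(A / A)
  set N := #A
  set T := #(A * A + A * A)
  set W := 8 * m ^ 2 * D with hW
  have hWpos : 0 < W := by have : 0 < D := by omega
                           positivity
  set M := Nat.sqrt (N ^ 2 / W) with hM
  have hMle : M ^ 2 * W ≤ N ^ 2 := by
    calc M ^ 2 * W ≤ (N ^ 2 / W) * W := Nat.mul_le_mul_right _ (Nat.sqrt_le' _)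
      _ ≤ N ^ 2 := Nat.div_mul_le_self _ _
  have hMlt : N ^ 2 < (M + 1) ^ 2 * W := by
    have : N ^ 2 / W < (M + 1) ^ 2 := Nat.lt_succ_sqrt' _
    exact (Nat.div_lt_iff_lt_mul hWpos).1 this
  by_cases h2 : 2 ≤ M
  · have hM2D : 2 * M ≤ D := by
      have : (2 * M) ^ 2 ≤ N ^ 2 := by
        calc (2 * M) ^ 2 = M ^ 2 * (4 * (1 * 1)) := by ring
          _ ≤ M ^ 2 * (8 * (m ^ 2 * D)) := by
            gcongr
            · norm_num
            · exact Nat.one_le_pow _ _ hm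
            · omega
          _ = M ^ 2 * W := by rw [hW]; ring
          _ ≤ _ := hMle
      exact ((Nat.pow_le_pow_iff_left (by norm_num)).1 this).trans hQ
    have h := hcl M (D / (2 * M)) (4 * m ^ 2 * D) (Nat.div_mul_le_self _ _) (fun _ => hsig)
    set B := D / (2 * M) with hB
    have hB1 : 1 ≤ B := (Nat.one_le_div_iff (by omega)).2 hM2D
    have hB2 : D < (B + 1) * (2 * M) := by
      rw [mul_comm]
      exact Nat.lt_mul_div_succ _ (by omega)
    have hB3 : D ≤ 4 * (B * M) := by nlinarith
    have h3 : B * (M ^ 2 * N ^ 2) ≤ 2 * T ^ 2 := by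
      have : 2 * (B * (M ^ 4 * (4 * m ^ 2 * D))) ≤ B * (M ^ 2 * N ^ 2) := by
        calc _ = B * (M ^ 2 * (M ^ 2 * W)) := by rw [hW]; ring
          _ ≤ _ := by gcongr
      omega
    have h4 : D * M * N ^ 2 ≤ 8 * T ^ 2 := by
      calc D * M * N ^ 2 ≤ 4 * (B * M) * M * N ^ 2 := by gcongr
        _ = 4 * (B * (M ^ 2 * N ^ 2)) := by ring
        _ ≤ _ := by omega
    have h5 : N ^ 2 ≤ 18 * (M ^ 2 * m ^ 2 * D) := by
      have : 4 * (M + 1) ^ 2 ≤ 9 * M ^ 2 := by nlinarith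
      have : 4 * (M + 1) ^ 2 * W ≤ 9 * M ^ 2 * W := Nat.mul_le_mul_right _ this
      have e : 9 * M ^ 2 * W = 4 * (18 * (M ^ 2 * m ^ 2 * D)) := by rw [hW]; ring
      have e2 : 4 * (M + 1) ^ 2 * W = 4 * ((M + 1) ^ 2 * W) := by ring
      omega
    have := numeric1 N D m M T (by positivity) (by positivity) (by positivity) (by positivity)
      (by exact_mod_cast hQ) (by exact_mod_cast hm2) (by exact_mod_cast h4) (by exact_mod_cast h5)
    refine this.trans ?_
    gcongr
    norm_num
  · have h := hcl 1 (D / 2) 0 (by omega) (by omega)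
    have h3 : D * N ^ 2 ≤ 3 * T ^ 2 := by
      have : D ≤ 3 * (D / 2) := by omega
      calc D * N ^ 2 ≤ 3 * (D / 2) * N ^ 2 := by gcongr
        _ = 3 * (D / 2 * (1 ^ 2 * N ^ 2)) := by ring
        _ ≤ _ := by omega
    have h5 : N ^ 2 ≤ 32 * (m ^ 2 * D) := by
      have : (M + 1) ^ 2 ≤ 2 ^ 2 := Nat.pow_le_pow_left (by omega) 2
      have : (M + 1) ^ 2 * W ≤ 2 ^ 2 * W := Nat.mul_le_mul_right _ this
      have e : 2 ^ 2 * W = 32 * (m ^ 2 * D) := by rw [hW]; ring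
      omega
    have := numeric2 N D m T (by exact_mod_cast hN) (by positivity) (by positivity)
      (by exact_mod_cast hm2) (by exact_mod_cast h3) (by exact_mod_cast h5)
    refine this.trans ?_
    gcongr
    norm_num

lemma gen_case (A : Finset ℝ) (h0 : (0 : ℝ) ∉ A) (hA : 2 ≤ #A) :
    (#A : ℝ) ^ 19 ≤ 2 ^ 19 * 10 ^ 16 * (#(A * A + A * A) : ℝ) ^ 12 := by
  classical
  have key : ∃ P : Finset ℝ, (∀ a ∈ P, 0 < a) ∧ #A ≤ 2 * #P ∧ P * P ⊆ A * A := by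
    have hsum := card_filter_add_card_filter_not (s := A) (fun x => 0 < x)
    by_cases h : #A ≤ 2 * #{x ∈ A | 0 < x}
    · exact ⟨_, by simp, h, mul_subset_mul (filter_subset _ _) (filter_subset _ _)⟩
    · refine ⟨({x ∈ A | ¬ 0 < x}).image (fun x => -x), ?_, ?_, ?_⟩
      · intro a ha
        simp only [mem_image, mem_filter, not_lt] at ha
        obtain ⟨x, ⟨hx, hx0⟩, rfl⟩ := ha
        have : x ≠ 0 := by rintro rfl; exact h0 hx
        have := lt_of_le_of_ne hx0 this
        linarith
      · rw [card_image_of_injective _ neg_injective]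
        omega
      · intro z hz
        obtain ⟨a, ha, b, hb, rfl⟩ := mem_mul.1 hz
        simp only [mem_image, mem_filter, not_lt] at ha hb
        obtain ⟨x, ⟨hx, -⟩, rfl⟩ := ha
        obtain ⟨y, ⟨hy, -⟩, rfl⟩ := hb
        rw [neg_mul_neg]
        exact mul_mem_mul hx hy
  obtain ⟨P, hP, hc, hsub⟩ := key
  have hne : P.Nonempty := card_pos.1 (by omega)
  have h1 := pos_case P hP hne
  have h2 : #(P * P + P * P) ≤ #(A * A + A * A) := card_le_card (add_subset_add hsub hsub)
  calc (#A : ℝ) ^ 19 ≤ (2 * #P) ^ 19 := by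
        gcongr
        exact_mod_cast hc
    _ = 2 ^ 19 * (#P : ℝ) ^ 19 := by ring
    _ ≤ 2 ^ 19 * (10 ^ 16 * (#(P * P + P * P) : ℝ) ^ 12) := by gcongr
    _ ≤ 2 ^ 19 * (10 ^ 16 * (#(A * A + A * A) : ℝ) ^ 12) := by gcongr
    _ = _ := by ring

end AAsum

theorem stmt_2 :
    ∃ c : ℝ, 0 < c ∧
      ∀ A : Finset ℝ, (0 : ℝ) ∉ A → 2 ≤ A.card →
        c * (A.card : ℝ) ^ ((19 : ℝ) / 12) ≤ ((A * A + A * A).card : ℝ) := by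
  refine ⟨1 / 1000, by norm_num, fun A h0 hA => ?_⟩
  have h := AAsum.gen_case A h0 hA
  have hp : ((A.card : ℝ) ^ ((19 : ℝ) / 12)) ^ 12 = (A.card : ℝ) ^ 19 := by
    rw [← Real.rpow_natCast, ← Real.rpow_mul (by positivity), ← Real.rpow_natCast]
    norm_num
  refine le_of_pow_le_pow_left₀ (n := 12) (by norm_num) (by positivity) ?_
  rw [mul_pow, hp]
  have : (2 : ℝ) ^ 19 * 10 ^ 16 ≤ 1000 ^ 12 := by norm_num
  have hT : (0 : ℝ) ≤ ((A * A + A * A).card : ℝ) ^ 12 := by positivity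
  calc _ ≤ (1 / 1000 : ℝ) ^ 12 * (2 ^ 19 * 10 ^ 16 * ((A * A + A * A).card : ℝ) ^ 12) := by gcongr
    _ = ((1 / 1000 : ℝ) ^ 12 * (2 ^ 19 * 10 ^ 16)) * ((A * A + A * A).card : ℝ) ^ 12 := by ring
    _ ≤ 1 * ((A * A + A * A).card : ℝ) ^ 12 := by
        gcongr
        norm_num
    _ = _ := one_mul _
end
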